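/- arXiv:1410.1579 — 2 statements merged into one kernel-verified Lean document; each statement's English description precedes it below -/
import Mathlib

section
/- Let S be a set of n ≥ 3 points in ℝ² with no three points collinear, let T be a triangulation of S, and let an arbitrary orientation of the edges of T be given. Then the oriented graph contains at least 3n − 5 directed simple paths. -/
open scoped BigOperators

noncomputable section

/-- Points of the plane. -/
abbrev Pt : Type := ℝ × ℝ

/-- Dot product on the plane. -/
def dotp (a b : Pt) : ℝ := a.1 * b.1 + a.2 * b.2

/-- The geometric conditions making `(V, E)` a plane straight-line graph:
every edge joins two distinct points of `V`, no point of `V` lies in the open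
segment of an edge, and the open segments of two distinct edges are disjoint. -/
def ValidEdges (V : Finset Pt) (E : Finset (Sym2 Pt)) : Prop :=
  (∀ a b : Pt, s(a, b) ∈ E → a ∈ V ∧ b ∈ V ∧ a ≠ b) ∧
  (∀ a b : Pt, s(a, b) ∈ E → ∀ v ∈ V, v ∉ openSegment ℝ a b) ∧
  (∀ a b c d : Pt, s(a, b) ∈ E → s(c, d) ∈ E → s(a, b) ≠ s(c, d) →
    openSegment ℝ a b ∩ openSegment ℝ c d = ∅)

/-- A plane straight-line graph. -/
structure PSLG where
  V : Finset Pt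
  E : Finset (Sym2 Pt)
  valid : ValidEdges V E

/-- A path in `G`: a sequence of at least two vertices, consecutive ones joined by edges. -/
def IsPathIn (G : PSLG) (L : List Pt) : Prop :=
  2 ≤ L.length ∧ L.Chain' (fun a b => s(a, b) ∈ G.E)

/-- An x-monotone path: x-coordinates strictly increasing along the path. -/
def IsXMonotonePath (G : PSLG) (L : List Pt) : Prop :=
  IsPathIn G L ∧ L.Chain' (fun a b => a.1 < b.1)

/-- Monotonicity of a vertex sequence in direction `u`. -/
def MonotoneInDir (u : Pt) (L : List Pt) : Prop :=
  L.Chain' (fun a b => 0 < dotp (b - a) u)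

/-- A monotone path: monotone in some direction `u ≠ 0`. -/
def IsMonotonePath (G : PSLG) (L : List Pt) : Prop :=
  IsPathIn G L ∧ ∃ u : Pt, u ≠ 0 ∧ MonotoneInDir u L

/-- The number of x-monotone paths in `G`. -/
def xMonCount (G : PSLG) : ℕ := Set.ncard {L : List Pt | IsXMonotonePath G L}

/-- The number of monotone paths in `G`, a path and its reversal counted once. -/
def monPathCount (G : PSLG) : ℕ :=
  Set.ncard {P : Set (List Pt) | ∃ L, IsMonotonePath G L ∧ P = {L, L.reverse}}

/-- Consecutive pairs along a cycle (including the wrap-around pair). -/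
def cyclePairs (L : List Pt) : List (Pt × Pt) := L.zip (L.rotate 1)

/-- A cycle in `G`: at least 3 pairwise distinct vertices, cyclically joined by edges. -/
def IsCycleIn (G : PSLG) (L : List Pt) : Prop :=
  3 ≤ L.length ∧ L.Nodup ∧ ∀ p ∈ cyclePairs L, s(p.1, p.2) ∈ G.E

/-- The union of the closed edge segments of a cycle. -/
def cycleBody (L : List Pt) : Set Pt := ⋃ p ∈ cyclePairs L, segment ℝ p.1 p.2

/-- A star-shaped polygon in `G`: a cycle for which some point `o` sees the boundary
in exactly one point along every ray emanating from `o`. -/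
def IsStarShapedPolygon (G : PSLG) (L : List Pt) : Prop :=
  IsCycleIn G L ∧ ∃ o : Pt, ∀ d : Pt, d ≠ 0 →
    ∃! p : Pt, p ∈ cycleBody L ∧ ∃ t : ℝ, 0 ≤ t ∧ p = o + t • d

/-- The edge set of a cycle, used to count polygons. -/
def cycleEdgeSet (L : List Pt) : Finset (Sym2 Pt) :=
  ((cyclePairs L).map (fun p => s(p.1, p.2))).toFinset

/-- The number of star-shaped polygons in `G`, counted by edge sets. -/
def starCount (G : PSLG) : ℕ :=
  Set.ncard {E' : Finset (Sym2 Pt) | ∃ L, IsStarShapedPolygon G L ∧ E' = cycleEdgeSet L}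

/-- Cross product (signed area). -/
def crossp (a b : Pt) : ℝ := a.1 * b.2 - a.2 * b.1

/-- A convex polygon in `G`: a cycle whose vertices are in strictly convex position and
appear along the cycle in their convex-hull cyclic order; equivalently, for every directed
edge of the cycle all other vertices lie strictly on the same (left or right) side. -/
def IsConvexPolygon (G : PSLG) (L : List Pt) : Prop :=
  IsCycleIn G L ∧
  ((∀ p ∈ cyclePairs L, ∀ v ∈ L, v ≠ p.1 → v ≠ p.2 → 0 < crossp (p.2 - p.1) (v - p.1)) ∨
   (∀ p ∈ cyclePairs L, ∀ v ∈ L, v ≠ p.1 → v ≠ p.2 → crossp (p.2 - p.1) (v - p.1) < 0))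

/-- The number of convex polygons in `G`, counted by edge sets. -/
def convexCount (G : PSLG) : ℕ :=
  Set.ncard {E' : Finset (Sym2 Pt) | ∃ L, IsConvexPolygon G L ∧ E' = cycleEdgeSet L}

/-- A triangulation: an edge-maximal plane straight-line graph. -/
def PSLG.IsTriangulation (G : PSLG) : Prop :=
  ∀ a ∈ G.V, ∀ b ∈ G.V, a ≠ b → s(a, b) ∉ G.E → ¬ ValidEdges G.V (insert s(a, b) G.E)

/-- An orientation of a PSLG: each edge `{a, b}` receives exactly one of the ordered
pairs `(a, b)`, `(b, a)`. -/
def IsOrientation (G : PSLG) (D : Finset (Pt × Pt)) : Prop :=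
  (∀ p ∈ D, s(p.1, p.2) ∈ G.E) ∧
  ∀ a b : Pt, s(a, b) ∈ G.E →
    (((a, b) ∈ D ∧ (b, a) ∉ D) ∨ ((b, a) ∈ D ∧ (a, b) ∉ D))

/-- A directed simple path in a directed graph on points. -/
def IsDirPath (D : Finset (Pt × Pt)) (L : List Pt) : Prop :=
  2 ≤ L.length ∧ L.Nodup ∧ L.Chain' (fun a b => (a, b) ∈ D)

/-- The number of directed simple paths. -/
def dirPathCount (D : Finset (Pt × Pt)) : ℕ := Set.ncard {L : List Pt | IsDirPath D L}

/-- No three of the points of `S` are collinear. -/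
def NoThreeCollinear (S : Finset Pt) : Prop :=
  ∀ p ∈ S, ∀ q ∈ S, ∀ r ∈ S, p ≠ q → p ≠ r → q ≠ r → ¬ Collinear ℝ ({p, q, r} : Set Pt)

/-- A maximal monotone path: not a proper subpath (up to reversal) of another
monotone path of `G`. -/
def IsMaximalMonotonePath (G : PSLG) (L : List Pt) : Prop :=
  IsMonotonePath G L ∧ ∀ M : List Pt, IsMonotonePath G M →
    (L <:+: M ∨ L.reverse <:+: M) → (L = M ∨ L.reverse = M)

/-!
By Rédei's theorem every clique of size two or three carries a directed path through its vertices,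
so it suffices to find `3n - 5` edges and triangles. Choose a linear coordinate `x` that is
injective on the vertices. Each of the `n - 2` vertices `v` that are not extreme in `x` turns out to
be the middle vertex of a triangle with respect to `x`. These triangles are distinct, and their
existence forces `(n - 1) + (n - 2)` edges.

To find the triangle at `v`, reflect the plane such that `v` lies below the line through some vertex
to its left and some vertex to its right. Among the vertices not hidden from `v` by the first edge
above it, let `w'` to the left and `w` to the right be those seen from `v` at the steepest upward
angle. No vertex and no edge then obstructs the segments `vw`, `vw'` and `w'w`, so they are edges by
maximality.
-/

section TriangleMedian

variable {α β : Type*} [LinearOrder β] {Γ : SimpleGraph α} {f : α → β} {V : Finset α}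

/-- The vertex `v` lies between the two other vertices of some triangle of `Γ`, where vertices are
ordered by their `f`-values. -/
def IsTriangleMedian (Γ : SimpleGraph α) (f : α → β) (v : α) : Prop :=
  ∃ a b, Γ.Adj a v ∧ Γ.Adj v b ∧ Γ.Adj a b ∧ f a < f v ∧ f v < f b

open Classical in
lemma card_le_card_isTriangleMedian_add_two (hf : Set.InjOn f V)
    (hmed : ∀ a ∈ V, ∀ v ∈ V, ∀ b ∈ V, f a < f v → f v < f b → IsTriangleMedian Γ f v) :
    V.card ≤ (V.filter (IsTriangleMedian Γ f)).card + 2 := by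
  rcases V.eq_empty_or_nonempty with rfl | hV
  · simp
  obtain ⟨m, hm, hmin⟩ := V.exists_min_image f hV
  obtain ⟨M, hM, hmax⟩ := V.exists_max_image f hV
  have hsub : V ⊆ V.filter (IsTriangleMedian Γ f) ∪ {m, M} := by
    intro v hv
    by_cases hvm : v = m
    · simp [hvm]
    by_cases hvM : v = M
    · simp [hvM]
    have hlt : f m < f v := (hmin v hv).lt_of_ne fun h => hvm (hf hv hm h.symm)
    have hgt : f v < f M := (hmax v hv).lt_of_ne fun h => hvM (hf hv hM h)
    simp [hv, hmed m hm v hv M hM hlt hgt]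
  calc V.card ≤ _ := Finset.card_le_card hsub
    _ ≤ _ + _ := Finset.card_union_le _ _
    _ ≤ _ := by gcongr; exact Finset.card_le_two

lemma eq_of_triple_eq [DecidableEq α] {a v b a' v' b' : α} (hav : f a < f v) (hvb : f v < f b)
    (hav' : f a' < f v') (hvb' : f v' < f b') (h : ({a, v, b} : Finset α) = {a', v', b'}) :
    v = v' := by
  have ha : a ∈ ({a', v', b'} : Finset α) := h ▸ by simp
  have hv : v ∈ ({a', v', b'} : Finset α) := h ▸ by simp
  have hb : b ∈ ({a', v', b'} : Finset α) := h ▸ by simp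
  simp only [Finset.mem_insert, Finset.mem_singleton] at ha hv hb
  rcases hv with rfl | rfl | rfl
  · rcases ha with rfl | rfl | rfl <;> grind
  · rfl
  · rcases hb with rfl | rfl | rfl <;> grind

lemma finite_cliqueSet (hV : Γ.support ⊆ V) {n : ℕ} (hn : 2 ≤ n) : (Γ.cliqueSet n).Finite := by
  refine V.powerset.finite_toSet.subset fun s hs => Finset.mem_powerset.2 fun v hv => ?_
  obtain ⟨u, hu, huv⟩ := Finset.exists_mem_ne (hs.card_eq ▸ hn : 1 < s.card) v
  exact hV ⟨u, hs.isClique hv hu huv.symm⟩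

open Classical in
lemma card_isTriangleMedian_le_ncard_cliqueSet (hV : Γ.support ⊆ V) :
    (V.filter (IsTriangleMedian Γ f)).card ≤ (Γ.cliqueSet 3).ncard := by
  have hmed : ∀ v ∈ V.filter (IsTriangleMedian Γ f), IsTriangleMedian Γ f v :=
    fun v hv => (Finset.mem_filter.1 hv).2
  choose! a b hav hvb hab hlt hgt using hmed
  rw [← Set.ncard_coe_finset]
  refine Set.ncard_le_ncard_of_injOn (fun v => {a v, v, b v})
    (fun v hv => SimpleGraph.is3Clique_triple_iff.2 ⟨hav v hv, hab v hv, hvb v hv⟩)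
    (fun v hv w hw h => ?_) (finite_cliqueSet hV (by norm_num))
  exact eq_of_triple_eq (hlt v hv) (hgt v hv) (hlt w hw) (hgt w hw) h

lemma exists_adj_lt_of_isTriangleMedian (hf : Set.InjOn f V) (hV : Γ.support ⊆ V)
    (hcard : 3 ≤ V.card)
    (hmed : ∀ a ∈ V, ∀ v ∈ V, ∀ b ∈ V, f a < f v → f v < f b → IsTriangleMedian Γ f v)
    {v u : α} (hv : v ∈ V) (hu : u ∈ V) (hvu : f v < f u) : ∃ b, Γ.Adj v b ∧ f v < f b := by
  classical
  by_cases hmin : ∃ a ∈ V, f a < f v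
  · obtain ⟨a, ha, hav⟩ := hmin
    obtain ⟨-, b, -, hvb, -, -, hlt⟩ := hmed a ha v hv u hu hav hvu
    exact ⟨b, hvb, hlt⟩
  push Not at hmin
  obtain ⟨w, hw, hwmin⟩ :=
    (V.filter (f v < f ·)).exists_min_image f ⟨u, Finset.mem_filter.2 ⟨hu, hvu⟩⟩
  obtain ⟨hwV, hvw⟩ := Finset.mem_filter.1 hw
  obtain ⟨b, hb, hwb⟩ : ∃ b ∈ V, f w < f b := by
    obtain ⟨b, hb⟩ : (V \ {v, w}).Nonempty := by
      rw [← Finset.card_pos]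
      have := Finset.le_card_sdiff {v, w} V
      have := Finset.card_le_two (a := v) (b := w)
      omega
    simp only [Finset.mem_sdiff, Finset.mem_insert, Finset.mem_singleton, not_or] at hb
    have hvb : f v < f b := (hmin b hb.1).lt_of_ne fun h => hb.2.1 (hf hb.1 hv h.symm)
    exact ⟨b, hb.1, (hwmin b (Finset.mem_filter.2 ⟨hb.1, hvb⟩)).lt_of_ne
      fun h => hb.2.2 (hf hb.1 hwV h.symm)⟩
  obtain ⟨a, -, haw, -, -, halt, -⟩ := hmed v hv w hwV b hb hvw hwb
  have ha : a ∈ V := hV ⟨_, haw⟩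
  have hav : a = v := by
    refine hf ha hv ((hmin a ha).antisymm' (le_of_not_gt fun hva => ?_))
    exact halt.not_ge (hwmin a (Finset.mem_filter.2 ⟨ha, hva⟩))
  exact ⟨w, hav ▸ haw, hvw⟩

open Classical in
/-- The edges of `Γ` with endpoints in `V`, each listed once, as a pair with increasing
`f`-values. -/
def increasingEdges (Γ : SimpleGraph α) (f : α → β) (V : Finset α) : Finset (α × α) :=
  (V ×ˢ V).filter fun e => Γ.Adj e.1 e.2 ∧ f e.1 < f e.2

lemma mem_increasingEdges (hV : Γ.support ⊆ V) {e : α × α} :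
    e ∈ increasingEdges Γ f V ↔ Γ.Adj e.1 e.2 ∧ f e.1 < f e.2 := by
  simp only [increasingEdges, Finset.mem_filter, Finset.mem_product, and_iff_right_iff_imp]
  exact fun h => ⟨hV ⟨_, h.1⟩, hV ⟨_, h.1.symm⟩⟩

lemma card_increasingEdges_le_ncard_cliqueSet (hV : Γ.support ⊆ V) :
    (increasingEdges Γ f V).card ≤ (Γ.cliqueSet 2).ncard := by
  classical
  rw [← Set.ncard_coe_finset]
  refine Set.ncard_le_ncard_of_injOn (fun e => {e.1, e.2})
    (fun e he => ?_) (fun e he e' he' h => ?_) (finite_cliqueSet hV le_rfl)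
  · have hadj := ((mem_increasingEdges hV).1 he).1
    exact ⟨by simp [SimpleGraph.isClique_insert, hadj], Finset.card_pair hadj.ne⟩
  have hlt := ((mem_increasingEdges hV).1 he).2
  have hlt' := ((mem_increasingEdges hV).1 he').2
  have hpair : ({e.1, e.2} : Set α) = {e'.1, e'.2} := by simpa using congrArg SetLike.coe h
  rcases Set.pair_eq_pair_iff.1 hpair with ⟨h₁, h₂⟩ | ⟨h₁, h₂⟩
  · exact Prod.ext h₁ h₂
  · exact absurd hlt' (h₁ ▸ h₂ ▸ hlt.not_gt)

open Classical in
lemma card_add_card_isTriangleMedian_le_ncard_cliqueSet (hf : Set.InjOn f V) (hV : Γ.support ⊆ V)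
    (hcard : 3 ≤ V.card)
    (hmed : ∀ a ∈ V, ∀ v ∈ V, ∀ b ∈ V, f a < f v → f v < f b → IsTriangleMedian Γ f v) :
    V.card + (V.filter (IsTriangleMedian Γ f)).card ≤ (Γ.cliqueSet 2).ncard + 1 := by
  -- Every vertex but the maximal one starts a last edge, and for every triangle `a, v, b` the edge
  -- from `a` to its median `v` is not last, because of the edge from `a` to `b`.
  let E := increasingEdges Γ f V
  let IsLast : α × α → Prop := fun e => ∀ e' ∈ E, e'.1 = e.1 → f e'.2 ≤ f e.2
  obtain ⟨M, hM, hmax⟩ := V.exists_max_image f (Finset.card_pos.1 (by omega))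
  have hlast : (V.erase M).card ≤ (E.filter IsLast).card := by
    refine (Finset.card_le_card fun v hv => ?_).trans (Finset.card_image_le (f := Prod.fst))
    obtain ⟨hvM, hv⟩ := Finset.mem_erase.1 hv
    obtain ⟨b, hvb, hlt⟩ := exists_adj_lt_of_isTriangleMedian hf hV hcard hmed hv hM
      ((hmax v hv).lt_of_ne fun h => hvM (hf hv hM h))
    obtain ⟨e, he, hmaxe⟩ := (E.filter (·.1 = v)).exists_max_image (fun e => f e.2)
      ⟨(v, b), Finset.mem_filter.2 ⟨(mem_increasingEdges hV).2 ⟨hvb, hlt⟩, rfl⟩⟩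
    obtain ⟨heE, rfl⟩ := Finset.mem_filter.1 he
    exact Finset.mem_image.2 ⟨e, Finset.mem_filter.2 ⟨heE, fun e' he' h =>
      hmaxe e' (Finset.mem_filter.2 ⟨he', h⟩)⟩, rfl⟩
  have hnotLast : (V.filter (IsTriangleMedian Γ f)).card ≤ (E.filter (¬ IsLast ·)).card := by
    refine (Finset.card_le_card fun v hv => ?_).trans (Finset.card_image_le (f := Prod.snd))
    obtain ⟨a, b, hav, -, hab, hlt, hgt⟩ := (Finset.mem_filter.1 hv).2
    refine Finset.mem_image.2 ⟨(a, v), Finset.mem_filter.2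
      ⟨(mem_increasingEdges hV).2 ⟨hav, hlt⟩, fun h => hgt.not_ge ?_⟩, rfl⟩
    exact h (a, b) ((mem_increasingEdges hV).2 ⟨hab, hlt.trans hgt⟩) rfl
  have hsplit := E.card_filter_add_card_filter_not IsLast
  have hE : E.card ≤ _ := card_increasingEdges_le_ncard_cliqueSet hV
  rw [Finset.card_erase_of_mem hM] at hlast
  omega

theorem three_mul_card_sub_five_le_ncard_cliqueSet_add_ncard_cliqueSet (hf : Set.InjOn f V)
    (hV : Γ.support ⊆ V) (hcard : 3 ≤ V.card)
    (hmed : ∀ a ∈ V, ∀ v ∈ V, ∀ b ∈ V, f a < f v → f v < f b → IsTriangleMedian Γ f v) :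
    3 * V.card - 5 ≤ (Γ.cliqueSet 2).ncard + (Γ.cliqueSet 3).ncard := by
  classical
  have hmedians := card_le_card_isTriangleMedian_add_two hf hmed
  have hedges := card_add_card_isTriangleMedian_le_ncard_cliqueSet hf hV hcard hmed
  have htriangles := card_isTriangleMedian_le_ncard_cliqueSet (f := f) hV
  omega

end TriangleMedian

section DirectedPaths

lemma exists_perm_cons_isChain {α : Type*} {R : α → α → Prop} {a v : α} {L : List α}
    (hL : (a :: L).IsChain R) (hav : R a v) (h : ∀ b ∈ L, R v b ∨ R b v) :
    ∃ L', L'.Perm (v :: L) ∧ (a :: L').IsChain R := by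
  induction L generalizing a with
  | nil => exact ⟨[v], .refl _, by simpa using hav⟩
  | cons b L ih =>
    rw [List.isChain_cons_cons] at hL
    rcases h b List.mem_cons_self with hvb | hbv
    · exact ⟨v :: b :: L, .refl _, by simp [hav, hvb, hL.2]⟩
    · obtain ⟨L', hperm, hchain⟩ := ih hL.2 hbv fun c hc => h c (List.mem_cons_of_mem _ hc)
      exact ⟨b :: L', (hperm.cons b).trans (.swap v b L), List.isChain_cons_cons.2 ⟨hL.1, hchain⟩⟩

/-- Rédei's theorem. -/
theorem exists_isChain_toFinset_eq {α : Type*} [DecidableEq α] {R : α → α → Prop} (s : Finset α)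
    (h : (s : Set α).Pairwise fun a b => R a b ∨ R b a) :
    ∃ L : List α, L.Nodup ∧ L.toFinset = s ∧ L.IsChain R := by
  induction s using Finset.induction_on with
  | empty => exact ⟨[], by simp⟩
  | insert v s hv ih =>
    obtain ⟨L, hnodup, rfl, hchain⟩ := ih (h.mono (by simp))
    have hvL : ∀ b ∈ L, R v b ∨ R b v := fun b hb =>
      h (by simp) (by simp [hb]) (by rintro rfl; simp [hb] at hv)
    suffices ∃ L' : List α, L'.Perm (v :: L) ∧ L'.IsChain R by
      obtain ⟨L', hperm, hchain'⟩ := this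
      exact ⟨L', hperm.nodup_iff.2 (by simpa [hnodup] using hv),
        (List.toFinset_eq_of_perm _ _ hperm).trans (List.toFinset_cons ..), hchain'⟩
    cases L with
    | nil => exact ⟨[v], .refl _, by simp⟩
    | cons a L =>
      rcases hvL a List.mem_cons_self with hva | hav
      · exact ⟨v :: a :: L, .refl _, List.isChain_cons_cons.2 ⟨hva, hchain⟩⟩
      · obtain ⟨L', hperm, hchain'⟩ := exists_perm_cons_isChain hchain hav
          fun b hb => hvL b (List.mem_cons_of_mem _ hb)
        exact ⟨a :: L', (hperm.cons a).trans (.swap v a L), hchain'⟩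

variable {D : Finset (Pt × Pt)}

lemma IsDirPath.toFinset_subset {L : List Pt} (hL : IsDirPath D L) [DecidableEq Pt] :
    L.toFinset ⊆ D.image Prod.fst ∪ D.image Prod.snd := by
  obtain ⟨hlen, -, hchain⟩ := hL
  have hstep := List.isChain_iff_getElem.1 hchain
  intro p hp
  obtain ⟨i, hi, rfl⟩ := List.getElem_of_mem (List.mem_toFinset.1 hp)
  rcases i with - | i
  · exact Finset.mem_union_left _ (Finset.mem_image.2 ⟨_, hstep 0 (by omega), rfl⟩)
  · exact Finset.mem_union_right _ (Finset.mem_image.2 ⟨_, hstep i hi, rfl⟩)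

lemma finite_setOf_isDirPath (D : Finset (Pt × Pt)) : {L : List Pt | IsDirPath D L}.Finite := by
  classical
  let V := D.image Prod.fst ∪ D.image Prod.snd
  refine (Set.finite_range fun l : {l : List V // l.Nodup} => l.1.map Subtype.val).subset
    fun L hL => ?_
  have hmem : ∀ p ∈ L, p ∈ V := fun p hp => hL.toFinset_subset (List.mem_toFinset.2 hp)
  have hval : (L.attachWith _ hmem).map Subtype.val = L := List.attachWith_map_subtype_val hmem
  exact ⟨⟨_, .of_map Subtype.val (hval.symm ▸ hL.2.1)⟩, hval⟩

lemma ncard_cliqueSet_add_ncard_cliqueSet_le_dirPathCount {Γ : SimpleGraph Pt}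
    (hD : ∀ a b, Γ.Adj a b → (a, b) ∈ D ∨ (b, a) ∈ D) :
    (Γ.cliqueSet 2).ncard + (Γ.cliqueSet 3).ncard ≤ dirPathCount D := by
  classical
  have hsub : Γ.cliqueSet 2 ∪ Γ.cliqueSet 3 ⊆ List.toFinset '' {L | IsDirPath D L} := by
    intro s hs
    have hclique : Γ.IsClique s := hs.elim (·.isClique) (·.isClique)
    have hcard : 2 ≤ s.card := hs.elim (·.card_eq.ge) (by simp [·.card_eq])
    obtain ⟨L, hnodup, rfl, hchain⟩ :=
      exists_isChain_toFinset_eq s (hclique.mono' fun a b => hD a b)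
    exact ⟨L, ⟨List.toFinset_card_of_nodup hnodup ▸ hcard, hnodup, hchain⟩, rfl⟩
  have hfin := (finite_setOf_isDirPath D).image List.toFinset
  have hdisj : Disjoint (Γ.cliqueSet 2) (Γ.cliqueSet 3) :=
    Set.disjoint_left.2 fun s h₂ h₃ => by
      simpa [h₂.card_eq] using h₃.card_eq
  rw [← Set.ncard_union_eq hdisj (hfin.subset (Set.subset_union_left.trans hsub))
    (hfin.subset (Set.subset_union_right.trans hsub))]
  exact (Set.ncard_le_ncard hsub hfin).trans (Set.ncard_image_le (finite_setOf_isDirPath D))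

end DirectedPaths

section AffineFunctions

lemma sub_mul_affine_apply (f : ℝ →ᵃ[ℝ] ℝ) (r s t : ℝ) :
    (t - r) * f s = (t - s) * f r + (s - r) * f t := by
  have h : ∀ u, f u = u * f.linear 1 + f 0 := fun u => by
    conv_lhs => rw [f.decomp]
    simpa using f.linear.map_smul u 1
  rw [h r, h s, h t]
  ring

lemma affine_eq_of_eq_of_eq {f g : ℝ →ᵃ[ℝ] ℝ} {r s : ℝ} (hrs : r ≠ s) (hr : f r = g r)
    (hs : f s = g s) : f = g := by
  ext t
  refine mul_left_cancel₀ (sub_ne_zero.2 hrs.symm) ?_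
  rw [sub_mul_affine_apply f r t s, sub_mul_affine_apply g r t s, hr, hs]

lemma affine_lt_of_lt_of_le {f g : ℝ →ᵃ[ℝ] ℝ} {r s t : ℝ} (hr : f r < g r) (ht : f t ≤ g t)
    (hrs : r ≤ s) (hst : s < t) : f s < g s := by
  have hf := sub_mul_affine_apply f r s t
  have hg := sub_mul_affine_apply g r s t
  have h₁ := mul_pos (sub_pos.2 hst) (sub_pos.2 hr)
  have h₂ := mul_nonneg (sub_nonneg.2 hrs) (sub_nonneg.2 ht)
  exact lt_of_mul_lt_mul_left (by linarith) (sub_nonneg.2 (hrs.trans hst.le))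

lemma affine_lt_of_le_of_lt {f g : ℝ →ᵃ[ℝ] ℝ} {r s t : ℝ} (hr : f r ≤ g r) (ht : f t < g t)
    (hrs : r < s) (hst : s ≤ t) : f s < g s := by
  have hf := sub_mul_affine_apply f r s t
  have hg := sub_mul_affine_apply g r s t
  have h₁ := mul_nonneg (sub_nonneg.2 hst) (sub_nonneg.2 hr)
  have h₂ := mul_pos (sub_pos.2 hrs) (sub_pos.2 ht)
  exact lt_of_mul_lt_mul_left (by linarith) (sub_nonneg.2 (hrs.le.trans hst))

lemma affine_eq_of_le_of_ge_of_le {f g : ℝ →ᵃ[ℝ] ℝ} {r s t : ℝ} (hr : f r ≤ g r) (hs : g s ≤ f s)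
    (ht : f t ≤ g t) (hrs : r < s) (hst : s < t) : f = g := by
  have hr' : f r = g r := hr.eq_of_not_lt fun h => (affine_lt_of_lt_of_le h ht hrs.le hst).not_ge hs
  have ht' : f t = g t := ht.eq_of_not_lt fun h => (affine_lt_of_le_of_lt hr h hrs hst.le).not_ge hs
  exact affine_eq_of_eq_of_eq (hrs.trans hst).ne hr' ht'

lemma exists_mem_affine_eq {f g : ℝ →ᵃ[ℝ] ℝ} {S : Set ℝ} (hS : S.OrdConnected) {s t : ℝ}
    (hs : s ∈ S) (ht : t ∈ S) (hfg : f s ≤ g s) (hgf : g t ≤ f t) : ∃ u ∈ S, f u = g u :=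
  hS.isPreconnected.intermediate_value₂ hs ht f.continuous_of_finiteDimensional.continuousOn
    g.continuous_of_finiteDimensional.continuousOn hfg hgf

end AffineFunctions

section Chords

variable {E : Type*} [AddCommGroup E] [Module ℝ E] {x y : E →ₗ[ℝ] ℝ} {a b v z : E} {t : ℝ}

/-- The slope of the line through `a` and `b` with respect to the coordinates `x` and `y`. It is
meaningful only if `x a ≠ x b`. -/
def chordSlope (x y : E →ₗ[ℝ] ℝ) (a b : E) : ℝ := (y b - y a) / (x b - x a)

/-- The line through `a` and `b`, as the graph of an affine function giving the coordinate `y` in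
terms of the coordinate `x`. It is meaningful only if `x a ≠ x b`. -/
def chord (x y : E →ₗ[ℝ] ℝ) (a b : E) : ℝ →ᵃ[ℝ] ℝ :=
  chordSlope x y a b • (AffineMap.id ℝ ℝ - AffineMap.const ℝ ℝ (x a)) + AffineMap.const ℝ ℝ (y a)

lemma chord_apply (x y : E →ₗ[ℝ] ℝ) (a b : E) (t : ℝ) :
    chord x y a b t = chordSlope x y a b * (t - x a) + y a := by
  simp [chord]

@[simp]
lemma chord_left (x y : E →ₗ[ℝ] ℝ) (a b : E) : chord x y a b (x a) = y a := by
  simp [chord_apply]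

lemma chord_right (hab : x a ≠ x b) : chord x y a b (x b) = y b := by
  rw [chord_apply, chordSlope, div_mul_cancel₀ _ (sub_ne_zero.2 hab.symm), sub_add_cancel]

lemma eq_chord {f : ℝ →ᵃ[ℝ] ℝ} (hab : x a ≠ x b) (ha : f (x a) = y a) (hb : f (x b) = y b) :
    f = chord x y a b :=
  affine_eq_of_eq_of_eq hab (by simp [ha]) (by simp [hb, chord_right hab])

lemma chordSlope_neg_left (x y : E →ₗ[ℝ] ℝ) (a b : E) :
    chordSlope (-x) y a b = -chordSlope x y a b := by
  rw [chordSlope, chordSlope, ← div_neg]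
  simp [sub_eq_add_neg, add_comm]

lemma chordSlope_neg_right (x y : E →ₗ[ℝ] ℝ) (a b : E) :
    chordSlope x (-y) a b = -chordSlope x y a b := by
  rw [chordSlope, chordSlope, ← neg_div]
  simp [sub_eq_add_neg, add_comm]

lemma chordSlope_comm (x y : E →ₗ[ℝ] ℝ) (a b : E) : chordSlope x y a b = chordSlope x y b a := by
  rw [chordSlope, chordSlope, ← neg_sub (y b), ← neg_sub (x b), neg_div_neg_eq]

lemma chord_comm (hab : x a ≠ x b) : chord x y a b = chord x y b a :=
  eq_chord hab.symm (chord_right hab) (chord_left ..)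

lemma chord_neg_left (x y : E →ₗ[ℝ] ℝ) (a b : E) (t : ℝ) :
    chord (-x) y a b t = chord x y a b (-t) := by
  simp only [chord_apply, chordSlope_neg_left, LinearMap.neg_apply]
  ring

lemma chord_le_chord_of_chordSlope_le (h : chordSlope x y v a ≤ chordSlope x y v b)
    (ht : x v ≤ t) : chord x y v a t ≤ chord x y v b t := by
  rw [chord_apply, chord_apply]
  gcongr

lemma le_chord_iff (hvb : x v < x b) :
    y b ≤ chord x y v a (x b) ↔ chordSlope x y v b ≤ chordSlope x y v a := by
  rw [chord_apply, ← sub_le_iff_le_add, ← div_le_iff₀ (sub_pos.2 hvb), ← chordSlope]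

lemma eq_chord_iff (hvb : x v ≠ x b) :
    y b = chord x y v a (x b) ↔ chordSlope x y v b = chordSlope x y v a := by
  rw [chord_apply, ← sub_eq_iff_eq_add, ← div_eq_iff (sub_ne_zero.2 hvb.symm), ← chordSlope]

lemma lt_chord_iff (hav : x a < x v) (hvb : x v < x b) :
    y v < chord x y a b (x v) ↔ chordSlope x y v a < chordSlope x y v b := by
  have h := sub_mul_affine_apply (chord x y a b) (x a) (x v) (x b)
  rw [chord_left, chord_right (hav.trans hvb).ne] at h
  rw [chordSlope_comm x y v a, chordSlope, chordSlope,
    div_lt_div_iff₀ (sub_pos.2 hav) (sub_pos.2 hvb),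
    ← mul_lt_mul_iff_right₀ (sub_pos.2 (hav.trans hvb)), h]
  constructor <;> intro h <;> linarith

lemma mem_openSegment_iff_chord (hxy : Function.Injective (x.prod y)) (hab : x a < x b) :
    z ∈ openSegment ℝ a b ↔ x z ∈ Set.Ioo (x a) (x b) ∧ y z = chord x y a b (x z) := by
  have hpos : 0 < x b - x a := sub_pos.2 hab
  rw [openSegment_eq_image_lineMap]
  constructor
  · rintro ⟨t, ⟨ht₀, ht₁⟩, rfl⟩
    have hxz : x (AffineMap.lineMap a b t) = x a + t * (x b - x a) := by
      simp [AffineMap.lineMap_apply, add_comm]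
    refine ⟨⟨by nlinarith, by nlinarith⟩, ?_⟩
    rw [hxz, chord_apply, chordSlope, add_sub_cancel_left, mul_comm t, ← mul_assoc,
      div_mul_cancel₀ _ hpos.ne']
    simp [AffineMap.lineMap_apply, mul_comm]
  · rintro ⟨⟨hxa, hxb⟩, hyz⟩
    refine ⟨(x z - x a) / (x b - x a), ⟨div_pos (sub_pos.2 hxa) hpos,
      (div_lt_one hpos).2 (by linarith)⟩, hxy (Prod.ext ?_ ?_)⟩
    · change x _ = x z
      simp [AffineMap.lineMap_apply, hpos.ne']
    · change y _ = y z
      rw [hyz, chord_apply, chordSlope]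
      simp only [AffineMap.lineMap_apply, vsub_eq_sub, vadd_eq_add, map_add, map_smul, map_sub,
        smul_eq_mul]
      ring

lemma collinear_of_forall_eq_chord (hxy : Function.Injective (x.prod y)) (hab : x a ≠ x b)
    {U : Set E} (hU : ∀ u ∈ U, y u = chord x y a b (x u)) : Collinear ℝ U := by
  refine (collinear_iff_exists_forall_eq_smul_vadd U).2 ⟨a, (x b - x a)⁻¹ • (b - a), fun u hu =>
    ⟨x u - x a, hxy (Prod.ext ?_ ?_)⟩⟩
  · change x u = x _
    simp [sub_ne_zero.2 hab.symm]
  · change y u = y _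
    rw [hU u hu, chord_apply, chordSlope]
    simp only [vadd_eq_add, map_add, map_smul, map_sub, smul_eq_mul]
    ring

lemma exists_mem_openSegment_apply_eq (ht : t ∈ Set.Ioo (x a) (x b)) :
    ∃ z ∈ openSegment ℝ a b, x z = t := by
  have hpos : 0 < x b - x a := sub_pos.2 (ht.1.trans ht.2)
  rw [openSegment_eq_image_lineMap]
  refine ⟨_, ⟨(t - x a) / (x b - x a), ⟨div_pos (sub_pos.2 ht.1) hpos,
    (div_lt_one hpos).2 (by linarith [ht.2])⟩, rfl⟩, ?_⟩
  simp [AffineMap.lineMap_apply, hpos.ne']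

end Chords

namespace PSLG

variable {G : PSLG} {x y : Pt →ₗ[ℝ] ℝ} {a b c d v w p q : Pt} {s t : ℝ} {g : ℝ →ᵃ[ℝ] ℝ}

/-- The abstract graph underlying a plane straight-line graph. -/
def toSimpleGraph (G : PSLG) : SimpleGraph Pt where
  Adj a b := s(a, b) ∈ G.E
  symm := ⟨fun a b h => by rwa [Sym2.eq_swap]⟩
  loopless := ⟨fun a h => (G.valid.1 a a h).2.2 rfl⟩

lemma toSimpleGraph_adj : G.toSimpleGraph.Adj a b ↔ s(a, b) ∈ G.E := Iff.rfl

lemma support_toSimpleGraph_subset : G.toSimpleGraph.support ⊆ G.V :=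
  fun _ ⟨_, h⟩ => (G.valid.1 _ _ h).1

lemma IsTriangulation.mem_edges_of_forall_notMem_openSegment (htri : G.IsTriangulation)
    (ha : a ∈ G.V) (hb : b ∈ G.V) (hab : a ≠ b) (hvert : ∀ u ∈ G.V, u ∉ openSegment ℝ a b)
    (hedge : ∀ c d, s(c, d) ∈ G.E → s(c, d) ≠ s(a, b) →
      openSegment ℝ a b ∩ openSegment ℝ c d = ∅) :
    s(a, b) ∈ G.E := by
  have hseg : ∀ {c d}, s(c, d) = s(a, b) → openSegment ℝ c d = openSegment ℝ a b := fun h => by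
    rcases Sym2.eq_iff.1 h with ⟨rfl, rfl⟩ | ⟨rfl, rfl⟩
    exacts [rfl, openSegment_symm ..]
  obtain ⟨hends, hopen, hdisj⟩ := G.valid
  by_contra hE
  refine htri a ha b hb hab hE ⟨fun c d hcd => ?_, fun c d hcd u hu => ?_,
    fun c d c' d' hcd hcd' hne => ?_⟩
  · rcases Finset.mem_insert.1 hcd with h | h
    · rcases Sym2.eq_iff.1 h with ⟨rfl, rfl⟩ | ⟨rfl, rfl⟩
      exacts [⟨ha, hb, hab⟩, ⟨hb, ha, hab.symm⟩]
    · exact hends c d h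
  · rcases Finset.mem_insert.1 hcd with h | h
    exacts [hseg h ▸ hvert u hu, hopen c d h u hu]
  · rcases Finset.mem_insert.1 hcd with h | h <;> rcases Finset.mem_insert.1 hcd' with h' | h'
    · exact absurd (h.trans h'.symm) hne
    · exact hseg h ▸ hedge c' d' h' (h ▸ hne.symm)
    · exact hseg h' ▸ Set.inter_comm _ _ ▸ hedge c d h (h' ▸ hne)
    · exact hdisj c d c' d' h h' hne

/-- `x` and `y` are linear coordinates on the plane such that no two vertices of `G` lie on a line
of constant `x`. -/
structure IsFrame (G : PSLG) (x y : Pt →ₗ[ℝ] ℝ) : Prop where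
  injective : Function.Injective (x.prod y)
  injOn : Set.InjOn x G.V

lemma IsFrame.neg_left (hxy : G.IsFrame x y) : G.IsFrame (-x) y where
  injective a b h := hxy.injective <| by
    simpa using h
  injOn a ha b hb h := hxy.injOn ha hb (neg_injective h)

lemma IsFrame.neg_right (hxy : G.IsFrame x y) : G.IsFrame x (-y) where
  injective a b h := hxy.injective <| by
    simpa using h
  injOn := hxy.injOn

/-- The edge `{a, b}` of `G`, directed such that the coordinate `x` increases. -/
structure IsForwardEdge (G : PSLG) (x : Pt →ₗ[ℝ] ℝ) (a b : Pt) : Prop where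
  mem : s(a, b) ∈ G.E
  lt : x a < x b

lemma IsForwardEdge.left_mem (hab : G.IsForwardEdge x a b) : a ∈ G.V := (G.valid.1 _ _ hab.mem).1

lemma IsForwardEdge.right_mem (hab : G.IsForwardEdge x a b) : b ∈ G.V :=
  (G.valid.1 _ _ hab.mem).2.1

lemma isForwardEdge_neg : G.IsForwardEdge (-x) a b ↔ G.IsForwardEdge x b a := by
  constructor <;> rintro ⟨hmem, hlt⟩ <;> refine ⟨by rwa [Sym2.eq_swap], ?_⟩ <;> simpa using hlt

lemma isForwardEdge_or (hxy : G.IsFrame x y) (hab : s(a, b) ∈ G.E) :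
    G.IsForwardEdge x a b ∨ G.IsForwardEdge x b a := by
  obtain ⟨ha, hb, hne⟩ := G.valid.1 a b hab
  refine (lt_or_gt_of_ne (hxy.injOn.ne ha hb hne)).imp (⟨hab, ·⟩) (⟨?_, ·⟩)
  rwa [Sym2.eq_swap]

lemma IsForwardEdge.chord_ne_chord (hxy : G.IsFrame x y) (hab : G.IsForwardEdge x a b)
    (hcd : G.IsForwardEdge x c d) (hne : (a, b) ≠ (c, d)) (ht : t ∈ Set.Ioo (x a) (x b))
    (ht' : t ∈ Set.Icc (x c) (x d)) : chord x y a b t ≠ chord x y c d t := by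
  intro h
  have hvert : ∀ u ∈ G.V, t = x u → y u ≠ chord x y a b t := fun u hu htu hyu =>
    G.valid.2.1 a b hab.mem u hu
      ((mem_openSegment_iff_chord hxy.injective hab.lt).2 ⟨htu ▸ ht, htu ▸ hyu⟩)
  rcases Set.eq_endpoints_or_mem_Ioo_of_mem_Icc ht' with hc | hd | ht'
  · exact hvert c hcd.left_mem hc (by rw [h, hc, chord_left])
  · exact hvert d hcd.right_mem hd (by rw [h, hd, chord_right hcd.lt.ne])
  obtain ⟨z, hz, rfl⟩ := exists_mem_openSegment_apply_eq ht
  have hz' : z ∈ openSegment ℝ c d := (mem_openSegment_iff_chord hxy.injective hcd.lt).2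
    ⟨ht', ((mem_openSegment_iff_chord hxy.injective hab.lt).1 hz).2.trans h⟩
  have hinter : (openSegment ℝ a b ∩ openSegment ℝ c d).Nonempty := ⟨z, hz, hz'⟩
  refine hinter.ne_empty (G.valid.2.2 a b c d hab.mem hcd.mem fun h => ?_)
  rcases Sym2.eq_iff.1 h with ⟨rfl, rfl⟩ | ⟨rfl, rfl⟩
  exacts [hne rfl, hab.lt.not_gt hcd.lt]

lemma IsForwardEdge.chord_lt_chord (hxy : G.IsFrame x y) (hab : G.IsForwardEdge x a b)
    (hcd : G.IsForwardEdge x c d) (hs : s ∈ Set.Ioo (x a) (x b) ∩ Set.Icc (x c) (x d))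
    (ht : t ∈ Set.Ioo (x a) (x b) ∩ Set.Icc (x c) (x d))
    (hlt : chord x y c d s < chord x y a b s) : chord x y c d t < chord x y a b t := by
  by_contra! hle
  have hne : (a, b) ≠ (c, d) := by
    rintro ⟨⟩
    exact hlt.ne rfl
  obtain ⟨u, ⟨huab, hucd⟩, hu⟩ :=
    exists_mem_affine_eq (Set.ordConnected_Ioo.inter Set.ordConnected_Icc) hs ht hlt.le hle
  exact hab.chord_ne_chord hxy hcd hne huab hucd hu.symm

lemma IsTriangulation.mem_edges_of_forall_chord_eq (htri : G.IsTriangulation)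
    (hxy : G.IsFrame x y) (ha : a ∈ G.V) (hb : b ∈ G.V) (hab : x a < x b)
    (hvert : ∀ u ∈ G.V, x u ∈ Set.Ioo (x a) (x b) → y u ≠ chord x y a b (x u))
    (hedge : ∀ c d, G.IsForwardEdge x c d → ∀ t ∈ Set.Ioo (x a) (x b) ∩ Set.Ioo (x c) (x d),
      chord x y c d t = chord x y a b t → chord x y c d = chord x y a b) :
    s(a, b) ∈ G.E := by
  refine htri.mem_edges_of_forall_notMem_openSegment ha hb (by rintro rfl; exact hab.false)
    (fun u hu hmem => ?_) fun c d hcd hne => ?_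
  · obtain ⟨hxu, hyu⟩ := (mem_openSegment_iff_chord hxy.injective hab).1 hmem
    exact hvert u hu hxu hyu
  wlog hforward : G.IsForwardEdge x c d generalizing c d
  · rw [openSegment_symm ℝ c d]
    rw [Sym2.eq_swap] at hcd hne
    exact this d c hcd hne ((isForwardEdge_or hxy hcd).resolve_right hforward)
  refine Set.eq_empty_iff_forall_notMem.2 fun z ⟨hzab, hzcd⟩ => ?_
  obtain ⟨hxab, hyab⟩ := (mem_openSegment_iff_chord hxy.injective hab).1 hzab
  obtain ⟨hxcd, hycd⟩ := (mem_openSegment_iff_chord hxy.injective hforward.lt).1 hzcd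
  have heq := hedge c d hforward _ ⟨hxab, hxcd⟩ (hycd.symm.trans hyab)
  have hvertab : ∀ u ∈ G.V, y u = chord x y c d (x u) → x u ∉ Set.Ioo (x a) (x b) :=
    fun u hu hyu hxu => hvert u hu hxu (heq ▸ hyu)
  have hvertcd : ∀ u ∈ G.V, y u = chord x y a b (x u) → x u ∉ Set.Ioo (x c) (x d) :=
    fun u hu hyu hxu => G.valid.2.1 c d hcd u hu
      ((mem_openSegment_iff_chord hxy.injective hforward.lt).2 ⟨hxu, heq.symm ▸ hyu⟩)
  have hc := hvertab c hforward.left_mem (chord_left ..).symm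
  have hd := hvertab d hforward.right_mem (chord_right hforward.lt.ne).symm
  have ha' := hvertcd a ha (chord_left ..).symm
  have hb' := hvertcd b hb (chord_right hab.ne).symm
  simp only [Set.mem_Ioo, not_and_or, not_lt] at hxab hxcd hc hd ha' hb'
  have hac : a = c := hxy.injOn ha hforward.left_mem (by grind)
  have hbd : b = d := hxy.injOn hb hforward.right_mem (by grind)
  exact hne (by rw [hac, hbd])

/-- The line `g` bounds what is seen from the vertex `v` looking upwards. Here `p` and `q` are
vertices to the left and to the right of `v` such that the angle `pvq` is less than `π` on its upper
side, and `g` does not run below `p`, `v` or `q`. No edge crosses `g` inside this angle, and no edge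
separates `v` from `g` on the vertical line through `v`. The line through the first edge above `v`
or, if there is none, a horizontal line above all vertices serves as `g`. -/
structure IsCeiling (G : PSLG) (x y : Pt →ₗ[ℝ] ℝ) (v p q : Pt) (g : ℝ →ᵃ[ℝ] ℝ) : Prop where
  left_mem : p ∈ G.V
  right_mem : q ∈ G.V
  left_lt : x p < x v
  lt_right : x v < x q
  slope_lt : chordSlope x y v p < chordSlope x y v q
  left_le : y p ≤ g (x p)
  right_le : y q ≤ g (x q)
  lt_or_lt_or_mem : y p < g (x p) ∨ y q < g (x q) ∨ s(p, q) ∈ G.E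
  lt : y v < g (x v)
  not_crossed : ∀ c d, G.IsForwardEdge x c d → ∀ s ∈ Set.Icc (x c) (x d),
    ∀ t ∈ Set.Icc (x c) (x d), chord x y v p s < g s → chord x y v q s < g s →
    chord x y v p t < g t → chord x y v q t < g t → chord x y c d s < g s → chord x y c d t < g t
  no_between : ∀ c d, G.IsForwardEdge x c d → x v ∈ Set.Ioo (x c) (x d) →
    chord x y c d (x v) < g (x v) → chord x y c d (x v) ≤ y v

lemma IsCeiling.mirror (hg : G.IsCeiling x y v p q g) :
    G.IsCeiling (-x) y v q p (g.comp (-AffineMap.id ℝ ℝ)) where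
  left_mem := hg.right_mem
  right_mem := hg.left_mem
  left_lt := neg_lt_neg hg.lt_right
  lt_right := neg_lt_neg hg.left_lt
  slope_lt := by simpa only [chordSlope_neg_left, neg_lt_neg_iff] using hg.slope_lt
  left_le := by simpa using hg.right_le
  right_le := by simpa using hg.left_le
  lt_or_lt_or_mem := by simpa [Sym2.eq_swap, or_left_comm] using hg.lt_or_lt_or_mem
  lt := by simpa using hg.lt
  not_crossed c d hcd s hs t ht hsq hsp htq htp h := by
    rw [isForwardEdge_neg] at hcd
    simp only [chord_neg_left, AffineMap.comp_apply, AffineMap.coe_neg, Pi.neg_apply,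
      AffineMap.id_apply, chord_comm hcd.lt.ne'] at *
    exact hg.not_crossed d c hcd (-s) ⟨le_neg_of_le_neg hs.2, neg_le_of_neg_le hs.1⟩ (-t)
      ⟨le_neg_of_le_neg ht.2, neg_le_of_neg_le ht.1⟩ hsp hsq htp htq h
  no_between c d hcd hv h := by
    rw [isForwardEdge_neg] at hcd
    simp only [chord_neg_left, AffineMap.comp_apply, AffineMap.coe_neg, Pi.neg_apply,
      AffineMap.id_apply, chord_comm hcd.lt.ne', LinearMap.neg_apply, neg_neg] at *
    exact hg.no_between d c hcd ⟨neg_lt_neg_iff.1 hv.2, neg_lt_neg_iff.1 hv.1⟩ h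

lemma IsForwardEdge.isCeiling (hxy : G.IsFrame x y) (hab : G.IsForwardEdge x a b)
    (hv : x v ∈ Set.Ioo (x a) (x b)) (hlt : y v < chord x y a b (x v))
    (hlow : ∀ c d, G.IsForwardEdge x c d → x v ∈ Set.Ioo (x c) (x d) → y v < chord x y c d (x v) →
      chord x y a b (x v) ≤ chord x y c d (x v)) :
    G.IsCeiling x y v a b (chord x y a b) where
  left_mem := hab.left_mem
  right_mem := hab.right_mem
  left_lt := hv.1
  lt_right := hv.2
  slope_lt := (lt_chord_iff hv.1 hv.2).1 hlt
  left_le := by simp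
  right_le := by rw [chord_right hab.lt.ne]
  lt_or_lt_or_mem := .inr (.inr hab.mem)
  lt := hlt
  not_crossed c d hcd s hs t ht hsa hsb hta htb h := by
    have hIoo : ∀ r, chord x y v a r < chord x y a b r → chord x y v b r < chord x y a b r →
        r ∈ Set.Ioo (x a) (x b) := by
      refine fun r hra hrb => ⟨lt_of_not_ge fun hr => ?_, lt_of_not_ge fun hr => ?_⟩
      · refine (affine_lt_of_lt_of_le hra ?_ hr hv.1).ne ?_
        · simpa using hlt.le
        · rw [chord_right hv.1.ne', chord_left]
      · refine (affine_lt_of_le_of_lt ?_ hrb hv.2 hr).ne ?_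
        · simpa using hlt.le
        · rw [chord_right hv.2.ne, chord_right hab.lt.ne]
    exact hab.chord_lt_chord hxy hcd ⟨hIoo s hsa hsb, hs⟩ ⟨hIoo t hta htb, ht⟩ h
  no_between c d hcd hvcd h := le_of_not_gt fun hlt' => (hlow c d hcd hvcd hlt').not_gt h

lemma exists_isCeiling_of_forall_chord_le (hp : p ∈ G.V) (hq : q ∈ G.V) (hpv : x p < x v)
    (hvq : x v < x q) (hslope : chordSlope x y v p < chordSlope x y v q) (hv : v ∈ G.V)
    (hedge : ∀ c d, G.IsForwardEdge x c d → x v ∈ Set.Ioo (x c) (x d) →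
      chord x y c d (x v) ≤ y v) :
    ∃ g, G.IsCeiling x y v p q g := by
  obtain ⟨M, hM⟩ : ∃ M, ∀ u ∈ G.V, y u < M :=
    ((G.V.eventually_all (l := Filter.atTop)).2 fun u _ => Filter.eventually_gt_atTop (y u)).exists
  have hbelow : ∀ c d, G.IsForwardEdge x c d → ∀ t ∈ Set.Icc (x c) (x d), chord x y c d t < M := by
    intro c d hcd t ht
    have hd : chord x y c d (x d) < AffineMap.const ℝ ℝ M (x d) := by
      simpa [chord_right hcd.lt.ne] using hM d hcd.right_mem
    rcases ht.2.eq_or_lt with rfl | htd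
    · exact hd
    · exact affine_lt_of_lt_of_le (by simpa using hM c hcd.left_mem) hd.le ht.1 htd
  exact ⟨AffineMap.const ℝ ℝ M, {
    left_mem := hp
    right_mem := hq
    left_lt := hpv
    lt_right := hvq
    slope_lt := hslope
    left_le := (hM p hp).le
    right_le := (hM q hq).le
    lt_or_lt_or_mem := .inl (hM p hp)
    lt := hM v hv
    not_crossed := fun c d hcd _ _ t ht _ _ _ _ _ => hbelow c d hcd t ht
    no_between := fun c d hcd hvcd _ => hedge c d hcd hvcd }⟩

lemma exists_isCeiling (hxy : G.IsFrame x y) (hp : p ∈ G.V) (hq : q ∈ G.V) (hpv : x p < x v)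
    (hvq : x v < x q) (hslope : chordSlope x y v p < chordSlope x y v q) (hv : v ∈ G.V) :
    ∃ p q g, G.IsCeiling x y v p q g := by
  classical
  let above : Finset (Pt × Pt) := (G.V ×ˢ G.V).filter fun e =>
    G.IsForwardEdge x e.1 e.2 ∧ x v ∈ Set.Ioo (x e.1) (x e.2) ∧ y v < chord x y e.1 e.2 (x v)
  have mem_above : ∀ {c d}, G.IsForwardEdge x c d → x v ∈ Set.Ioo (x c) (x d) →
      y v < chord x y c d (x v) → (c, d) ∈ above := fun hcd hvcd hlt => Finset.mem_filter.2
    ⟨Finset.mk_mem_product hcd.left_mem hcd.right_mem, hcd, hvcd, hlt⟩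
  rcases above.eq_empty_or_nonempty with hempty | hne
  · obtain ⟨g, hg⟩ := exists_isCeiling_of_forall_chord_le hp hq hpv hvq hslope hv
      fun c d hcd hvcd => le_of_not_gt fun hlt => by simpa [hempty] using mem_above hcd hvcd hlt
    exact ⟨p, q, g, hg⟩
  · obtain ⟨⟨a, b⟩, hmem, hmin⟩ := above.exists_min_image (fun e => chord x y e.1 e.2 (x v)) hne
    obtain ⟨-, hab, hvab, hlt⟩ := Finset.mem_filter.1 hmem
    exact ⟨a, b, _, hab.isCeiling hxy hvab hlt fun c d hcd hvcd hlt' =>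
      hmin (c, d) (mem_above hcd hvcd hlt')⟩

/-- `u` is a vertex to the right of `v` that is `q` or lies below the ceiling `g`. -/
structure IsRightCandidate (G : PSLG) (x y : Pt →ₗ[ℝ] ℝ) (v q : Pt) (g : ℝ →ᵃ[ℝ] ℝ) (u : Pt) :
    Prop where
  mem : u ∈ G.V
  lt : x v < x u
  eq_or_lt : u = q ∨ y u < g (x u)

/-- `w` is the nearest to `v` among the right candidates that are seen from `v` at the largest
slope. -/
structure IsSteepestRight (G : PSLG) (x y : Pt →ₗ[ℝ] ℝ) (v q : Pt) (g : ℝ →ᵃ[ℝ] ℝ) (w : Pt) : Prop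
    extends G.IsRightCandidate x y v q g w where
  slope_le : ∀ u, G.IsRightCandidate x y v q g u → chordSlope x y v u ≤ chordSlope x y v w
  le_of_slope_eq : ∀ u, G.IsRightCandidate x y v q g u →
    chordSlope x y v u = chordSlope x y v w → x w ≤ x u

lemma IsCeiling.exists_isSteepestRight (hg : G.IsCeiling x y v p q g) :
    ∃ w, G.IsSteepestRight x y v q g w := by
  classical
  obtain ⟨w, hw, hmax⟩ := (G.V.filter (G.IsRightCandidate x y v q g)).exists_max_image
    (fun u => toLex (chordSlope x y v u, -x u))
    ⟨q, Finset.mem_filter.2 ⟨hg.right_mem, hg.right_mem, hg.lt_right, .inl rfl⟩⟩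
  have hle : ∀ u, G.IsRightCandidate x y v q g u → chordSlope x y v u < chordSlope x y v w ∨
      chordSlope x y v u = chordSlope x y v w ∧ -x u ≤ -x w := fun u hu =>
    Prod.Lex.toLex_le_toLex.1 (hmax u (Finset.mem_filter.2 ⟨hu.mem, hu⟩))
  exact ⟨w, (Finset.mem_filter.1 hw).2, fun u hu => (hle u hu).elim le_of_lt fun h => h.1.le,
    fun u hu heq => (hle u hu).elim (fun h => absurd heq h.ne) fun h => neg_le_neg_iff.1 h.2⟩

lemma IsRightCandidate.le_ceiling (hw : G.IsRightCandidate x y v q g w)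
    (hg : G.IsCeiling x y v p q g) : y w ≤ g (x w) := by
  rcases hw.eq_or_lt with rfl | h
  exacts [hg.right_le, h.le]

namespace IsSteepestRight

lemma apply_le_chord (hw : G.IsSteepestRight x y v q g w) (ha : G.IsRightCandidate x y v q g a) :
    y a ≤ chord x y v w (x a) :=
  (le_chord_iff ha.lt).2 (hw.slope_le a ha)

lemma slope_right_le (hw : G.IsSteepestRight x y v q g w) (hg : G.IsCeiling x y v p q g) :
    chordSlope x y v q ≤ chordSlope x y v w :=
  hw.slope_le q ⟨hg.right_mem, hg.lt_right, .inl rfl⟩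

lemma chord_lt (hw : G.IsSteepestRight x y v q g w) {k : ℝ →ᵃ[ℝ] ℝ} (hvk : y v < k (x v))
    (hwk : y w ≤ k (x w)) (ht : t ∈ Set.Ico (x v) (x w)) : chord x y v w t < k t := by
  refine affine_lt_of_lt_of_le ?_ ?_ ht.1 ht.2
  · simpa using hvk
  · simpa [chord_right hw.lt.ne] using hwk

lemma left_and_right_chord_lt (hw : G.IsSteepestRight x y v q g w) (hg : G.IsCeiling x y v p q g)
    (ht : x v ≤ t) (hlt : chord x y v w t < g t) :
    chord x y v p t < g t ∧ chord x y v q t < g t :=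
  ⟨(chord_le_chord_of_chordSlope_le (hg.slope_lt.le.trans (hw.slope_right_le hg)) ht).trans_lt hlt,
    (chord_le_chord_of_chordSlope_le (hw.slope_right_le hg) ht).trans_lt hlt⟩

lemma chord_lt_of_not_crossed (hw : G.IsSteepestRight x y v q g w)
    (hg : G.IsCeiling x y v p q g) (hcd : G.IsForwardEdge x c d) (hs : s ∈ Set.Icc (x c) (x d))
    (ht : t ∈ Set.Icc (x c) (x d)) (hvs : x v ≤ s) (hvt : x v ≤ t)
    (hws : chord x y v w s < g s) (hwt : chord x y v w t < g t) (hlt : chord x y c d s < g s) :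
    chord x y c d t < g t := by
  obtain ⟨hps, hqs⟩ := hw.left_and_right_chord_lt hg hvs hws
  obtain ⟨hpt, hqt⟩ := hw.left_and_right_chord_lt hg hvt hwt
  exact hg.not_crossed c d hcd s hs t ht hps hqs hpt hqt hlt

lemma exists_lt_chord_le_chord (hw : G.IsSteepestRight x y v q g w)
    (hg : G.IsCeiling x y v p q g) (hxy : G.IsFrame x y) (hv : v ∈ G.V)
    (hcd : G.IsForwardEdge x c d) (ht : t ∈ Set.Ioo (x c) (x d)) (hvt : x v < t)
    (hwt : chord x y v w t < g t) (hlt : chord x y c d t < g t) :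
    ∃ r < t, chord x y c d r ≤ chord x y v w r := by
  have hwv : chord x y v w (x v) < g (x v) := by simpa using hg.lt
  rcases lt_trichotomy (x c) (x v) with hcv | hcv | hvc
  · have hvcd : x v ∈ Set.Ioo (x c) (x d) := ⟨hcv, hvt.trans ht.2⟩
    refine ⟨x v, hvt, ?_⟩
    simpa using hg.no_between c d hcd hvcd <| hw.chord_lt_of_not_crossed hg hcd
      (Set.Ioo_subset_Icc_self ht) (Set.Ioo_subset_Icc_self hvcd) hvt.le le_rfl hwt hwv hlt
  · obtain rfl := hxy.injOn hcd.left_mem hv hcv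
    exact ⟨x c, hvt, by simp⟩
  · have hwc : chord x y v w (x c) < g (x c) := affine_lt_of_lt_of_le hwv hwt.le hvc.le ht.1
    have hc := hw.chord_lt_of_not_crossed hg hcd (Set.Ioo_subset_Icc_self ht)
      (Set.left_mem_Icc.2 hcd.lt.le) hvt.le hvc.le hwt hwc hlt
    rw [chord_left] at hc
    refine ⟨x c, ht.1, ?_⟩
    simpa using hw.apply_le_chord ⟨hcd.left_mem, hvc, .inr hc⟩

lemma chord_right_le_chord (hw : G.IsSteepestRight x y v q g w) (hg : G.IsCeiling x y v p q g)
    (hcd : G.IsForwardEdge x c d) (ht : t ∈ Set.Ioo (x c) (x d)) (hvt : x v < t)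
    (hle : chord x y v w t ≤ chord x y c d t) (hlt : chord x y c d t < g t) :
    chord x y c d (x d) ≤ chord x y v w (x d) := by
  by_contra! hd
  have hgd : g (x d) ≤ chord x y c d (x d) := by
    by_contra! hdg
    rw [chord_right hcd.lt.ne] at hd hdg
    exact hd.not_ge (hw.apply_le_chord ⟨hcd.right_mem, hvt.trans ht.2, .inr hdg⟩)
  obtain ⟨s, ⟨hts, hsd⟩, hs⟩ := exists_mem_affine_eq Set.ordConnected_Icc
    (Set.left_mem_Icc.2 ht.2.le) (Set.right_mem_Icc.2 ht.2.le) hlt.le hgd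
  have hts : t < s := hts.lt_of_ne (by rintro rfl; exact hlt.ne hs)
  have hws : chord x y v w s < g s := hs ▸ affine_lt_of_le_of_lt hle hd hts hsd
  exact (hw.chord_lt_of_not_crossed hg hcd (Set.Ioo_subset_Icc_self ht) ⟨(ht.1.trans hts).le, hsd⟩
    hvt.le (hvt.trans hts).le (hle.trans_lt hlt) hws hlt).ne hs

lemma chord_eq_chord (hw : G.IsSteepestRight x y v q g w) (hg : G.IsCeiling x y v p q g)
    (hxy : G.IsFrame x y) (hv : v ∈ G.V) (hcd : G.IsForwardEdge x c d)
    (ht : t ∈ Set.Ioo (x c) (x d)) (hvt : x v < t) (hle : chord x y v w t ≤ chord x y c d t)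
    (hlt : chord x y c d t < g t) : chord x y c d = chord x y v w := by
  obtain ⟨r, hrt, hr⟩ :=
    hw.exists_lt_chord_le_chord hg hxy hv hcd ht hvt (hle.trans_lt hlt) hlt
  exact affine_eq_of_le_of_ge_of_le hr hle (hw.chord_right_le_chord hg hcd ht hvt hle hlt) hrt ht.2

lemma mem_edges (hw : G.IsSteepestRight x y v q g w) (hg : G.IsCeiling x y v p q g)
    (hxy : G.IsFrame x y) (htri : G.IsTriangulation) (hv : v ∈ G.V) : s(v, w) ∈ G.E := by
  refine htri.mem_edges_of_forall_chord_eq hxy hv hw.mem hw.lt (fun u hu hxu hyu => ?_)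
    fun c d hcd t ht heq => ?_
  · have hlt := hw.chord_lt hg.lt (hw.le_ceiling hg) (Set.Ioo_subset_Ico_self hxu)
    have hcand : G.IsRightCandidate x y v q g u := ⟨hu, hxu.1, .inr (hyu ▸ hlt)⟩
    exact (hw.le_of_slope_eq u hcand ((eq_chord_iff hxu.1.ne).1 hyu)).not_gt hxu.2
  · have hlt := hw.chord_lt hg.lt (hw.le_ceiling hg) (Set.Ioo_subset_Ico_self ht.1)
    exact hw.chord_eq_chord hg hxy hv hcd ht.2 ht.1.1 heq.ge (heq ▸ hlt)

lemma apply_lt (hw : G.IsSteepestRight x y v q g w) {k : ℝ →ᵃ[ℝ] ℝ} (hvk : y v < k (x v))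
    (hwk : y w ≤ k (x w)) (ha : a ∈ G.V) (hva : x v < x a) (haw : x a < x w)
    (hlt : y a < g (x a)) : y a < k (x a) :=
  (hw.apply_le_chord ⟨ha, hva, .inr hlt⟩).trans_lt (hw.chord_lt hvk hwk ⟨hva.le, haw⟩)

lemma forwardEdge_lt (hw : G.IsSteepestRight x y v q g w) (hg : G.IsCeiling x y v p q g)
    (hxy : G.IsFrame x y) (hv : v ∈ G.V) {k : ℝ →ᵃ[ℝ] ℝ} (hvk : y v < k (x v))
    (hwk : y w ≤ k (x w)) (hcd : G.IsForwardEdge x c d) (ht : t ∈ Set.Ioo (x c) (x d))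
    (hvt : x v < t) (htw : t < x w) (hlt : chord x y c d t < g t) : chord x y c d t < k t := by
  have hwt := hw.chord_lt hvk hwk ⟨hvt.le, htw⟩
  rcases le_or_gt (chord x y v w t) (chord x y c d t) with hle | hgt
  · rwa [hw.chord_eq_chord hg hxy hv hcd ht hvt hle hlt]
  · exact hgt.trans hwt

end IsSteepestRight

namespace IsCeiling

variable {w' : Pt}

lemma left_slope_lt_right_slope (hg : G.IsCeiling x y v p q g)
    (hw' : G.IsSteepestRight (-x) y v p (g.comp (-AffineMap.id ℝ ℝ)) w')
    (hw : G.IsSteepestRight x y v q g w) : chordSlope x y v w' < chordSlope x y v w := by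
  have h := hw'.slope_right_le hg.mirror
  rw [chordSlope_neg_left, chordSlope_neg_left, neg_le_neg_iff] at h
  exact h.trans_lt (hg.slope_lt.trans_le (hw.slope_right_le hg))

lemma lt_or_lt_or_mem_edges (hg : G.IsCeiling x y v p q g)
    (hw' : G.IsSteepestRight (-x) y v p (g.comp (-AffineMap.id ℝ ℝ)) w')
    (hw : G.IsSteepestRight x y v q g w) :
    y w' < g (x w') ∨ y w < g (x w) ∨ s(w', w) ∈ G.E := by
  rcases hw'.eq_or_lt with rfl | h
  · rcases hw.eq_or_lt with rfl | h
    exacts [hg.lt_or_lt_or_mem, .inr (.inl h)]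
  · exact .inl (by simpa using h)

lemma mem_edges_of_chord_lt (hg : G.IsCeiling x y v p q g) (hxy : G.IsFrame x y)
    (htri : G.IsTriangulation) (hv : v ∈ G.V)
    (hw' : G.IsSteepestRight (-x) y v p (g.comp (-AffineMap.id ℝ ℝ)) w')
    (hw : G.IsSteepestRight x y v q g w)
    (hlt : ∀ t ∈ Set.Ioo (x w') (x w), chord x y w' w t < g t) : s(w', w) ∈ G.E := by
  have hw'v : x w' < x v := by simpa using hw'.lt
  have hww : x w' < x w := hw'v.trans hw.lt
  have hvk : y v < chord x y w' w (x v) :=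
    (lt_chord_iff hw'v hw.lt).2 (hg.left_slope_lt_right_slope hw' hw)
  have hwk : y w ≤ chord x y w' w (x w) := (chord_right hww.ne).ge
  have hvk' : y v < (chord x y w' w).comp (-AffineMap.id ℝ ℝ) ((-x) v) := by simpa using hvk
  have hwk' : y w' ≤ (chord x y w' w).comp (-AffineMap.id ℝ ℝ) ((-x) w') := by simp
  refine htri.mem_edges_of_forall_chord_eq hxy (by simpa using hw'.mem) hw.mem hww
    (fun u hu hxu hyu => ?_) fun c d hcd t ht heq => absurd heq (ne_of_lt ?_)
  · have hug : y u < g (x u) := hyu ▸ hlt _ hxu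
    rcases lt_trichotomy (x u) (x v) with huv | huv | huv
    · exact (hw'.apply_lt hvk' hwk' hu (neg_lt_neg huv) (neg_lt_neg hxu.1)
        (by simpa using hug)).ne (by simpa using hyu)
    · obtain rfl := hxy.injOn hu hv huv
      exact hvk.ne hyu
    · exact (hw.apply_lt hvk hwk hu huv hxu.2 hug).ne hyu
  · have hcg : chord x y c d t < g t := heq ▸ hlt t ht.1
    rcases lt_trichotomy t (x v) with htv | rfl | htv
    · have := hw'.forwardEdge_lt hg.mirror hxy.neg_left hv hvk' hwk' (isForwardEdge_neg.2 hcd)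
        (t := -t) ⟨neg_lt_neg ht.2.2, neg_lt_neg ht.2.1⟩ (neg_lt_neg htv) (neg_lt_neg ht.1.1)
        (by simpa [chord_neg_left, chord_comm hcd.lt.ne'] using hcg)
      simpa [chord_neg_left, chord_comm hcd.lt.ne'] using this
    · exact (hg.no_between c d hcd ht.2 hcg).trans_lt hvk
    · exact hw.forwardEdge_lt hg hxy hv hvk hwk hcd ht.2 htv ht.1.2 hcg

lemma mem_edges (hg : G.IsCeiling x y v p q g) (hxy : G.IsFrame x y) (htri : G.IsTriangulation)
    (hv : v ∈ G.V) (hw' : G.IsSteepestRight (-x) y v p (g.comp (-AffineMap.id ℝ ℝ)) w')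
    (hw : G.IsSteepestRight x y v q g w) : s(w', w) ∈ G.E := by
  have hww : x w' < x w := (neg_lt_neg_iff.1 hw'.lt).trans hw.lt
  have hleft : chord x y w' w (x w') ≤ g (x w') := by simpa using hw'.le_ceiling hg.mirror
  have hright : chord x y w' w (x w) ≤ g (x w) := by
    simpa [chord_right hww.ne] using hw.le_ceiling hg
  rcases hg.lt_or_lt_or_mem_edges hw' hw with h | h | h
  · exact hg.mem_edges_of_chord_lt hxy htri hv hw' hw fun t ht =>
      affine_lt_of_lt_of_le (by simpa using h) hright ht.1.le ht.2
  · exact hg.mem_edges_of_chord_lt hxy htri hv hw' hw fun t ht =>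
      affine_lt_of_le_of_lt hleft (by simpa [chord_right hww.ne] using h) ht.1 ht.2.le
  · exact h

lemma isTriangleMedian (hg : G.IsCeiling x y v p q g) (hxy : G.IsFrame x y)
    (htri : G.IsTriangulation) (hv : v ∈ G.V) : IsTriangleMedian G.toSimpleGraph x v := by
  obtain ⟨w, hw⟩ := hg.exists_isSteepestRight
  obtain ⟨w', hw'⟩ := hg.mirror.exists_isSteepestRight
  exact ⟨w', w, (toSimpleGraph_adj.2 (hw'.mem_edges hg.mirror hxy.neg_left htri hv)).symm,
    hw.mem_edges hg hxy htri hv, hg.mem_edges hxy htri hv hw' hw, neg_lt_neg_iff.1 hw'.lt, hw.lt⟩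

end IsCeiling

lemma exists_chordSlope_ne (hxy : G.IsFrame x y) (hV : ¬ Collinear ℝ (G.V : Set Pt))
    (hv : v ∈ G.V) (hp : p ∈ G.V) (hq : q ∈ G.V) (hpv : x p < x v) (hvq : x v < x q) :
    ∃ a ∈ G.V, ∃ b ∈ G.V, x a < x v ∧ x v < x b ∧ chordSlope x y v a ≠ chordSlope x y v b := by
  by_contra! h
  refine hV (collinear_of_forall_eq_chord hxy.injective hvq.ne fun u hu => ?_)
  rcases lt_trichotomy (x u) (x v) with huv | huv | huv
  · exact (eq_chord_iff huv.ne').2 (h u hu q hq huv hvq)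
  · rw [hxy.injOn hu hv huv, chord_left]
  · exact (eq_chord_iff huv.ne).2 ((h p hp u hu hpv huv).symm.trans (h p hp q hq hpv hvq))

lemma IsTriangulation.isTriangleMedian (htri : G.IsTriangulation)
    (hV : ¬ Collinear ℝ (G.V : Set Pt)) (hxy : G.IsFrame x y) (hp : p ∈ G.V) (hv : v ∈ G.V)
    (hq : q ∈ G.V) (hpv : x p < x v) (hvq : x v < x q) :
    IsTriangleMedian G.toSimpleGraph x v := by
  obtain ⟨a, ha, b, hb, hav, hvb, hne⟩ := exists_chordSlope_ne hxy hV hv hp hq hpv hvq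
  rcases hne.lt_or_gt with hlt | hgt
  · obtain ⟨p, q, g, hg⟩ := exists_isCeiling hxy ha hb hav hvb hlt hv
    exact hg.isTriangleMedian hxy htri hv
  · obtain ⟨p, q, g, hg⟩ := exists_isCeiling hxy.neg_right ha hb hav hvb
      (by simpa only [chordSlope_neg_right, neg_lt_neg_iff] using hgt) hv
    exact hg.isTriangleMedian hxy.neg_right htri hv

lemma exists_isFrame (G : PSLG) : ∃ x y, G.IsFrame x y := by
  obtain ⟨x, hx⟩ := Module.exists_dual_forall_apply_ne_zero (K := ℝ)
    (fun e : Option G.V.offDiag => e.elim (1, 0) fun e => e.1.1 - e.1.2) <| by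
      rintro (_ | ⟨e, he⟩)
      · simp
      · simpa [sub_eq_zero] using (Finset.mem_offDiag.1 he).2.2
  refine ⟨x, LinearMap.snd ℝ ℝ ℝ, fun a b h => ?_, fun a ha b hb h => ?_⟩
  · obtain ⟨hxab, hab⟩ : x a = x b ∧ a.2 = b.2 := by simpa using h
    have hsub : a - b = (a.1 - b.1) • ((1, 0) : Pt) := by ext <;> simp [hab]
    have hx₁ : (a.1 - b.1) * x (1, 0) = 0 := by
      rw [← smul_eq_mul, ← map_smul, ← hsub, map_sub, hxab, sub_self]
    exact Prod.ext (sub_eq_zero.1 ((mul_eq_zero.1 hx₁).resolve_right (hx none))) hab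
  · by_contra hab
    exact hx (some ⟨(a, b), Finset.mem_offDiag.2 ⟨ha, hb, hab⟩⟩) (by simp [h])

end PSLG

lemma three_le_card_of_not_collinear {k E P : Type*} [DivisionRing k] [AddCommGroup E] [Module k E]
    [AddTorsor E P] {s : Finset P} (hs : ¬ Collinear k (s : Set P)) : 3 ≤ s.card := by
  by_contra! h
  refine hs ?_
  interval_cases hcard : s.card
  · rw [Finset.card_eq_zero.1 hcard, Finset.coe_empty]
    exact collinear_empty ..
  · obtain ⟨a, rfl⟩ := Finset.card_eq_one.1 hcard
    rw [Finset.coe_singleton]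
    exact collinear_singleton ..
  · obtain ⟨a, b, hab⟩ : ∃ a b, (s : Set P) = {a, b} := by
      classical
      obtain ⟨a, b, -, rfl⟩ := Finset.card_eq_two.1 hcard
      exact ⟨a, b, Finset.coe_pair⟩
    rw [hab]
    exact collinear_pair ..

lemma NoThreeCollinear.not_collinear {S : Finset Pt} (hS : NoThreeCollinear S)
    (hcard : 3 ≤ S.card) : ¬ Collinear ℝ (S : Set Pt) := by
  obtain ⟨a, b, c, ha, hb, hc, hab, hac, hbc⟩ := Finset.two_lt_card_iff.1 hcard
  refine fun h => hS a ha b hb c hc hab hac hbc (h.subset ?_)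
  rintro _ (rfl | rfl | rfl) <;> assumption

theorem directed_triangulation_lower_bound_general (G : PSLG)
    (hV : ¬ Collinear ℝ (G.V : Set Pt)) (htri : G.IsTriangulation) (D : Finset (Pt × Pt))
    (hD : IsOrientation G D) :
    3 * G.V.card - 5 ≤ dirPathCount D := by
  obtain ⟨x, y, hxy⟩ := G.exists_isFrame
  calc 3 * G.V.card - 5
    _ ≤ (G.toSimpleGraph.cliqueSet 2).ncard + (G.toSimpleGraph.cliqueSet 3).ncard :=
      three_mul_card_sub_five_le_ncard_cliqueSet_add_ncard_cliqueSet hxy.injOn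
        G.support_toSimpleGraph_subset (three_le_card_of_not_collinear hV)
        fun _ ha _ hv _ hb => htri.isTriangleMedian hV hxy ha hv hb
    _ ≤ dirPathCount D := ncard_cliqueSet_add_ncard_cliqueSet_le_dirPathCount
        fun a b hab => (hD.2 a b hab).imp And.left And.left

/-- every orientation of a triangulation of `n ≥ 3` points (no three
collinear) contains at least `3n − 5` directed simple paths. -/
theorem directed_triangulation_lower_bound (G : PSLG)
    (hcard : 3 ≤ G.V.card) (hgen : NoThreeCollinear G.V)
    (htri : G.IsTriangulation)
    (D : Finset (Pt × Pt)) (hD : IsOrientation G D) :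
    3 * G.V.card - 5 ≤ dirPathCount D :=
  directed_triangulation_lower_bound_general G (hgen.not_collinear hcard) htri D hD

end
end

section
/- Let S be a set of n ≥ 3 points in ℝ² with no three points collinear, let k be the number of points of S lying in the interior of the convex hull of S, and let T be a triangulation of S. Then T contains at least 3n + 4k − 14 star-shaped polygons. -/
open scoped BigOperators

noncomputable section

/-! Fix a linear functional `ℓ`, thought of as a height, that separates the vertices. Every face has
a middle vertex, one of its other two vertices being higher and one lower. Every vertex in the
interior of the convex hull is the middle vertex of a face on its left and of a face on its right,
and every vertex that is not extreme for `ℓ` is the middle vertex of at least one face. With `n`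
vertices, `k` of them interior, there are thus `f ≥ n + k - 2` faces. The existence of neighbours
and faces comes from edge-maximality through visibility: the first edge met by a segment from `a` to
another vertex spans with `a` a triangle in which some neighbour of `a` lies.

Two faces with a common side form a star-shaped quadrilateral, with a kernel point close to the
midpoint of that side. At most `n - k` sides of faces lie on the boundary of the convex hull, so
there are at least `(3f - n + k) / 2` such quadrilaterals.

Three consecutive faces around a vertex form a star-shaped pentagon, with a kernel point close to
that vertex, unless they close up around it; the vertex is then interior and has degree three. Such
triples correspond to corners of the middle face. At most `2(n - k)` of the `3f` corners lack a face
next to one of their two sides, and at most `3k` corners close up, so there are at least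
`3f - 2(n - k) - 3k` pentagons.

All these polygons have different edge sets: a star-shaped polygon oriented counterclockwise has
positive area, so its edge set determines its orientation. With the `f` faces themselves this gives
at least `(11f - 5n - k) / 2 ≥ 3n + 5k - 11` polygons. -/

open scoped Topology

/-! ### Orientation and barycentric coordinates -/

/-- Twice the signed area of the triangle `abc`, positive when `c` lies to the left of the line
from `a` to `b`. -/
def orient (a b c : Pt) : ℝ := crossp (b - a) (c - a)

theorem orient_rotate (a b c : Pt) : orient b c a = orient a b c := by
  simp only [orient, crossp, Prod.fst_sub, Prod.snd_sub]; ring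

theorem orient_swap (a b c : Pt) : orient b a c = -orient a b c := by
  simp only [orient, crossp, Prod.fst_sub, Prod.snd_sub]; ring

theorem orient_swap_right (a b c : Pt) : orient a c b = -orient a b c := by
  simp only [orient, crossp, Prod.fst_sub, Prod.snd_sub]; ring

@[simp] theorem orient_self (a b : Pt) : orient a a b = 0 := by
  simp [orient, crossp]

@[simp] theorem orient_self_left (a b : Pt) : orient a b a = 0 := by
  simp [orient, crossp]

@[simp] theorem orient_self_right (a b : Pt) : orient a b b = 0 := by
  simp only [orient, crossp, Prod.fst_sub, Prod.snd_sub]; ring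

theorem orient_combo {s t : ℝ} (h : s + t = 1) (a b z w : Pt) :
    orient a b (s • z + t • w) = s * orient a b z + t * orient a b w := by
  obtain rfl : t = 1 - s := by linarith
  simp only [orient, crossp, Prod.fst_sub, Prod.snd_sub, Prod.fst_add, Prod.snd_add,
    Prod.smul_fst, Prod.smul_snd, smul_eq_mul]
  ring

theorem continuous_orient (a b : Pt) : Continuous (orient a b) := by
  unfold orient crossp; fun_prop

theorem orient_eq_zero_of_mem_openSegment {a b z : Pt} (hz : z ∈ openSegment ℝ a b) :
    orient a b z = 0 := by
  obtain ⟨s, t, -, -, h, rfl⟩ := hz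
  simp [orient_combo h]

/-- The barycentric coordinate of `z` belonging to the vertex `a` of the triangle `abc`
(identically `0` when the triangle is degenerate). -/
def bary (a b c z : Pt) : ℝ := orient b c z / orient a b c

theorem bary_swap (a b c z : Pt) : bary a c b z = bary a b c z := by
  rw [bary, orient_swap, orient_swap_right a b c, neg_div_neg_eq, bary]

theorem bary_left {a b c : Pt} (h : orient a b c ≠ 0) : bary a b c a = 1 := by
  rw [bary, orient_rotate, div_self h]

@[simp] theorem bary_middle (a b c : Pt) : bary a b c b = 0 := by simp [bary]

@[simp] theorem bary_right (a b c : Pt) : bary a b c c = 0 := by simp [bary]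

theorem bary_combo {s t : ℝ} (h : s + t = 1) (a b c z w : Pt) :
    bary a b c (s • z + t • w) = s * bary a b c z + t * bary a b c w := by
  rw [bary, orient_combo h, bary, bary]; ring

theorem continuous_bary (a b c : Pt) : Continuous (bary a b c) :=
  (continuous_orient b c).div_const _

theorem bary_pos_iff {a b c z : Pt} (h : 0 < orient a b c) :
    0 < bary a b c z ↔ 0 < orient b c z := div_pos_iff_of_pos_right h

theorem bary_eq_zero_of_mem_openSegment {a b c z : Pt} (hz : z ∈ openSegment ℝ b c) :
    bary a b c z = 0 := by
  rw [bary, orient_eq_zero_of_mem_openSegment hz, zero_div]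

theorem bary_add_bary_add_bary {a b c : Pt} (h : orient a b c ≠ 0) (z : Pt) :
    bary a b c z + bary b c a z + bary c a b z = 1 := by
  rw [bary, bary, bary, orient_rotate a b c, ← orient_rotate c a b, ← add_div, ← add_div,
    div_eq_one_iff_eq h]
  simp only [orient, crossp, Prod.fst_sub, Prod.snd_sub]; ring

theorem bary_smul_add_smul_add_smul {a b c : Pt} (h : orient a b c ≠ 0) (z : Pt) :
    bary a b c z • a + bary b c a z • b + bary c a b z • c = z := by
  simp only [bary, orient_rotate a b c, ← orient_rotate c a b]
  ext <;> simp only [Prod.fst_add, Prod.snd_add, Prod.smul_fst, Prod.smul_snd, smul_eq_mul] <;>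
    field_simp <;> simp only [orient, crossp, Prod.fst_sub, Prod.snd_sub] <;> ring

theorem orient_eq_mul_bary {a b c : Pt} (h : orient a b c ≠ 0) (z w : Pt) :
    orient a z w = orient a b c *
      (bary b c a z * bary c a b w - bary c a b z * bary b c a w) := by
  simp only [bary, orient_rotate a b c, ← orient_rotate c a b]
  field_simp
  simp only [orient, crossp, Prod.fst_sub, Prod.snd_sub]; ring

theorem mem_openSegment_of_bary {a b c z : Pt} (h : orient a b c ≠ 0) (ha : bary a b c z = 0)
    (hb : 0 < bary b c a z) (hc : 0 < bary c a b z) : z ∈ openSegment ℝ b c := by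
  refine ⟨_, _, hb, hc, ?_, ?_⟩
  · simpa [ha] using bary_add_bary_add_bary h z
  · simpa [ha] using bary_smul_add_smul_add_smul h z

theorem eq_of_bary {a b c z : Pt} (h : orient a b c ≠ 0) (hb : bary b c a z = 0)
    (hc : bary c a b z = 0) : z = a := by
  have h1 : bary a b c z = 1 := by simpa [hb, hc] using bary_add_bary_add_bary h z
  simpa [h1, hb, hc] using (bary_smul_add_smul_add_smul h z).symm

theorem exists_combo_eq_zero {E : Type*} [AddCommGroup E] [Module ℝ E] [TopologicalSpace E]
    [ContinuousAdd E] [ContinuousSMul ℝ E] {F : E → ℝ} (hF : Continuous F) {y d : E}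
    (hy : 0 < F y) (hd : F d ≤ 0) :
    ∃ s t : ℝ, 0 ≤ s ∧ 0 < t ∧ s + t = 1 ∧ F (s • y + t • d) = 0 := by
  obtain ⟨w, ⟨s, t, hs, ht, hst, rfl⟩, hw⟩ :=
    (convex_segment y d).isPreconnected.intermediate_value (right_mem_segment ℝ y d)
      (left_mem_segment ℝ y d) hF.continuousOn ⟨hd, hy.le⟩
  refine ⟨s, t, hs, ht.lt_of_ne fun h => ?_, hst, hw⟩
  obtain rfl : s = 1 := by linarith
  simp [← h, hy.ne'] at hw

theorem combo_mem_openSegment {E : Type*} [AddCommGroup E] [Module ℝ E] {d e y : E}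
    (hy : y ∈ openSegment ℝ d e) {s t : ℝ} (hs : 0 < s) (ht : 0 ≤ t) (hst : s + t = 1) :
    s • y + t • d ∈ openSegment ℝ d e := by
  obtain ⟨q, r, hq, hr, hqr, rfl⟩ := hy
  exact ⟨s * q + t, s * r, by positivity, by positivity, by linear_combination hst + s * hqr,
    by module⟩

theorem eq_or_combo_mem_openSegment {E : Type*} [AddCommGroup E] [Module ℝ E] {d e y : E}
    (hy : y ∈ openSegment ℝ d e) {s t : ℝ} (hs : 0 ≤ s) (ht : 0 < t) (hst : s + t = 1) :
    s • y + t • d = d ∨ s • y + t • d ∈ openSegment ℝ d e := by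
  rcases hs.eq_or_lt with rfl | hs
  · obtain rfl : t = 1 := by linarith
    exact .inl (by simp)
  · exact .inr (combo_mem_openSegment hy hs ht.le hst)

theorem openSegment_subset_openSegment {E : Type*} [AddCommGroup E] [Module ℝ E] {a c x : E}
    (hx : x ∈ openSegment ℝ a c) :
    openSegment ℝ a x ⊆ openSegment ℝ a c := by
  rintro _ ⟨s, t, hs, ht, hst, rfl⟩
  rw [add_comm]
  exact combo_mem_openSegment hx ht hs.le (by linarith)

theorem dist_lt_of_mem_openSegment {E : Type*} [NormedAddCommGroup E] [NormedSpace ℝ E] {a x y : E}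
    (hax : a ≠ x) (hy : y ∈ openSegment ℝ a x) :
    dist a y < dist a x := by
  rw [openSegment_eq_image_lineMap] at hy
  obtain ⟨t, ⟨ht0, ht1⟩, rfl⟩ := hy
  rw [dist_left_lineMap, Real.norm_of_nonneg ht0.le]
  exact mul_lt_of_lt_one_left (dist_pos.2 hax) ht1

theorem isCompact_segment {E : Type*} [AddCommGroup E] [Module ℝ E] [TopologicalSpace E]
    [IsTopologicalAddGroup E] [ContinuousSMul ℝ E] (a b : E) : IsCompact (segment ℝ a b) := by
  rw [← convexHull_pair]
  exact (Set.toFinite {a, b}).isCompact_convexHull ℝ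

theorem exists_lineMap_eq_of_orient_eq_zero {a b c : Pt} (hab : a ≠ b) (h : orient a b c = 0) :
    ∃ r : ℝ, AffineMap.lineMap a b r = c := by
  have h' : (b.1 - a.1) * (c.2 - a.2) - (b.2 - a.2) * (c.1 - a.1) = 0 := h
  rcases eq_or_ne (b.1 - a.1) 0 with h1 | h1
  · have h2 : b.2 - a.2 ≠ 0 := fun h2 =>
      hab (Prod.ext (sub_eq_zero.1 h1).symm (sub_eq_zero.1 h2).symm)
    have hc : c.1 - a.1 = 0 := by simpa [h1, h2] using h'
    refine ⟨(c.2 - a.2) / (b.2 - a.2), Prod.ext ?_ ?_⟩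
    · simp [AffineMap.lineMap_apply, h1, sub_eq_zero.1 hc]
    · simp [AffineMap.lineMap_apply, h2]
  · refine ⟨(c.1 - a.1) / (b.1 - a.1), Prod.ext ?_ ?_⟩
    · simp [AffineMap.lineMap_apply, h1]
    · simp only [AffineMap.lineMap_apply, vsub_eq_sub, vadd_eq_add, Prod.snd_add,
        Prod.smul_snd, Prod.snd_sub, smul_eq_mul]
      field_simp
      linear_combination -h'

theorem collinear_of_orient_eq_zero {a b c : Pt} (h : orient a b c = 0) :
    Collinear ℝ ({a, b, c} : Set Pt) := by
  rcases eq_or_ne a b with rfl | hab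
  · simpa using collinear_pair ℝ a c
  obtain ⟨r, rfl⟩ := exists_lineMap_eq_of_orient_eq_zero hab h
  rw [Set.pair_comm b, Set.insert_comm a]
  exact collinear_insert_of_mem_affineSpan_pair (AffineMap.lineMap_mem_affineSpan_pair r a b)

theorem NoThreeCollinear.orient_ne_zero {V : Finset Pt} (hV : NoThreeCollinear V) {a b c : Pt}
    (ha : a ∈ V) (hb : b ∈ V) (hc : c ∈ V) (hab : a ≠ b) (hac : a ≠ c) (hbc : b ≠ c) :
    orient a b c ≠ 0 :=
  fun h => hV a ha b hb c hc hab hac hbc (collinear_of_orient_eq_zero h)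

theorem NoThreeCollinear.eq_or_eq {V : Finset Pt} (hV : NoThreeCollinear V) {a b c : Pt}
    (ha : a ∈ V) (hb : b ∈ V) (hc : c ∈ V) (hab : a ≠ b) (h : orient a b c = 0) :
    c = a ∨ c = b := by
  by_contra! hne
  exact hV.orient_ne_zero ha hb hc hab hne.1.symm hne.2.symm h

theorem NoThreeCollinear.notMem_openSegment {V : Finset Pt} (hV : NoThreeCollinear V) {a b c : Pt}
    (ha : a ∈ V) (hb : b ∈ V) (hc : c ∈ V) (hab : a ≠ b) : c ∉ openSegment ℝ a b := by
  intro h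
  rcases hV.eq_or_eq ha hb hc hab (orient_eq_zero_of_mem_openSegment h) with rfl | rfl
  · exact hab (left_mem_openSegment_iff.1 h)
  · exact hab (right_mem_openSegment_iff.1 h)

theorem NoThreeCollinear.orient_ne_zero_of_crossing {V : Finset Pt} (hV : NoThreeCollinear V)
    {a c d e x : Pt} (ha : a ∈ V) (hc : c ∈ V) (hd : d ∈ V) (he : e ∈ V) (hac : a ≠ c) (hde : d ≠ e)
    (hne : s(a, c) ≠ s(d, e)) (hx : x ∈ openSegment ℝ a c) (hx' : x ∈ openSegment ℝ d e) :
    orient d e a ≠ 0 := by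
  intro h0
  have h := orient_eq_zero_of_mem_openSegment hx'
  obtain ⟨s, t, -, ht, hst, rfl⟩ := hx
  have h1 : orient d e c = 0 := by simpa [orient_combo hst, h0, ht.ne'] using h
  rcases hV.eq_or_eq hd he ha hde h0 with rfl | rfl <;>
    rcases hV.eq_or_eq hd he hc hde h1 with rfl | rfl
  exacts [hac rfl, hne rfl, hne Sym2.eq_swap, hac rfl]

/-! ### Visibility -/

theorem openSegment_eq_of_sym2_eq {a b c d : Pt} (h : s(a, b) = s(c, d)) :
    openSegment ℝ a b = openSegment ℝ c d := by
  rcases Sym2.eq_iff.1 h with ⟨rfl, rfl⟩ | ⟨rfl, rfl⟩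
  exacts [rfl, openSegment_symm ℝ _ _]

theorem ValidEdges.insert {V : Finset Pt} {E : Finset (Sym2 Pt)} (h : ValidEdges V E) {a c : Pt}
    (ha : a ∈ V) (hc : c ∈ V) (hac : a ≠ c) (hV : ∀ v ∈ V, v ∉ openSegment ℝ a c)
    (hE : ∀ d e, s(d, e) ∈ E → Disjoint (openSegment ℝ a c) (openSegment ℝ d e)) :
    ValidEdges V (insert s(a, c) E) := by
  refine ⟨fun p q hpq => ?_, fun p q hpq v hv => ?_, fun p q d e hpq hde hne => ?_⟩
  · rcases Finset.mem_insert.1 hpq with hpq | hpq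
    · rcases Sym2.eq_iff.1 hpq with ⟨rfl, rfl⟩ | ⟨rfl, rfl⟩
      exacts [⟨ha, hc, hac⟩, ⟨hc, ha, hac.symm⟩]
    · exact h.1 p q hpq
  · rcases Finset.mem_insert.1 hpq with hpq | hpq
    · rw [openSegment_eq_of_sym2_eq hpq]; exact hV v hv
    · exact h.2.1 p q hpq v hv
  · rcases Finset.mem_insert.1 hpq with hpq | hpq <;> rcases Finset.mem_insert.1 hde with hde | hde
    · exact absurd (hpq.trans hde.symm) hne
    · rw [openSegment_eq_of_sym2_eq hpq]; exact (hE d e hde).inter_eq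
    · rw [openSegment_eq_of_sym2_eq hde]; exact (hE p q hpq).symm.inter_eq
    · exact h.2.2 p q d e hpq hde hne

namespace PSLG

variable {G : PSLG}

theorem left_mem {a b : Pt} (h : s(a, b) ∈ G.E) : a ∈ G.V := (G.valid.1 a b h).1

theorem right_mem {a b : Pt} (h : s(a, b) ∈ G.E) : b ∈ G.V := (G.valid.1 a b h).2.1

theorem ne_of_edge {a b : Pt} (h : s(a, b) ∈ G.E) : a ≠ b := (G.valid.1 a b h).2.2

theorem edge_symm {a b : Pt} (h : s(a, b) ∈ G.E) : s(b, a) ∈ G.E := by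
  rwa [Sym2.eq_swap]

theorem notMem_openSegment {a b v : Pt} (h : s(a, b) ∈ G.E) (hv : v ∈ G.V) :
    v ∉ openSegment ℝ a b := G.valid.2.1 a b h v hv

theorem edge_eq_of_mem {a b c d x : Pt} (h : s(a, b) ∈ G.E) (h' : s(c, d) ∈ G.E)
    (hx : x ∈ openSegment ℝ a b) (hx' : x ∈ openSegment ℝ c d) : s(a, b) = s(c, d) := by
  by_contra hne
  have hdisj := Set.disjoint_iff_inter_eq_empty.2 (G.valid.2.2 a b c d h h' hne)
  exact Set.disjoint_left.1 hdisj hx hx'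

theorem eq_of_combo_eq_vertex {a d e y : Pt} (hde : s(d, e) ∈ G.E) (ha : a ∈ G.V)
    (hy : y ∈ openSegment ℝ d e) {s t : ℝ} (hs : 0 ≤ s) (ht : 0 < t) (hst : s + t = 1)
    (hw : s • y + t • d = a) : d = a := by
  rcases eq_or_combo_mem_openSegment hy hs ht hst with h | h
  · exact h.symm.trans hw
  · exact absurd (hw ▸ h) (notMem_openSegment hde ha)

theorem mem_openSegment_of_combo_mem {a b d e y : Pt} (hab : s(a, b) ∈ G.E) (hde : s(d, e) ∈ G.E)
    (hy : y ∈ openSegment ℝ d e) {s t : ℝ} (hs : 0 ≤ s) (ht : 0 < t) (hst : s + t = 1)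
    (hw : s • y + t • d ∈ openSegment ℝ a b) : y ∈ openSegment ℝ a b := by
  rcases eq_or_combo_mem_openSegment hy hs ht hst with h | h
  · exact absurd (h ▸ hw) (notMem_openSegment hab (left_mem hde))
  · rwa [openSegment_eq_of_sym2_eq (edge_eq_of_mem hab hde hw h)]

theorem IsTriangulation.exists_crossing (htri : G.IsTriangulation) (hgen : NoThreeCollinear G.V)
    {a c : Pt} (ha : a ∈ G.V) (hc : c ∈ G.V) (hac : a ≠ c) (hE : s(a, c) ∉ G.E) :
    ∃ d e x, s(d, e) ∈ G.E ∧ x ∈ openSegment ℝ a c ∧ x ∈ openSegment ℝ d e := by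
  by_contra! hno
  exact htri a ha c hc hac hE (G.valid.insert ha hc hac
    (fun v hv => hgen.notMem_openSegment ha hc hv hac)
    fun d e hde => Set.disjoint_left.2 fun x => hno d e x hde)

variable (G) in
/-- Seen from `a` in the direction of `c`, the first obstacle is the edge `de`, hit at `x`. -/
structure IsFirstHit (a c d e x : Pt) : Prop where
  edge : s(d, e) ∈ G.E
  mem_sight : x ∈ openSegment ℝ a c
  mem_edge : x ∈ openSegment ℝ d e
  before : ∀ f h y, s(f, h) ∈ G.E → y ∈ openSegment ℝ a x → y ∉ openSegment ℝ f h

theorem IsFirstHit.symm {a c d e x : Pt} (h : G.IsFirstHit a c d e x) : G.IsFirstHit a c e d x :=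
  ⟨edge_symm h.edge, h.mem_sight, by rw [openSegment_symm]; exact h.mem_edge, h.before⟩

theorem ne_left_of_crossing (hgen : NoThreeCollinear G.V) {a c d e x : Pt} (ha : a ∈ G.V)
    (hc : c ∈ G.V) (hac : a ≠ c) (hE : s(a, c) ∉ G.E) (hde : s(d, e) ∈ G.E)
    (hx : x ∈ openSegment ℝ a c) (hx' : x ∈ openSegment ℝ d e) : a ≠ d := by
  rintro rfl
  exact hgen.orient_ne_zero_of_crossing ha hc ha (right_mem hde) hac (ne_of_edge hde)
    (fun h => hE (h ▸ hde)) hx hx' (orient_self_left _ _)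

open Classical in
/-- The edges avoiding `a`, as ordered pairs of points. -/
def edgesAvoiding (G : PSLG) (a : Pt) : Finset (Pt × Pt) :=
  (G.V ×ˢ G.V).filter fun q => s(q.1, q.2) ∈ G.E ∧ a ≠ q.1 ∧ a ≠ q.2

theorem mem_edgesAvoiding {a d e : Pt} :
    (d, e) ∈ G.edgesAvoiding a ↔ s(d, e) ∈ G.E ∧ a ≠ d ∧ a ≠ e := by
  simp only [edgesAvoiding, Finset.mem_filter, Finset.mem_product, and_iff_right_iff_imp]
  exact fun h => ⟨left_mem h.1, right_mem h.1⟩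

theorem IsTriangulation.exists_isFirstHit (htri : G.IsTriangulation) (hgen : NoThreeCollinear G.V)
    {a c : Pt} (ha : a ∈ G.V) (hc : c ∈ G.V) (hac : a ≠ c) (hE : s(a, c) ∉ G.E) :
    ∃ d e x, G.IsFirstHit a c d e x := by
  -- Edges at `a` are left out, so that the point of `K` closest to `a` is not `a` itself.
  let K : Set Pt := segment ℝ a c ∩ ⋃ q ∈ G.edgesAvoiding a, segment ℝ q.1 q.2
  have hK : ∀ d e x, s(d, e) ∈ G.E → x ∈ openSegment ℝ a c → x ∈ openSegment ℝ d e → x ∈ K := by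
    intro d e x hde hx hx'
    have hd := ne_left_of_crossing hgen ha hc hac hE hde hx hx'
    have he := ne_left_of_crossing hgen ha hc hac hE (edge_symm hde) hx
      (by rwa [openSegment_symm])
    exact ⟨openSegment_subset_segment ℝ _ _ hx, Set.mem_biUnion
      (mem_edgesAvoiding.2 ⟨hde, hd, he⟩) (openSegment_subset_segment ℝ _ _ hx')⟩
  have hcompact : IsCompact K := (isCompact_segment a c).inter_right
    (isClosed_biUnion_finset fun q _ => (isCompact_segment q.1 q.2).isClosed)
  obtain ⟨d₀, e₀, x₀, hde₀, hx₀, hx₀'⟩ := htri.exists_crossing hgen ha hc hac hE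
  obtain ⟨x, ⟨hxac, hx⟩, hmin⟩ := hcompact.exists_isMinOn ⟨x₀, hK _ _ _ hde₀ hx₀ hx₀'⟩
    (continuous_const.dist continuous_id : Continuous (dist a)).continuousOn
  obtain ⟨⟨d, e⟩, hq, hxde⟩ := Set.mem_iUnion₂.1 hx
  obtain ⟨hde, had, hae⟩ := mem_edgesAvoiding.1 hq
  have hax : a ≠ x := by
    rintro rfl
    exact notMem_openSegment hde ha (mem_openSegment_of_ne_left_right had.symm hae.symm hxde)
  have hcx : c ≠ x := by
    rintro rfl
    exact (dist_lt_of_mem_openSegment hac hx₀).not_ge (hmin (hK _ _ _ hde₀ hx₀ hx₀'))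
  have hsight : x ∈ openSegment ℝ a c := mem_openSegment_of_ne_left_right hax hcx hxac
  have hx_ne : ∀ v ∈ G.V, v ≠ x := fun v hv h =>
    hgen.notMem_openSegment ha hc hv hac (h ▸ hsight)
  refine ⟨d, e, x, hde, hsight, mem_openSegment_of_ne_left_right (hx_ne d (left_mem hde))
    (hx_ne e (right_mem hde)) hxde, fun f h y hfh hy hy' => ?_⟩
  exact (dist_lt_of_mem_openSegment hax hy).not_ge
    (hmin (hK _ _ _ hfh (openSegment_subset_openSegment hsight hy) hy'))

end PSLG

namespace PSLG

variable {G : PSLG}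

namespace IsFirstHit

variable {a c d e x : Pt}

theorem orient_ne_zero (h : G.IsFirstHit a c d e x) (hgen : NoThreeCollinear G.V) (ha : a ∈ G.V)
    (hc : c ∈ G.V) (hac : a ≠ c) (hE : s(a, c) ∉ G.E) : orient a x d ≠ 0 := by
  have hdea := hgen.orient_ne_zero_of_crossing ha hc (left_mem h.edge) (right_mem h.edge) hac
    (ne_of_edge h.edge) (fun hs => hE (hs ▸ h.edge)) h.mem_sight h.mem_edge
  obtain ⟨s, t, -, ht, hst, rfl⟩ := h.mem_edge
  rw [orient_rotate] at hdea
  simp [orient_swap_right a d, orient_combo hst, ht.ne', hdea]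

theorem bary_eq_zero (h : G.IsFirstHit a c d e x) {y : Pt} (hy : y ∈ openSegment ℝ d e) :
    bary a x d y = 0 := by
  obtain ⟨s, t, -, ht, hst, hx⟩ := h.mem_edge
  have he : bary a x d e = 0 := by
    have h0 : bary a x d (s • d + t • e) = 0 := by rw [hx, bary_middle]
    simpa [bary_combo hst, ht.ne'] using h0
  obtain ⟨q, r, -, -, hqr, rfl⟩ := hy
  simp [bary_combo hqr, he]

/-- An edge `fg` cannot leave the triangle `axd` other than through its vertex `d`. -/
theorem not_exits (h : G.IsFirstHit a c d e x) (hgen : NoThreeCollinear G.V) (ha : a ∈ G.V)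
    (hc : c ∈ G.V) (hac : a ≠ c) (hD : orient a x d ≠ 0) {f g y w : Pt} {s t : ℝ}
    (hfg : s(f, g) ∈ G.E) (hy : y ∈ openSegment ℝ f g) (hya : 0 < bary a x d y)
    (hs : 0 ≤ s) (ht : 0 < t) (hst : s + t = 1) (hw : s • y + t • f = w)
    (hwx : 0 < bary x d a w) (hw0 : min (bary d a x w) (bary a x d w) = 0) : False := by
  have hwd : 0 ≤ bary d a x w := hw0 ▸ min_le_left _ _
  rcases (hw0 ▸ min_le_right _ _ : 0 ≤ bary a x d w).eq_or_lt with hwa | hwa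
  · have hwde : w ∈ openSegment ℝ d e := by
      have hsum := bary_add_bary_add_bary hD w
      have hcomb := bary_smul_add_smul_add_smul hD w
      rw [← hwa, zero_smul, zero_add] at hcomb
      rw [← hcomb]
      exact combo_mem_openSegment h.mem_edge hwx hwd (by linarith)
    exact hya.ne' (h.bary_eq_zero
      (mem_openSegment_of_combo_mem h.edge hfg hy hs ht hst (hw ▸ hwde)))
  · have hwd0 : bary d a x w = 0 :=
      ((min_eq_iff.1 hw0).resolve_right fun hmin => hwa.ne' hmin.1).1
    have hwax : w ∈ openSegment ℝ a x :=
      mem_openSegment_of_bary (by rwa [← orient_rotate]) hwd0 hwa hwx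
    rcases eq_or_combo_mem_openSegment hy hs ht hst with hwf | hwf
    · exact hgen.notMem_openSegment ha hc (left_mem hfg) hac
        (openSegment_subset_openSegment h.mem_sight (hwf ▸ hw ▸ hwax))
    · exact h.before f g w hfg hwax (hw ▸ hwf)

/-- A vertex `p` of the triangle `axd` with the smallest angle to `ax` is visible from `a`: an edge
blocking `ap` would have to end inside the triangle at a smaller angle. -/
theorem not_blocked (h : G.IsFirstHit a c d e x) (hgen : NoThreeCollinear G.V) (ha : a ∈ G.V)
    (hc : c ∈ G.V) (hac : a ≠ c) (hD : orient a x d ≠ 0) {p : Pt} (hpx : 0 ≤ bary x d a p)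
    (hpd : 0 < bary d a x p) (hpa : 0 ≤ bary a x d p)
    (hmax : ∀ v ∈ G.V, 0 ≤ bary x d a v → 0 < bary d a x v → 0 ≤ bary a x d v →
      bary x d a v * bary d a x p ≤ bary x d a p * bary d a x v)
    {f g y : Pt} (hfg : s(f, g) ∈ G.E) (hy : y ∈ openSegment ℝ a p) (hy' : y ∈ openSegment ℝ f g)
    (hf : bary x d a p * bary d a x f < bary x d a f * bary d a x p) : False := by
  obtain ⟨q, r, hq, hr, hqr, rfl⟩ := hy
  set y := q • a + r • p with hydef
  have hyx : bary x d a y = r * bary x d a p := by simp [y, bary_combo hqr]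
  have hyd : bary d a x y = r * bary d a x p := by simp [y, bary_combo hqr]
  have hya : 0 < bary a x d y := by
    rw [hydef, bary_combo hqr, bary_left hD]; positivity
  have hyF : 0 < min (bary d a x y) (bary a x d y) := lt_min (by rw [hyd]; positivity) hya
  have hcont : Continuous fun z => min (bary d a x z) (bary a x d z) :=
    (continuous_bary d a x).min (continuous_bary a x d)
  rcases lt_or_ge 0 (min (bary d a x f) (bary a x d f)) with hF | hF
  · obtain ⟨hfd, hfa⟩ := lt_min_iff.1 hF
    have hfx : 0 < bary x d a f := by nlinarith
    exact (hmax f (left_mem hfg) hfx.le hfd hfa.le).not_gt hf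
  · obtain ⟨s, t, hs, ht, hst, hw0⟩ := exists_combo_eq_zero hcont hyF hF
    refine h.not_exits hgen ha hc hac hD hfg hy' hya hs ht hst rfl ?_ hw0
    have hwd : 0 ≤ bary d a x (s • y + t • f) := hw0 ▸ min_le_left _ _
    have hwx : bary x d a p * bary d a x (s • y + t • f) <
        bary x d a (s • y + t • f) * bary d a x p := by
      rw [bary_combo hst, bary_combo hst, hyx, hyd]
      linarith [mul_lt_mul_of_pos_left hf ht]
    nlinarith

theorem exists_adj (h : G.IsFirstHit a c d e x) (htri : G.IsTriangulation)
    (hgen : NoThreeCollinear G.V) (ha : a ∈ G.V) (hc : c ∈ G.V) (hac : a ≠ c)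
    (hE : s(a, c) ∉ G.E) : ∃ p, s(a, p) ∈ G.E ∧ 0 ≤ bary x d a p ∧ 0 < bary d a x p := by
  have hD := h.orient_ne_zero hgen ha hc hac hE
  have hdd : bary d a x d = 1 := bary_left (by rwa [orient_rotate, orient_rotate])
  obtain ⟨p, hp, hmax⟩ := (G.V.filter fun v =>
      0 ≤ bary x d a v ∧ 0 < bary d a x v ∧ 0 ≤ bary a x d v).exists_max_image
    (fun v => bary x d a v / bary d a x v)
    ⟨d, Finset.mem_filter.2 ⟨left_mem h.edge, by simp [hdd]⟩⟩
  obtain ⟨hpV, hpx, hpd, hpa⟩ := Finset.mem_filter.1 hp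
  refine ⟨p, ?_, hpx, hpd⟩
  by_contra hap
  have hap' : a ≠ p := by rintro rfl; simp at hpd
  have hmax' : ∀ v ∈ G.V, 0 ≤ bary x d a v → 0 < bary d a x v → 0 ≤ bary a x d v →
      bary x d a v * bary d a x p ≤ bary x d a p * bary d a x v := fun v hv h1 h2 h3 =>
    (div_le_div_iff₀ h2 hpd).1 (hmax v (Finset.mem_filter.2 ⟨hv, h1, h2, h3⟩))
  obtain ⟨f, g, y, hfg, hy, hy'⟩ := htri.exists_crossing hgen ha hpV hap' hap
  have hC : ∀ z, orient a p z = orient a x d *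
      (bary x d a p * bary d a x z - bary d a x p * bary x d a z) := orient_eq_mul_bary hD p
  have hf : orient a p f ≠ 0 := hgen.orient_ne_zero_of_crossing (left_mem hfg) (right_mem hfg) ha
    hpV (ne_of_edge hfg) hap' (fun hs => hap (hs ▸ hfg)) hy' hy
  have hf0 : bary x d a p * bary d a x f - bary d a x p * bary x d a f ≠ 0 :=
    right_ne_zero_of_mul (hC f ▸ hf)
  have hblock : ∀ f g, s(f, g) ∈ G.E → y ∈ openSegment ℝ f g →
      ¬ bary x d a p * bary d a x f < bary x d a f * bary d a x p := fun f g hfg hy' =>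
    h.not_blocked hgen ha hc hac hD hpx hpd hpa hmax' hfg hy hy'
  rcases lt_or_gt_of_ne hf0 with hf0 | hf0
  · exact hblock f g hfg hy' (by linarith)
  · refine hblock g f (edge_symm hfg) (by rwa [openSegment_symm]) ?_
    have hy0 := hC y
    rw [orient_eq_zero_of_mem_openSegment hy, eq_comm, mul_eq_zero, or_iff_right hD] at hy0
    obtain ⟨s, t, hs, ht, hst, rfl⟩ := hy'
    rw [bary_combo hst, bary_combo hst] at hy0
    nlinarith

end IsFirstHit

theorem IsTriangulation.exists_adj_lt (htri : G.IsTriangulation) (hgen : NoThreeCollinear G.V)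
    {a c : Pt} (ha : a ∈ G.V) (hc : c ∈ G.V) (ℓ : Pt →ₗ[ℝ] ℝ) (hℓ : ℓ a < ℓ c) :
    ∃ p, s(a, p) ∈ G.E ∧ ℓ a < ℓ p := by
  by_cases hE : s(a, c) ∈ G.E
  · exact ⟨c, hE, hℓ⟩
  have hac : a ≠ c := by rintro rfl; exact hℓ.false
  obtain ⟨d, e, x, h⟩ := htri.exists_isFirstHit hgen ha hc hac hE
  have hx : ℓ a < ℓ x := by
    obtain ⟨s, t, hs, ht, hst, rfl⟩ := h.mem_sight
    simp only [map_add, map_smul, smul_eq_mul]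
    obtain rfl : s = 1 - t := by linarith
    nlinarith
  wlog hd : ℓ a < ℓ d generalizing d e
  · refine this e d h.symm ?_
    obtain ⟨s, t, hs, ht, hst, rfl⟩ := h.mem_edge
    obtain rfl : t = 1 - s := by linarith
    simp only [map_add, map_smul, smul_eq_mul] at hx
    nlinarith
  obtain ⟨p, hap, hpx, hpd⟩ := h.exists_adj htri hgen ha hc hac hE
  refine ⟨p, hap, ?_⟩
  have hD := h.orient_ne_zero hgen ha hc hac hE
  have hp := congrArg ℓ (bary_smul_add_smul_add_smul hD p)
  have hsum := bary_add_bary_add_bary hD p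
  simp only [map_add, map_smul, smul_eq_mul] at hp
  have hdiff : ℓ p - ℓ a = bary x d a p * (ℓ x - ℓ a) + bary d a x p * (ℓ d - ℓ a) := by
    linear_combination ℓ a * hsum - hp
  linarith [mul_pos hpd (sub_pos.2 hd), mul_nonneg hpx (sub_pos.2 hx).le]

end PSLG

/-! ### Faces -/

namespace PSLG

variable {G : PSLG} {a b c : Pt}

variable (G) in
/-- The triangle `abc` is a counterclockwise bounded face of the graph. -/
structure IsFace (a b c : Pt) : Prop where
  edge₁₂ : s(a, b) ∈ G.E
  edge₂₃ : s(b, c) ∈ G.E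
  edge₃₁ : s(c, a) ∈ G.E
  pos : 0 < orient a b c
  empty : ∀ x ∈ G.V, ¬(0 < bary a b c x ∧ 0 < bary b c a x ∧ 0 < bary c a b x)

theorem IsFace.rotate (h : G.IsFace a b c) : G.IsFace b c a :=
  ⟨h.edge₂₃, h.edge₃₁, h.edge₁₂, orient_rotate a b c ▸ h.pos,
    fun x hx hx' => h.empty x hx ⟨hx'.2.2, hx'.1, hx'.2.1⟩⟩

theorem IsFace.ne₁₂ (h : G.IsFace a b c) : a ≠ b := ne_of_edge h.edge₁₂

theorem IsFace.ne₂₃ (h : G.IsFace a b c) : b ≠ c := ne_of_edge h.edge₂₃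

theorem IsFace.ne₃₁ (h : G.IsFace a b c) : c ≠ a := ne_of_edge h.edge₃₁

theorem IsFace.mem (h : G.IsFace a b c) : a ∈ G.V := left_mem h.edge₁₂

/-- The edges `ab` and `ac` bound a corner that contains no further neighbour of `a`. -/
structure IsEmptyCorner (G : PSLG) (a b c : Pt) : Prop where
  edge_left : s(a, b) ∈ G.E
  edge_right : s(a, c) ∈ G.E
  orient_ne_zero : orient a b c ≠ 0
  not_adj : ∀ p, s(a, p) ∈ G.E → ¬(0 < bary b c a p ∧ 0 < bary c a b p)

namespace IsEmptyCorner

theorem swap (h : G.IsEmptyCorner a b c) : G.IsEmptyCorner a c b where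
  edge_left := h.edge_right
  edge_right := h.edge_left
  orient_ne_zero := by rw [orient_swap_right]; exact neg_ne_zero.2 h.orient_ne_zero
  not_adj p hp hp' := h.not_adj p hp (by rwa [bary_swap, bary_swap c, and_comm])

theorem not_exits (h : G.IsEmptyCorner a b c) {d e y : Pt} {s t : ℝ} (hde : s(d, e) ∈ G.E)
    (hy : y ∈ openSegment ℝ d e) (hyb : 0 < bary b c a y) (hyc : 0 < bary c a b y)
    (hs : 0 ≤ s) (ht : 0 < t) (hst : s + t = 1) (ha : 0 < bary a b c (s • y + t • d))
    (hb : bary b c a (s • y + t • d) = 0) : ¬ 0 ≤ bary c a b (s • y + t • d) := by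
  intro hc
  rcases hc.eq_or_lt with hc | hc
  · have hw := eq_of_bary h.orient_ne_zero hb hc.symm
    obtain rfl := eq_of_combo_eq_vertex hde (left_mem h.edge_left) hy hs ht hst hw
    obtain ⟨q, r, -, hr, hqr, rfl⟩ := hy
    refine h.not_adj e hde ⟨?_, ?_⟩
    · simpa [bary_combo hqr, hr] using hyb
    · simpa [bary_combo hqr, hr] using hyc
  · have hw := mem_openSegment_of_bary (by rw [orient_rotate]; exact h.orient_ne_zero) hb hc ha
    rw [openSegment_symm] at hw
    have hy' := mem_openSegment_of_combo_mem h.edge_right hde hy hs ht hst hw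
    rw [openSegment_symm] at hy'
    exact hyb.ne' (bary_eq_zero_of_mem_openSegment hy')

theorem endpoint_mem (h : G.IsEmptyCorner a b c) {d e y : Pt} (hde : s(d, e) ∈ G.E)
    (hy : y ∈ openSegment ℝ d e) (hya : 0 ≤ bary a b c y) (hyb : 0 < bary b c a y)
    (hyc : 0 < bary c a b y) (hda : 0 < bary a b c d) : 0 < bary b c a d ∧ 0 < bary c a b d := by
  by_contra hd
  rw [← lt_min_iff, not_lt] at hd
  obtain ⟨s, t, hs, ht, hst, hw⟩ := exists_combo_eq_zero
    ((continuous_bary b c a).min (continuous_bary c a b)) (lt_min hyb hyc) hd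
  have ha : 0 < bary a b c (s • y + t • d) := by rw [bary_combo hst]; positivity
  rcases min_eq_iff.1 hw with ⟨h0, hle⟩ | ⟨h0, hle⟩
  · exact h.not_exits hde hy hyb hyc hs ht hst ha h0 (h0 ▸ hle)
  · refine h.swap.not_exits hde hy ?_ ?_ hs ht hst ?_ ?_ ?_ <;> rw [bary_swap]
    exacts [hyc, hyb, ha, h0, h0 ▸ hle]

theorem empty (h : G.IsEmptyCorner a b c) (htri : G.IsTriangulation)
    (hgen : NoThreeCollinear G.V) :
    ∀ x ∈ G.V, ¬(0 < bary a b c x ∧ 0 < bary b c a x ∧ 0 < bary c a b x) := by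
  intro x₀ hx₀ hx₀'
  obtain ⟨x, hx, hmax⟩ := (G.V.filter fun x =>
      0 < bary a b c x ∧ 0 < bary b c a x ∧ 0 < bary c a b x).exists_max_image
    (bary a b c) ⟨x₀, Finset.mem_filter.2 ⟨hx₀, hx₀'⟩⟩
  obtain ⟨hxV, hxa, hxb, hxc⟩ := Finset.mem_filter.1 hx
  have hax : a ≠ x := by rintro rfl; simp at hxb
  obtain ⟨d, e, y, hde, hy, hy'⟩ := htri.exists_crossing hgen (left_mem h.edge_left) hxV hax
    fun hE => h.not_adj x hE ⟨hxb, hxc⟩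
  obtain ⟨q, r, hq, hr, hqr, rfl⟩ := hy
  have hlt : bary a b c x < 1 := by linarith [bary_add_bary_add_bary h.orient_ne_zero x]
  have hya : bary a b c x < bary a b c (q • a + r • x) := by
    rw [bary_combo hqr, bary_left h.orient_ne_zero]
    obtain rfl : r = 1 - q := by linarith
    linarith [mul_pos hq (sub_pos.2 hlt)]
  wlog hd : bary a b c (q • a + r • x) ≤ bary a b c d generalizing d e
  · refine this e d (edge_symm hde) (by rwa [openSegment_symm]) ?_
    obtain ⟨s, t, hs, ht, hst, hy⟩ := hy'
    rw [← hy, bary_combo hst] at hd ⊢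
    obtain rfl : t = 1 - s := by linarith
    nlinarith
  have hd' := h.endpoint_mem hde hy' (hxa.trans hya).le (by simp [bary_combo hqr, hr, hxb])
    (by simp [bary_combo hqr, hr, hxc]) (by linarith)
  exact (hya.trans_le hd).not_ge
    (hmax d (Finset.mem_filter.2 ⟨left_mem hde, by linarith, hd'⟩))

theorem edge (h : G.IsEmptyCorner a b c) (htri : G.IsTriangulation)
    (hgen : NoThreeCollinear G.V) : s(b, c) ∈ G.E := by
  by_contra hE
  have hb := right_mem h.edge_left
  have hc := right_mem h.edge_right
  have hbc : b ≠ c := by rintro rfl; exact h.orient_ne_zero (orient_self_right _ _)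
  obtain ⟨d, e, y, hde, hy, hy'⟩ := htri.exists_crossing hgen hb hc hbc hE
  have hya := bary_eq_zero_of_mem_openSegment (a := a) hy
  wlog hd : 0 < bary a b c d generalizing d e
  · refine this e d (edge_symm hde) (by rwa [openSegment_symm]) ?_
    have hd0 : bary a b c d ≠ 0 := div_ne_zero (hgen.orient_ne_zero_of_crossing (left_mem hde)
      (right_mem hde) hb hc (ne_of_edge hde) hbc (fun hs => hE (hs ▸ hde)) hy' hy)
      h.orient_ne_zero
    obtain ⟨s, t, hs, ht, hst, rfl⟩ := hy'
    rw [bary_combo hst] at hya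
    nlinarith [lt_of_le_of_ne (not_lt.1 hd) hd0]
  obtain ⟨s, t, hs, ht, hst, rfl⟩ := hy
  have hb1 : bary b c a b = 1 := bary_left (by rw [orient_rotate]; exact h.orient_ne_zero)
  have hc1 : bary c a b c = 1 := bary_left (by rw [← orient_rotate]; exact h.orient_ne_zero)
  exact h.empty htri hgen d (left_mem hde) ⟨hd, h.endpoint_mem hde hy' hya.ge
    (by simpa [bary_combo hst, hb1]) (by simpa [bary_combo hst, hc1]) hd⟩

theorem isFace (h : G.IsEmptyCorner a b c) (htri : G.IsTriangulation)
    (hgen : NoThreeCollinear G.V) (hpos : 0 < orient a b c) : G.IsFace a b c :=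
  ⟨h.edge_left, h.edge htri hgen, edge_symm h.edge_right, hpos, h.empty htri hgen⟩

end IsEmptyCorner

theorem IsFace.not_adj_inside (h : G.IsFace a b c) {x : Pt} (hx : s(a, x) ∈ G.E) :
    ¬(0 < orient a b x ∧ 0 < orient a x c) := by
  rintro ⟨hxc, hxb⟩
  rw [orient_rotate] at hxb
  have hxc : 0 < bary c a b x := (bary_pos_iff h.rotate.rotate.pos).2 hxc
  have hxb : 0 < bary b c a x := (bary_pos_iff h.rotate.pos).2 hxb
  rcases lt_or_ge 0 (bary a b c x) with hxa | hxa
  · exact h.empty x (right_mem hx) ⟨hxa, hxb, hxc⟩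
  have haa : 0 < bary a b c a := by simp [bary_left h.pos.ne']
  obtain ⟨s, t, hs, ht, hst, hw⟩ := exists_combo_eq_zero (continuous_bary a b c) haa hxa
  have hbc : s • a + t • x ∈ openSegment ℝ b c := by
    refine mem_openSegment_of_bary h.pos.ne' hw ?_ ?_ <;> simp [bary_combo hst, ht, hxb, hxc]
  rcases hs.eq_or_lt with rfl | hs
  · obtain rfl : t = 1 := by linarith
    exact notMem_openSegment h.edge₂₃ (right_mem hx) (by simpa using hbc)
  · have heq := edge_eq_of_mem hx h.edge₂₃ ⟨s, t, hs, ht, hst, rfl⟩ hbc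
    rcases Sym2.eq_iff.1 heq with ⟨hab, -⟩ | ⟨hac, -⟩
    exacts [h.ne₁₂ hab, h.ne₃₁ hac.symm]

theorem IsFace.apex_unique (hgen : NoThreeCollinear G.V) {d : Pt} (h : G.IsFace a b c)
    (h' : G.IsFace a b d) : c = d := by
  by_contra hne
  have h0 : orient a c d ≠ 0 := hgen.orient_ne_zero h.mem h.rotate.rotate.mem h'.rotate.rotate.mem
    h.ne₃₁.symm h'.ne₃₁.symm hne
  rcases lt_or_gt_of_ne h0 with hlt | hgt
  · refine h.not_adj_inside (edge_symm h'.edge₃₁) ⟨h'.pos, ?_⟩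
    rw [orient_swap_right]; linarith
  · exact h'.not_adj_inside (edge_symm h.edge₃₁) ⟨h.pos, hgt⟩

end PSLG

theorem map_sub_mul_orient (ℓ : Pt →ₗ[ℝ] ℝ) (a p q r : Pt) :
    ℓ (p - a) * orient a q r + ℓ (q - a) * orient a r p + ℓ (r - a) * orient a p q = 0 := by
  have h : orient a q r • (p - a) + orient a r p • (q - a) + orient a p q • (r - a) = 0 := by
    ext <;> simp only [orient, crossp, Prod.fst_add, Prod.snd_add, Prod.smul_fst, Prod.smul_snd,
      Prod.fst_sub, Prod.snd_sub, smul_eq_mul, Prod.fst_zero, Prod.snd_zero] <;> ring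
  simpa only [map_add, map_smul, smul_eq_mul, map_zero, mul_comm] using congrArg ℓ h

theorem exists_forall_orient_nonpos {s : Finset Pt} (hs : s.Nonempty) {a : Pt} (ℓ : Pt →ₗ[ℝ] ℝ)
    (h : ∀ p ∈ s, ℓ a < ℓ p) : ∃ p ∈ s, ∀ q ∈ s, orient a p q ≤ 0 := by
  have h' : ∀ p ∈ s, 0 < ℓ (p - a) := fun p hp => by rw [map_sub]; exact sub_pos.2 (h p hp)
  clear h
  induction hs using Finset.Nonempty.cons_induction with
  | singleton p => exact ⟨p, by simp⟩
  | cons r s hr _ ih =>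
    rw [Finset.forall_mem_cons] at h'
    obtain ⟨p, hp, hmax⟩ := ih h'.2
    rcases le_or_gt (orient a p r) 0 with hpr | hpr
    · exact ⟨p, Finset.mem_cons_of_mem hp, (Finset.forall_mem_cons hr _).2 ⟨hpr, hmax⟩⟩
    · refine ⟨r, Finset.mem_cons_self r s,
        (Finset.forall_mem_cons hr _).2 ⟨by simp, fun q hq => ?_⟩⟩
      have hplucker := map_sub_mul_orient ℓ a p q r
      rw [orient_swap_right a r q, orient_swap_right a p r] at hplucker
      by_contra! hrq
      nlinarith [mul_pos (h'.2 q hq) hpr, mul_pos (h'.2 p hp) hrq,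
        mul_nonneg h'.1.le (neg_nonneg.2 (hmax q hq))]

/-- The cross product with `u` as a linear functional. -/
def crossLinear (u : Pt) : Pt →ₗ[ℝ] ℝ where
  toFun := crossp u
  map_add' z w := by simp only [crossp, Prod.fst_add, Prod.snd_add]; ring
  map_smul' t z := by
    simp only [crossp, Prod.smul_fst, Prod.smul_snd, smul_eq_mul, RingHom.id_apply]; ring

theorem crossLinear_sub_crossLinear (a b z w : Pt) :
    crossLinear (b - a) z - crossLinear (b - a) w = orient a b z - orient a b w := by
  simp only [crossLinear, LinearMap.coe_mk, AddHom.coe_mk, orient, crossp, Prod.fst_sub,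
    Prod.snd_sub]
  ring

theorem crossLinear_lt_iff {a b z : Pt} :
    crossLinear (b - a) b < crossLinear (b - a) z ↔ 0 < orient a b z := by
  rw [← sub_pos, crossLinear_sub_crossLinear, orient_self_right, sub_zero]

namespace PSLG

variable {G : PSLG} {a b c : Pt}

theorem IsTriangulation.exists_isFace (htri : G.IsTriangulation) (hgen : NoThreeCollinear G.V)
    (hab : s(a, b) ∈ G.E) (hc : c ∈ G.V) (hpos : 0 < orient a b c) : ∃ q, G.IsFace a b q := by
  classical
  obtain ⟨p, hbp, hp⟩ := htri.exists_adj_lt hgen (right_mem hab) hc (crossLinear (b - a))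
    (crossLinear_lt_iff.2 hpos)
  obtain ⟨q, hq, hlast⟩ := exists_forall_orient_nonpos (a := b)
    (s := G.V.filter fun x => s(b, x) ∈ G.E ∧ 0 < orient a b x)
    ⟨p, Finset.mem_filter.2 ⟨right_mem hbp, hbp, crossLinear_lt_iff.1 hp⟩⟩ (crossLinear (b - a))
    fun x hx => crossLinear_lt_iff.2 (Finset.mem_filter.1 hx).2.2
  obtain ⟨-, hbq, hpos'⟩ := Finset.mem_filter.1 hq
  have hbqa : 0 < orient b q a := by rwa [orient_rotate]
  have hcorner : G.IsEmptyCorner b q a := ⟨hbq, edge_symm hab, hbqa.ne', fun x hx hx' => by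
    rw [bary_pos_iff (by rwa [orient_rotate]), bary_pos_iff hpos'] at hx'
    exact (hlast x (Finset.mem_filter.2 ⟨right_mem hx, hx, hx'.1⟩)).not_gt hx'.2⟩
  exact ⟨q, (hcorner.isFace htri hgen hbqa).rotate.rotate⟩

end PSLG

/-! ### Middle vertices -/

theorem notMem_interior_convexHull {E : Type*} [AddCommGroup E] [Module ℝ E] [TopologicalSpace E]
    [ContinuousAdd E] [ContinuousSMul ℝ E] {S : Set E} {v : E} {ℓ : E →ₗ[ℝ] ℝ} (hℓ : ℓ ≠ 0)
    (h : ∀ x ∈ S, ℓ x ≤ ℓ v) : v ∉ interior (convexHull ℝ S) := by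
  intro hv
  obtain ⟨u, hu⟩ := LinearMap.surjective hℓ 1
  have hcont : ContinuousAt (fun t : ℝ => v + t • u) 0 := by fun_prop
  have hev : ∀ᶠ t : ℝ in 𝓝[>] 0, v + t • u ∈ convexHull ℝ S :=
    (hcont.eventually (by simpa using mem_interior_iff_mem_nhds.1 hv)).filter_mono
      nhdsWithin_le_nhds
  obtain ⟨t, ht, ht0 : 0 < t⟩ := (hev.and self_mem_nhdsWithin).exists
  have hle : ℓ (v + t • u) ≤ ℓ v := convexHull_min h (convex_halfSpace_le ℓ.isLinear _) ht
  rw [map_add, map_smul, hu, smul_eq_mul] at hle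
  linarith

theorem crossLinear_ne_zero {u : Pt} (hu : u ≠ 0) : crossLinear u ≠ 0 := by
  intro h
  have h₁ : crossp u (0, 1) = 0 := LinearMap.congr_fun h (0, 1)
  have h₂ : crossp u (1, 0) = 0 := LinearMap.congr_fun h (1, 0)
  simp only [crossp, mul_one, mul_zero, sub_zero, zero_sub, neg_eq_zero] at h₁ h₂
  exact hu (Prod.ext h₁ h₂)

theorem notMem_interior_of_orient_nonpos {S : Set Pt} {a b v : Pt} (hab : a ≠ b)
    (hv : orient a b v = 0) (h : ∀ x ∈ S, orient a b x ≤ 0) : v ∉ interior (convexHull ℝ S) := by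
  refine notMem_interior_convexHull (crossLinear_ne_zero (sub_ne_zero.2 hab.symm)) fun x hx => ?_
  linarith [crossLinear_sub_crossLinear a b x v, h x hx]

theorem orient_add_orient_add_orient (x a b c : Pt) :
    orient x a b + orient x b c + orient x c a = orient a b c := by
  simp only [orient, crossp, Prod.fst_sub, Prod.snd_sub]; ring

theorem mem_convexHull_of_bary_pos {a b c x : Pt} (h : orient a b c ≠ 0) (ha : 0 < bary a b c x)
    (hb : 0 < bary b c a x) (hc : 0 < bary c a b x) : x ∈ convexHull ℝ {a, b, c} := by
  suffices ∑ i, ![bary a b c x, bary b c a x, bary c a b x] i • ![a, b, c] i ∈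
      convexHull ℝ {a, b, c} by
    rw [Fin.sum_univ_three] at this
    exact bary_smul_add_smul_add_smul h x ▸ this
  refine (convex_convexHull ℝ _).sum_mem (fun i _ => ?_) ?_ fun i _ => subset_convexHull ℝ _ ?_
  · fin_cases i
    exacts [ha.le, hb.le, hc.le]
  · rw [Fin.sum_univ_three]
    exact bary_add_bary_add_bary h x
  · fin_cases i <;> simp

theorem mem_interior_convexHull_of_orient_pos {a b c x : Pt} (hab : 0 < orient x a b)
    (hbc : 0 < orient x b c) (hca : 0 < orient x c a) :
    x ∈ interior (convexHull ℝ {a, b, c}) := by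
  have habc : 0 < orient a b c := by rw [← orient_add_orient_add_orient x]; positivity
  refine mem_interior.2 ⟨{y | 0 < orient b c y ∧ 0 < orient c a y ∧ 0 < orient a b y},
    fun y ⟨ha, hb, hc⟩ => ?_, ?_, ?_⟩
  · refine mem_convexHull_of_bary_pos habc.ne' ((bary_pos_iff habc).2 ha) ?_ ?_
    · exact (bary_pos_iff (by rwa [orient_rotate])).2 hb
    · exact (bary_pos_iff (by rwa [← orient_rotate])).2 hc
  · exact (isOpen_lt continuous_const (continuous_orient b c)).inter
      ((isOpen_lt continuous_const (continuous_orient c a)).inter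
        (isOpen_lt continuous_const (continuous_orient a b)))
  · exact ⟨orient_rotate x b c ▸ hbc, orient_rotate x c a ▸ hca, orient_rotate x a b ▸ hab⟩

theorem exists_injOn_linearMap {S : Set Pt} (hS : S.Finite) :
    ∃ ℓ : Pt →ₗ[ℝ] ℝ, Set.InjOn ℓ S := by
  obtain ⟨t, ht⟩ := (hS.image2 (fun x y : Pt => (y.1 - x.1) / (x.2 - y.2)) hS).exists_notMem
  refine ⟨LinearMap.fst ℝ ℝ ℝ + t • LinearMap.snd ℝ ℝ ℝ, fun x hx y hy hxy => ?_⟩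
  simp only [LinearMap.add_apply, LinearMap.smul_apply, LinearMap.fst_apply, LinearMap.snd_apply,
    smul_eq_mul] at hxy
  by_cases h : x.2 = y.2
  · exact Prod.ext (by simpa [h] using hxy) h
  · refine absurd ⟨x, hx, y, hy, ?_⟩ ht
    rw [div_eq_iff (sub_ne_zero.2 h)]
    linarith

namespace PSLG

variable {G : PSLG} {ℓ : Pt →ₗ[ℝ] ℝ} {v : Pt}

variable (G) in
/-- The face `vpq` has its middle vertex with respect to `ℓ` at `v` and lies immediately to the left
of `v` (when `ℓ` is the height). The faces immediately to the right are the left faces of `-ℓ`. -/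
structure IsLeftFace (ℓ : Pt →ₗ[ℝ] ℝ) (v p q : Pt) : Prop where
  isFace : G.IsFace v p q
  lt_mid : ℓ q < ℓ v
  mid_lt : ℓ v < ℓ p

theorem IsTriangulation.exists_isLeftFace (htri : G.IsTriangulation)
    (hgen : NoThreeCollinear G.V) (hℓ : Set.InjOn ℓ G.V) {x : Pt} (hv : v ∈ G.V) (hx : x ∈ G.V)
    (hvx : ℓ v < ℓ x) :
    (∃ p q, G.IsLeftFace ℓ v p q) ∨ ∃ p ∈ G.V, ℓ v < ℓ p ∧ ∀ c ∈ G.V, orient v p c ≤ 0 := by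
  classical
  obtain ⟨r, hvr, hr⟩ := htri.exists_adj_lt hgen hv hx ℓ hvx
  obtain ⟨p, hp, hlast⟩ := exists_forall_orient_nonpos (a := v)
    (s := G.V.filter fun y => s(v, y) ∈ G.E ∧ ℓ v < ℓ y)
    ⟨r, Finset.mem_filter.2 ⟨right_mem hvr, hvr, hr⟩⟩ ℓ fun y hy => (Finset.mem_filter.1 hy).2.2
  obtain ⟨hpV, hvp, hlp⟩ := Finset.mem_filter.1 hp
  by_cases! h : ∃ c ∈ G.V, 0 < orient v p c
  · obtain ⟨c, hc, hpos⟩ := h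
    obtain ⟨q, hq⟩ := htri.exists_isFace hgen hvp hc hpos
    have hqV := hq.rotate.rotate.mem
    refine Or.inl ⟨p, q, hq, lt_of_le_of_ne (not_lt.1 fun hlt => ?_) fun he => ?_, hlp⟩
    · exact hq.pos.not_ge (hlast q (Finset.mem_filter.2 ⟨hqV, edge_symm hq.edge₃₁, hlt⟩))
    · exact hq.ne₃₁ (hℓ hqV hv he)
  · exact Or.inr ⟨p, hpV, hlp, h⟩

theorem IsTriangulation.exists_isLeftFace_of_mem_interior (htri : G.IsTriangulation)
    (hgen : NoThreeCollinear G.V) (hℓ0 : ℓ ≠ 0) (hℓ : Set.InjOn ℓ G.V) (hv : v ∈ G.V)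
    (hvint : v ∈ interior (convexHull ℝ (G.V : Set Pt))) : ∃ p q, G.IsLeftFace ℓ v p q := by
  obtain ⟨x, hx, hvx⟩ : ∃ x ∈ G.V, ℓ v < ℓ x := by
    by_contra! hmax
    exact notMem_interior_convexHull hℓ0 hmax hvint
  refine (htri.exists_isLeftFace hgen hℓ hv hx hvx).resolve_right ?_
  rintro ⟨p, -, hp, hle⟩
  exact notMem_interior_of_orient_nonpos (by rintro rfl; exact hp.false) (orient_self_left v p)
    hle hvint

theorem IsTriangulation.isMax_or_isMin (htri : G.IsTriangulation) (hgen : NoThreeCollinear G.V)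
    (hℓ : Set.InjOn ℓ G.V) (hv : v ∈ G.V) (hup : ¬∃ p q, G.IsLeftFace ℓ v p q)
    (hdown : ¬∃ p q, G.IsLeftFace (-ℓ) v p q) :
    (∀ x ∈ G.V, ℓ x ≤ ℓ v) ∨ ∀ x ∈ G.V, ℓ v ≤ ℓ x := by
  by_contra! hcon
  obtain ⟨⟨x, hx, hvx⟩, y, hy, hyv⟩ := hcon
  obtain ⟨p, hp, hvp, hple⟩ := (htri.exists_isLeftFace hgen hℓ hv hx hvx).resolve_left hup
  obtain ⟨q, hq, hqv, hqle⟩ := (htri.exists_isLeftFace hgen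
    (neg_injective.comp_injOn hℓ) hv hy (neg_lt_neg hyv)).resolve_left hdown
  have hqv : ℓ q < ℓ v := by simpa using hqv
  have hpq : orient v p q = 0 :=
    (hple q hq).antisymm (by rw [orient_swap_right]; exact neg_nonneg.2 (hqle p hp))
  rcases hgen.eq_or_eq hv hp hq (by rintro rfl; exact hvp.false) hpq with rfl | rfl
  exacts [hqv.false, hvp.not_gt hqv]

end PSLG

/-! ### Cycles and their edge sets -/

theorem mem_cyclePairs_iff {L : List Pt} (hL : L.Nodup) {p : Pt × Pt} :
    p ∈ cyclePairs L ↔ p.1 ∈ L ∧ p.2 = L.formPerm p.1 := by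
  have hlen : (cyclePairs L).length = L.length := by simp [cyclePairs]
  have hget (i : ℕ) (hi : i < L.length) :
      (cyclePairs L)[i]'(hlen ▸ hi) = (L[i], L.formPerm L[i]) := by
    simp [cyclePairs, List.getElem_rotate, List.formPerm_apply_getElem L hL]
  constructor
  · intro hp
    obtain ⟨i, hi, rfl⟩ := List.mem_iff_getElem.1 hp
    rw [hget i (hlen ▸ hi)]
    exact ⟨List.getElem_mem _, rfl⟩
  · rintro ⟨hp, hp'⟩
    obtain ⟨i, hi, hp⟩ := List.mem_iff_getElem.1 hp
    refine List.mem_iff_getElem.2 ⟨i, hlen ▸ hi, ?_⟩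
    rw [hget i hi, hp, ← hp']

theorem mem_cycleEdgeSet_iff {L : List Pt} (hL : L.Nodup) {x y : Pt} :
    s(x, y) ∈ cycleEdgeSet L ↔
      x ∈ L ∧ y = L.formPerm x ∨ y ∈ L ∧ x = L.formPerm y := by
  simp only [cycleEdgeSet, List.mem_toFinset, List.mem_map, mem_cyclePairs_iff hL, Prod.exists,
    Sym2.eq_iff]
  aesop

theorem exists_mem_cycleEdgeSet_iff_mem {L : List Pt} (hL : L.Nodup) {x : Pt} :
    (∃ y, s(x, y) ∈ cycleEdgeSet L) ↔ x ∈ L := by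
  simp only [mem_cycleEdgeSet_iff hL]
  refine ⟨?_, fun hx => ⟨_, .inl ⟨hx, rfl⟩⟩⟩
  rintro ⟨y, ⟨hx, -⟩ | ⟨hy, rfl⟩⟩
  exacts [hx, List.formPerm_apply_mem_of_mem hy]

theorem eq_or_eq_inv_of_isCycle {α : Type*} {σ τ : Equiv.Perm α} (hσ : σ.IsCycle)
    (h : ∀ x, τ x = σ x ∨ τ x = σ⁻¹ x) (hτ : ∀ x, τ (τ x) = x → τ x = x) : τ = σ ∨ τ = σ⁻¹ := by
  have hfix {x : α} (hx : σ x = x) : σ⁻¹ x = x := Equiv.Perm.inv_eq_iff_eq.2 hx.symm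
  let S := {x | τ x = σ x}
  have hback {x : α} (hx : x ∈ S) (hx' : τ (σ x) = x) : σ x = x := by
    rw [← (hx : τ x = σ x)] at hx' ⊢
    exact hτ x hx'
  have hS : Set.BijOn σ S S := by
    refine ⟨fun x hx => ?_, σ.injective.injOn, fun x hx => ?_⟩
    · rcases h (σ x) with h' | h'
      · exact h'
      · rwa [hback hx (by simpa using h')]
    · obtain ⟨z, rfl⟩ := τ.surjective x
      rcases h z with hz | hz
      · exact ⟨z, hz, hz.symm⟩
      · exact ⟨τ z, hx, hback hx (by simp [hz])⟩
  rw [or_iff_not_imp_right]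
  intro hne
  obtain ⟨x, hx⟩ : ∃ x, τ x ≠ σ⁻¹ x := by
    by_contra! hall
    exact hne (Equiv.ext hall)
  have hxS : x ∈ S := (h x).resolve_right hx
  have hσx : σ x ≠ x := fun hfx => hx (by rw [hfix hfx, (hxS : τ x = σ x), hfx])
  ext y
  by_cases hy : σ y = y
  · simpa [hy, hfix hy] using h y
  · obtain ⟨n, rfl⟩ := hσ.sameCycle hσx hy
    exact (hS.perm_zpow n).mapsTo hxS

theorem formPerm_apply_apply_ne {α : Type*} [DecidableEq α] {L : List α} (hL : L.Nodup)
    (hlen : 3 ≤ L.length) {x : α} (hx : x ∈ L) : L.formPerm (L.formPerm x) ≠ x := by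
  obtain ⟨i, hi, rfl⟩ := List.mem_iff_getElem.1 hx
  have hpow := List.formPerm_pow_apply_getElem L hL 2 i hi
  rw [pow_two, Equiv.Perm.mul_apply] at hpow
  rw [hpow, Ne, hL.getElem_inj_iff]
  intro h
  have hmod : i + 2 ≡ i + 0 [MOD L.length] := by
    rw [Nat.ModEq, h, add_zero, Nat.mod_eq_of_lt hi]
  have := Nat.le_of_dvd two_pos (Nat.modEq_zero_iff_dvd.1 hmod.add_left_cancel')
  lia

theorem formPerm_eq_or_eq_inv {L L' : List Pt} (hL : L.Nodup) (hL' : L'.Nodup)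
    (hlen : 3 ≤ L.length) (hlen' : 3 ≤ L'.length) (h : cycleEdgeSet L = cycleEdgeSet L') :
    L'.formPerm = L.formPerm ∨ L'.formPerm = L.formPerm⁻¹ := by
  have hmem {x : Pt} : x ∈ L ↔ x ∈ L' := by
    rw [← exists_mem_cycleEdgeSet_iff_mem hL, h, exists_mem_cycleEdgeSet_iff_mem hL']
  refine eq_or_eq_inv_of_isCycle (List.isCycle_formPerm hL (by lia)) (fun x => ?_) fun x => ?_
  · by_cases hx : x ∈ L
    · have he : s(x, L'.formPerm x) ∈ cycleEdgeSet L := by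
        rw [h, mem_cycleEdgeSet_iff hL']
        exact .inl ⟨hmem.1 hx, rfl⟩
      rcases (mem_cycleEdgeSet_iff hL).1 he with ⟨-, h⟩ | ⟨-, h⟩
      · exact .inl h
      · exact .inr (Equiv.Perm.eq_inv_iff_eq.2 h.symm)
    · left
      rw [List.formPerm_apply_of_notMem hx, List.formPerm_apply_of_notMem (mt hmem.2 hx)]
  · by_cases hx : x ∈ L'
    · exact fun h => (formPerm_apply_apply_ne hL' hlen' hx h).elim
    · exact fun _ => List.formPerm_apply_of_notMem hx

theorem sum_orient_perm {S : Finset Pt} {σ : Equiv.Perm Pt} (hσ : {x | σ x ≠ x} ⊆ S) (o : Pt) :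
    ∑ x ∈ S, orient o x (σ x) = ∑ x ∈ S, crossp x (σ x) := by
  have h (x y : Pt) : orient o x y = crossp x y + crossp o x - crossp o y := by
    simp only [orient, crossp, Prod.fst_sub, Prod.snd_sub]; ring
  simp only [h, Finset.sum_sub_distrib, Finset.sum_add_distrib,
    Equiv.Perm.sum_comp σ S (crossp o) hσ, add_sub_cancel_right]

theorem sum_crossp_inv {S : Finset Pt} {σ : Equiv.Perm Pt} (hσ : {x | σ x ≠ x} ⊆ S) :
    ∑ x ∈ S, crossp x (σ⁻¹ x) = -∑ x ∈ S, crossp x (σ x) := by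
  have hanti (x y : Pt) : crossp x y = -crossp y x := by simp only [crossp]; ring
  rw [← Equiv.Perm.sum_comp σ S (fun x => crossp x (σ⁻¹ x)) hσ, ← Finset.sum_neg_distrib]
  exact Finset.sum_congr rfl fun x _ => by simpa using hanti _ _

/-- The signed area of a closed polygon changes sign when its direction is reversed. -/
theorem not_orient_inv_pos {S : Finset Pt} (hS : S.Nonempty) {σ : Equiv.Perm Pt}
    (hσ : {x | σ x ≠ x} ⊆ S) {o o' : Pt} (h : ∀ x ∈ S, 0 < orient o x (σ x)) :
    ¬∀ x ∈ S, 0 < orient o' x (σ⁻¹ x) := by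
  intro h'
  have h₁ := Finset.sum_pos h hS
  have h₂ := Finset.sum_pos h' hS
  rw [sum_orient_perm hσ] at h₁
  have hσ' : {x | σ⁻¹ x ≠ x} ⊆ S := fun x hx =>
    hσ fun h => hx (Equiv.Perm.inv_eq_iff_eq.2 h.symm)
  rw [sum_orient_perm hσ', sum_crossp_inv hσ] at h₂
  linarith

/-! ### Polygons winding once around a point -/

/-- The ray from `o` in direction `d` leaves between `p`, weakly to its right, and `q`, strictly to
its left. The condition is half-open so that a ray through a common vertex of two consecutive edges
is attributed to the second one only. -/
def InCone (o d p q : Pt) : Prop := crossp d (p - o) ≤ 0 ∧ 0 < crossp d (q - o)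

open Classical in
/-- The closed polygon `L` runs counterclockwise exactly once around `o`: seen from `o`, every edge
turns left and every ray leaves through exactly one edge. -/
def WindsOnce (o : Pt) (L : List Pt) : Prop :=
  (∀ p ∈ cyclePairs L, 0 < orient o p.1 p.2) ∧
    ∀ d ≠ 0, (cyclePairs L).countP (fun p => InCone o d p.1 p.2) = 1

theorem cyclePairs_cons_cons (p q : Pt) (L : List Pt) :
    cyclePairs (p :: q :: L) = (p, q) :: (q :: L).zip (L ++ [p]) :=
  List.zipWith_rotate_one Prod.mk p q L

theorem cyclePairs_rotate (L : List Pt) (n : ℕ) :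
    cyclePairs (L.rotate n) = (cyclePairs L).rotate n := by
  rw [cyclePairs, cyclePairs, List.rotate_rotate, add_comm, ← List.rotate_rotate]
  exact (List.zipWith_rotate_distrib _ _ _ _ (L.length_rotate 1).symm).symm

theorem WindsOnce.rotate {o : Pt} {L : List Pt} (h : WindsOnce o L) (n : ℕ) :
    WindsOnce o (L.rotate n) := by
  simpa only [WindsOnce, cyclePairs_rotate, List.mem_rotate, (List.rotate_perm _ n).countP_eq]
    using h

theorem crossp_mul_orient (o d p q r : Pt) :
    crossp d (p - o) * orient o q r + crossp d (q - o) * orient o r p +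
      crossp d (r - o) * orient o p q = 0 :=
  map_sub_mul_orient (crossLinear d) o p q r

theorem orient_smul (o d p q : Pt) :
    orient o p q • d = crossp d (q - o) • (p - o) - crossp d (p - o) • (q - o) := by
  ext <;> simp [orient, crossp] <;> ring

theorem inCone_iff_or {o d p x q : Pt} (hpx : 0 < orient o p x) (hxq : 0 < orient o x q)
    (hpq : 0 < orient o p q) : InCone o d p q ↔ InCone o d p x ∨ InCone o d x q := by
  have h := crossp_mul_orient o d p x q
  rw [orient_swap_right o p q] at h
  unfold InCone
  constructor
  · rintro ⟨hp, hq⟩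
    exact (lt_or_ge 0 (crossp d (x - o))).imp (⟨hp, ·⟩) (⟨·, hq⟩)
  · rintro (⟨hp, hx⟩ | ⟨hx, hq⟩)
    · exact ⟨hp, pos_of_mul_pos_left (by nlinarith) hpx.le⟩
    · exact ⟨by nlinarith, hq⟩

theorem WindsOnce.insert {o p q x : Pt} {L : List Pt} (h : WindsOnce o (p :: q :: L))
    (hpx : 0 < orient o p x) (hxq : 0 < orient o x q) : WindsOnce o (p :: x :: q :: L) := by
  simp only [WindsOnce, cyclePairs_cons_cons, List.cons_append, List.zip_cons_cons,
    List.forall_mem_cons, List.countP_cons, decide_eq_true_eq] at h ⊢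
  obtain ⟨⟨hpq, hpos⟩, hcount⟩ := h
  refine ⟨⟨hpx, hxq, hpos⟩, fun d hd => ?_⟩
  have hexcl : InCone o d p x → ¬InCone o d x q := fun h h' => h.2.not_ge h'.1
  specialize hcount d hd
  rw [inCone_iff_or hpx hxq hpq] at hcount
  by_cases hp : InCone o d p x <;> by_cases hq : InCone o d x q <;> simp_all

theorem eq_zero_of_crossp_eq_zero {o d p q : Pt} (hpq : 0 < orient o p q)
    (hp : crossp d (p - o) = 0) (hq : crossp d (q - o) = 0) : d = 0 := by
  simpa [hp, hq, hpq.ne'] using orient_smul o d p q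

theorem windsOnce_triangle {o a b c : Pt} (hab : 0 < orient o a b) (hbc : 0 < orient o b c)
    (hca : 0 < orient o c a) : WindsOnce o [a, b, c] := by
  have hpairs : cyclePairs [a, b, c] = [(a, b), (b, c), (c, a)] := rfl
  simp only [WindsOnce, hpairs, List.forall_mem_cons, List.not_mem_nil, false_imp_iff,
    implies_true, and_true, List.countP_cons, List.countP_nil, decide_eq_true_eq]
  refine ⟨⟨hab, hbc, hca⟩, fun d hd => ?_⟩
  have h := crossp_mul_orient o d a b c
  have hne : ¬(crossp d (a - o) ≤ 0 ∧ crossp d (b - o) ≤ 0 ∧ crossp d (c - o) ≤ 0) := by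
    rintro ⟨ha, hb, hc⟩
    refine hd (eq_zero_of_crossp_eq_zero hab ?_ ?_) <;> nlinarith
  have hne' : ¬(0 < crossp d (a - o) ∧ 0 < crossp d (b - o) ∧ 0 < crossp d (c - o)) := by
    rintro ⟨ha, hb, hc⟩
    exact h.not_gt (by positivity)
  unfold InCone
  rcases lt_or_ge 0 (crossp d (a - o)) with ha | ha <;>
    rcases lt_or_ge 0 (crossp d (b - o)) with hb | hb <;>
      rcases lt_or_ge 0 (crossp d (c - o)) with hc | hc <;>
        simp_all [not_le.2, not_lt.2]

theorem mem_cycleBody_iff {L : List Pt} (hL : L.Nodup) {z : Pt} :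
    z ∈ cycleBody L ↔ ∃ p ∈ cyclePairs L, z ∈ AffineMap.lineMap p.1 p.2 '' Set.Ico (0 : ℝ) 1 := by
  simp only [cycleBody, Set.mem_iUnion, exists_prop, segment_eq_image_lineMap]
  constructor
  · rintro ⟨p, hp, t, ht, rfl⟩
    rcases ht.2.eq_or_lt with rfl | ht1
    · have hq : p.2 ∈ L := by
        obtain ⟨hp, hp'⟩ := (mem_cyclePairs_iff hL).1 hp
        exact hp' ▸ List.formPerm_apply_mem_of_mem hp
      exact ⟨(p.2, L.formPerm p.2), (mem_cyclePairs_iff hL).2 ⟨hq, rfl⟩, 0, by simp, by simp⟩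
    · exact ⟨p, hp, t, ⟨ht.1, ht1⟩, rfl⟩
  · rintro ⟨p, hp, hz⟩
    exact ⟨p, hp, Set.image_mono Set.Ico_subset_Icc_self hz⟩

theorem crossp_sub_sub_crossp_sub (o d p q : Pt) :
    crossp d (q - o) - crossp d (p - o) = crossp d (q - p) := by
  simp only [crossp, Prod.fst_sub, Prod.snd_sub]; ring

theorem InCone.crossp_sub_pos {o d p q : Pt} (h : InCone o d p q) : 0 < crossp d (q - p) :=
  crossp_sub_sub_crossp_sub o d p q ▸ sub_pos.2 (h.1.trans_lt h.2)

theorem ray_mem_edge_iff {o d p q : Pt} (hpq : 0 < orient o p q) {t : ℝ} :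
    0 ≤ t ∧ o + t • d ∈ AffineMap.lineMap p q '' Set.Ico (0 : ℝ) 1 ↔
      InCone o d p q ∧ t * crossp d (q - p) = orient o p q := by
  constructor
  · rintro ⟨ht, s, ⟨hs, hs1⟩, hz⟩
    obtain ⟨h₁, h₂⟩ := Prod.ext_iff.1 hz
    simp only [AffineMap.lineMap_apply, vsub_eq_sub, vadd_eq_add, Prod.fst_add, Prod.snd_add,
      Prod.smul_fst, Prod.smul_snd, Prod.fst_sub, Prod.snd_sub, smul_eq_mul] at h₁ h₂
    have hp : t * crossp d (p - o) = -(s * orient o p q) := by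
      simp only [orient, crossp, Prod.fst_sub, Prod.snd_sub]
      linear_combination (o.2 - p.2) * h₁ + (p.1 - o.1) * h₂
    have hq : t * crossp d (q - o) = (1 - s) * orient o p q := by
      simp only [orient, crossp, Prod.fst_sub, Prod.snd_sub]
      linear_combination (o.2 - q.2) * h₁ + (q.1 - o.1) * h₂
    have hq' : 0 < t * crossp d (q - o) := hq ▸ mul_pos (sub_pos.2 hs1) hpq
    have ht' : 0 < t := ht.lt_of_ne (by rintro rfl; simp at hq')
    refine ⟨⟨nonpos_of_mul_nonpos_right ?_ ht', pos_of_mul_pos_right hq' ht⟩, ?_⟩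
    · rw [hp]; exact neg_nonpos.2 (by positivity)
    · rw [← crossp_sub_sub_crossp_sub o, mul_sub, hp, hq]; ring
  · rintro ⟨hcone, ht⟩
    have hpos := hcone.crossp_sub_pos
    obtain rfl : t = orient o p q / crossp d (q - p) := by field_simp; exact ht
    refine ⟨by positivity, -crossp d (p - o) / crossp d (q - p), ⟨?_, ?_⟩, ?_⟩
    · exact div_nonneg (neg_nonneg.2 hcone.1) hpos.le
    · rw [div_lt_one hpos]
      linarith [hcone.2, crossp_sub_sub_crossp_sub o d p q]
    · ext <;> simp only [AffineMap.lineMap_apply, vsub_eq_sub, vadd_eq_add, Prod.fst_add,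
        Prod.snd_add, Prod.smul_fst, Prod.smul_snd, Prod.fst_sub, Prod.snd_sub, smul_eq_mul] <;>
        field_simp <;> simp only [orient, crossp, Prod.fst_sub, Prod.snd_sub] <;> ring

theorem WindsOnce.existsUnique_mem_cycleBody {o : Pt} {L : List Pt} (h : WindsOnce o L)
    (hL : L.Nodup) {d : Pt} (hd : d ≠ 0) :
    ∃! p : Pt, p ∈ cycleBody L ∧ ∃ t : ℝ, 0 ≤ t ∧ p = o + t • d := by
  classical
  have hcount := h.2 d hd
  rw [List.countP_eq_length_filter, List.length_eq_one_iff] at hcount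
  obtain ⟨e, he⟩ := hcount
  have hmem (p : Pt × Pt) : p ∈ cyclePairs L ∧ InCone o d p.1 p.2 ↔ p = e := by
    simpa using congrArg (p ∈ ·) he
  have hiff (t : ℝ) : 0 ≤ t ∧ o + t • d ∈ cycleBody L ↔
      t * crossp d (e.2 - e.1) = orient o e.1 e.2 := by
    rw [mem_cycleBody_iff hL]
    constructor
    · rintro ⟨ht, p, hp, hz⟩
      obtain ⟨hcone, heq⟩ := (ray_mem_edge_iff (h.1 p hp)).1 ⟨ht, hz⟩
      rwa [(hmem p).1 ⟨hp, hcone⟩] at heq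
    · intro heq
      obtain ⟨hp, hcone⟩ := (hmem e).2 rfl
      obtain ⟨ht, hz⟩ := (ray_mem_edge_iff (h.1 e hp)).2 ⟨hcone, heq⟩
      exact ⟨ht, e, hp, hz⟩
  have hpos := ((hmem e).2 rfl).2.crossp_sub_pos
  obtain ⟨ht, hz⟩ := (hiff (orient o e.1 e.2 / crossp d (e.2 - e.1))).2 (by field_simp)
  refine ⟨_, ⟨hz, _, ht, rfl⟩, ?_⟩
  rintro _ ⟨hz, t, ht, rfl⟩
  rw [← (hiff t).1 ⟨ht, hz⟩, mul_div_cancel_right₀ _ hpos.ne']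

theorem orient_combo_left {s t : ℝ} (h : s + t = 1) (a b p q : Pt) :
    orient (s • a + t • b) p q = s * orient a p q + t * orient b p q := by
  rw [← orient_rotate, orient_combo h, orient_rotate a, orient_rotate b]

theorem orient_midpoint_left (a b p q : Pt) :
    orient (midpoint ℝ a b) p q = 2⁻¹ * (orient a p q + orient b p q) := by
  rw [midpoint_eq_smul_add, invOf_eq_inv, smul_add, orient_combo_left (by norm_num), mul_add]

theorem exists_forall_orient_pos {l : List (Pt × Pt)} (a b : Pt)
    (h : ∀ p ∈ l, 0 < orient a p.1 p.2 ∨ 0 ≤ orient a p.1 p.2 ∧ 0 < orient b p.1 p.2) :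
    ∃ o, ∀ p ∈ l, 0 < orient o p.1 p.2 := by
  suffices ∀ᶠ t : ℝ in 𝓝[>] 0, ∀ p ∈ l, 0 < orient ((1 - t) • a + t • b) p.1 p.2 from
    let ⟨_, ht⟩ := this.exists
    ⟨_, ht⟩
  refine (Filter.eventually_all_finite l.finite_toSet).2 fun p hp => ?_
  simp only [orient_combo_left (sub_add_cancel 1 _)]
  rcases h p hp with hpos | ⟨hnonneg, hpos⟩
  · refine Filter.Eventually.filter_mono nhdsWithin_le_nhds ?_
    refine ContinuousAt.eventually_lt continuousAt_const (by fun_prop) ?_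
    simpa using hpos
  · filter_upwards [Ioo_mem_nhdsGT one_pos] with t ⟨ht0, ht1⟩
    exact add_pos_of_nonneg_of_pos (mul_nonneg (sub_nonneg.2 ht1.le) hnonneg) (mul_pos ht0 hpos)

theorem WindsOnce.isRotated {o o' : Pt} {L L' : List Pt} (h : WindsOnce o L) (h' : WindsOnce o' L')
    (hL : L.Nodup) (hL' : L'.Nodup) (hlen : 3 ≤ L.length) (hlen' : 3 ≤ L'.length)
    (he : cycleEdgeSet L = cycleEdgeSet L') : L ~r L' := by
  have hpos {x : Pt} (hx : x ∈ L) : 0 < orient o x (L.formPerm x) :=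
    h.1 (_, _) ((mem_cyclePairs_iff hL).2 ⟨hx, rfl⟩)
  have hpos' {x : Pt} (hx : x ∈ L) : 0 < orient o' x (L'.formPerm x) := by
    rw [← exists_mem_cycleEdgeSet_iff_mem hL, he, exists_mem_cycleEdgeSet_iff_mem hL'] at hx
    exact h'.1 (_, _) ((mem_cyclePairs_iff hL').2 ⟨hx, rfl⟩)
  rcases formPerm_eq_or_eq_inv hL hL' hlen hlen' he with heq | hinv
  · refine ((List.formPerm_eq_formPerm_iff hL hL').1 heq.symm).resolve_right fun hshort => ?_
    lia
  · simp only [hinv] at hpos'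
    have hsupp : {x | L.formPerm x ≠ x} ⊆ L.toFinset := fun x hx => by
      simpa using List.mem_of_formPerm_apply_ne hx
    have hne : L ≠ [] := by rintro rfl; simp at hlen
    exact (not_orient_inv_pos (by simpa using hne) hsupp (by simpa using @hpos)
      (by simpa using @hpos')).elim

theorem card_le_starCount {G : PSLG} {𝓛 : Finset (List Pt)} (hcyc : ∀ L ∈ 𝓛, IsCycleIn G L)
    (hwind : ∀ L ∈ 𝓛, ∃ o, WindsOnce o L)
    (hrot : ∀ L ∈ 𝓛, ∀ L' ∈ 𝓛, L ~r L' → L = L') : 𝓛.card ≤ starCount G := by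
  have hinj : Set.InjOn cycleEdgeSet (𝓛 : Set (List Pt)) := by
    intro L hL L' hL' he
    obtain ⟨hlen, hnodup, -⟩ := hcyc L hL
    obtain ⟨hlen', hnodup', -⟩ := hcyc L' hL'
    obtain ⟨o, ho⟩ := hwind L hL
    obtain ⟨o', ho'⟩ := hwind L' hL'
    exact hrot L hL L' hL' (ho.isRotated ho' hnodup hnodup' hlen hlen' he)
  rw [← Set.ncard_coe_finset, ← hinj.ncard_image, starCount]
  refine Set.ncard_le_ncard ?_ (G.E.powerset.finite_toSet.subset ?_)
  · rintro _ ⟨L, hL, rfl⟩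
    obtain ⟨o, ho⟩ := hwind L hL
    exact ⟨L, ⟨hcyc L hL, o, fun d => ho.existsUnique_mem_cycleBody (hcyc L hL).2.1⟩, rfl⟩
  · rintro _ ⟨L, hL, rfl⟩
    refine Finset.mem_coe.2 (Finset.mem_powerset.2 fun e he => ?_)
    obtain ⟨p, hp, rfl⟩ := List.mem_map.1 (List.mem_toFinset.1 he)
    exact hL.1.2.2 p hp

namespace PSLG

variable {G : PSLG} {a b c d e : Pt}

theorem IsFace.exists_windsOnce_triangle (h : G.IsFace a b c) : ∃ o, WindsOnce o [a, b, c] := by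
  obtain ⟨o, ho⟩ := exists_forall_orient_pos (midpoint ℝ a b) c
    (l := [(a, b), (b, c), (c, a)]) (by
      simp [orient_midpoint_left, h.pos, h.rotate.pos, h.rotate.rotate.pos])
  simp only [List.forall_mem_cons] at ho
  obtain ⟨hab, hbc, hca, -⟩ := ho
  exact ⟨o, windsOnce_triangle hab hbc hca⟩

theorem IsFace.exists_windsOnce_quad (h : G.IsFace a b c) (hd : G.IsFace b a d) :
    ∃ o, WindsOnce o [a, d, b, c] := by
  obtain ⟨o, ho⟩ := exists_forall_orient_pos (midpoint ℝ a b) c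
    (l := [(a, b), (b, c), (c, a), (a, d), (d, b)]) (by
      simp [orient_midpoint_left, h.pos, h.rotate.pos, h.rotate.rotate.pos, hd.pos, hd.rotate.pos])
  simp only [List.forall_mem_cons] at ho
  obtain ⟨hab, hbc, hca, had, hdb, -⟩ := ho
  exact ⟨o, (windsOnce_triangle hab hbc hca).insert had hdb⟩

theorem IsFace.exists_orient_pos_of_adjacent (hgen : NoThreeCollinear G.V) (h : G.IsFace a b c)
    (he : G.IsFace a e b) (hd : G.IsFace a c d) (hed : e ≠ d) :
    ∃ x, 0 < orient a b x ∧ 0 ≤ orient c a x ∧ 0 ≤ orient a e x ∧ 0 < orient d a x := by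
  rcases le_or_gt 0 (orient a e c) with hec | hec
  · exact ⟨c, h.pos, by simp, hec, hd.rotate.rotate.pos⟩
  -- The line `ae` cuts off `c`, so let `x` be its intersection with the side `bc`.
  obtain ⟨s, t, hs, ht, hst, hx⟩ := exists_combo_eq_zero (continuous_orient a e) he.pos hec.le
  have hbx : 0 < orient a b (s • b + t • c) := by
    simpa [orient_combo hst] using mul_pos ht h.pos
  refine ⟨s • b + t • c, hbx, ?_, hx.ge, ?_⟩
  · simpa [orient_combo hst] using mul_nonneg hs h.rotate.rotate.pos.le
  rcases le_or_gt 0 (orient d a b) with hdb | hdb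
  · rw [orient_combo hst]
    exact add_pos_of_nonneg_of_pos (mul_nonneg hs hdb) (mul_pos ht hd.rotate.rotate.pos)
  · generalize s • b + t • c = x at hx hbx ⊢
    have hed' : orient a e d < 0 := by
      refine (not_lt.1 fun hpos => ?_).lt_of_ne ?_
      · refine he.not_adj_inside (edge_symm hd.edge₃₁) ⟨hpos, ?_⟩
        rwa [← neg_pos, ← orient_swap] at hdb
      · exact hgen.orient_ne_zero h.mem he.rotate.mem hd.rotate.rotate.mem he.ne₁₂
          hd.ne₃₁.symm hed
    have hplucker := crossp_mul_orient a (x - a) e b d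
    change orient a x e * _ + orient a x b * _ + orient a x d * _ = 0 at hplucker
    rw [orient_swap_right a e x, hx, orient_swap_right a b x, orient_swap_right a e d] at hplucker
    rw [← orient_rotate]
    refine pos_of_mul_pos_left ?_ he.pos.le
    linarith [mul_neg_of_neg_of_pos hed' hbx]

theorem IsFace.exists_windsOnce_pentagon (hgen : NoThreeCollinear G.V) (h : G.IsFace a b c)
    (he : G.IsFace a e b) (hd : G.IsFace a c d) (hed : e ≠ d) :
    ∃ o, WindsOnce o [a, e, b, c, d] := by
  -- The kernel point `o` is close to `a`, in the direction of a point `w` close to `x`.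
  obtain ⟨x, hab, hca, hae, hda⟩ := h.exists_orient_pos_of_adjacent hgen he hd hed
  obtain ⟨w, hw⟩ := exists_forall_orient_pos x b
    (l := [(a, b), (c, a), (a, e), (d, a)]) (by
      simp [← orient_rotate x, hab, hca, hae, hda, h.rotate.pos, he.rotate.rotate.pos])
  obtain ⟨o, ho⟩ := exists_forall_orient_pos a w
    (l := [(a, b), (b, c), (c, a), (a, e), (e, b), (c, d), (d, a)]) (by
      simp only [List.forall_mem_cons] at hw
      simp [h.pos, he.pos, hd.pos, hw])
  simp only [List.forall_mem_cons] at ho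
  obtain ⟨hab, hbc, hca, hae, heb, hcd, hda, -⟩ := ho
  have hquad := ((windsOnce_triangle hab hbc hca).insert hae heb).rotate 3
  exact ⟨o, (hquad.insert hcd hda).rotate 2⟩

end PSLG

/-! ### Counting -/

theorem card_le_two_of_isMax_or_isMin {α β : Type*} [PartialOrder β] {S T : Finset α} {f : α → β}
    (hf : Set.InjOn f S) (hT : T ⊆ S)
    (h : ∀ v ∈ T, (∀ x ∈ S, f x ≤ f v) ∨ ∀ x ∈ S, f v ≤ f x) : T.card ≤ 2 := by
  by_contra! hthree
  obtain ⟨x, hx, y, hy, z, hz, hxy, hxz, hyz⟩ := Finset.two_lt_card.1 hthree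
  have heq {u v : α} (hu : u ∈ T) (hv : v ∈ T) (huv : f u ≤ f v) (hvu : f v ≤ f u) : u = v :=
    hf (hT hu) (hT hv) (huv.antisymm hvu)
  grind

namespace PSLG

open Classical in
/-- The faces `abc`, each occurring three times, once for each choice of the first vertex `a`. -/
def faces (G : PSLG) : Finset (Pt × Pt × Pt) :=
  (G.V ×ˢ G.V ×ˢ G.V).filter fun (a, b, c) => G.IsFace a b c

open Classical in
/-- The vertices in the interior of the convex hull of the vertex set. -/
def interiorVertices (G : PSLG) : Finset Pt :=
  G.V.filter (· ∈ interior (convexHull ℝ (G.V : Set Pt)))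

open Classical in
/-- The triples `(v, p, q)` such that `vpq` is the face immediately to the left of `v`. -/
def leftFaces (G : PSLG) (ℓ : Pt →ₗ[ℝ] ℝ) : Finset (Pt × Pt × Pt) :=
  G.faces.filter fun (v, p, q) => G.IsLeftFace ℓ v p q

/-- The face `vpq` has its middle vertex with respect to `ℓ` at `v`. -/
def IsMiddleFace (G : PSLG) (ℓ : Pt →ₗ[ℝ] ℝ) (v p q : Pt) : Prop :=
  G.IsLeftFace ℓ v p q ∨ G.IsLeftFace (-ℓ) v p q

open Classical in
/-- The faces, each occurring once, as a triple that starts at its middle vertex with respect to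
`ℓ`. -/
def middleFaces (G : PSLG) (ℓ : Pt →ₗ[ℝ] ℝ) : Finset (Pt × Pt × Pt) :=
  G.leftFaces ℓ ∪ G.leftFaces (-ℓ)

open Classical in
/-- The faces `abc` with another face on the side `ab`. -/
def facesWithPrev (G : PSLG) : Finset (Pt × Pt × Pt) :=
  G.faces.filter fun (a, b, _) => ∃ e, G.IsFace a e b

open Classical in
/-- The faces `abc` with another face on the side `ac`. -/
def facesWithNext (G : PSLG) : Finset (Pt × Pt × Pt) :=
  G.faces.filter fun (a, _, c) => ∃ d, G.IsFace a c d

open Classical in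
/-- The faces `abc` such that `abc` and two further faces surround `a`. -/
def closedFaces (G : PSLG) : Finset (Pt × Pt × Pt) :=
  G.faces.filter fun (a, b, c) => ∃ e, G.IsFace a e b ∧ G.IsFace a c e

open Classical in
/-- The quadrilaterals `adbc` made of two faces `abc` and `bad`. The order of `a` and `b` is fixed
by `ℓ`, so that every quadrilateral occurs once. -/
def quads (G : PSLG) (ℓ : Pt →ₗ[ℝ] ℝ) : Finset (Pt × Pt × Pt × Pt) :=
  (G.V ×ˢ G.V ×ˢ G.V ×ˢ G.V).filter fun (a, d, b, c) =>
    G.IsFace a b c ∧ G.IsFace b a d ∧ ℓ a < ℓ b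

open Classical in
/-- The pentagons `aebcd` made of three consecutive faces `aeb`, `abc`, `acd` around `a`. -/
def pentagons (G : PSLG) : Finset (Pt × Pt × Pt × Pt × Pt) :=
  (G.V ×ˢ G.V ×ˢ G.V ×ˢ G.V ×ˢ G.V).filter fun (a, e, b, c, d) =>
    G.IsFace a b c ∧ G.IsFace a e b ∧ G.IsFace a c d ∧ e ≠ d

variable {G : PSLG} {ℓ : Pt →ₗ[ℝ] ℝ} {a b c d e v p q : Pt}

theorem mem_faces : (a, b, c) ∈ G.faces ↔ G.IsFace a b c := by
  classical
  refine ⟨fun h => (Finset.mem_filter.1 h).2, fun h => Finset.mem_filter.2 ⟨?_, h⟩⟩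
  simp only [Finset.mem_product]
  exact ⟨h.mem, h.rotate.mem, h.rotate.rotate.mem⟩

theorem mem_leftFaces : (v, p, q) ∈ G.leftFaces ℓ ↔ G.IsLeftFace ℓ v p q := by
  classical
  rw [leftFaces, Finset.mem_filter, mem_faces]
  exact and_iff_right_of_imp IsLeftFace.isFace

theorem mem_middleFaces : (v, p, q) ∈ G.middleFaces ℓ ↔ G.IsMiddleFace ℓ v p q := by
  classical
  rw [middleFaces, Finset.mem_union, mem_leftFaces, mem_leftFaces, IsMiddleFace]

theorem mem_facesWithPrev :
    (a, b, c) ∈ G.facesWithPrev ↔ G.IsFace a b c ∧ ∃ e, G.IsFace a e b := by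
  classical
  rw [facesWithPrev, Finset.mem_filter, mem_faces]

theorem mem_facesWithNext :
    (a, b, c) ∈ G.facesWithNext ↔ G.IsFace a b c ∧ ∃ d, G.IsFace a c d := by
  classical
  rw [facesWithNext, Finset.mem_filter, mem_faces]

theorem mem_closedFaces : (a, b, c) ∈ G.closedFaces ↔
    G.IsFace a b c ∧ ∃ e, G.IsFace a e b ∧ G.IsFace a c e := by
  classical
  rw [closedFaces, Finset.mem_filter, mem_faces]

theorem mem_quads : (a, d, b, c) ∈ G.quads ℓ ↔
    G.IsFace a b c ∧ G.IsFace b a d ∧ ℓ a < ℓ b := by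
  classical
  refine ⟨fun h => (Finset.mem_filter.1 h).2, fun h => Finset.mem_filter.2 ⟨?_, h⟩⟩
  simp only [Finset.mem_product]
  exact ⟨h.1.mem, h.2.1.rotate.rotate.mem, h.1.rotate.mem, h.1.rotate.rotate.mem⟩

theorem mem_pentagons : (a, e, b, c, d) ∈ G.pentagons ↔
    G.IsFace a b c ∧ G.IsFace a e b ∧ G.IsFace a c d ∧ e ≠ d := by
  classical
  refine ⟨fun h => (Finset.mem_filter.1 h).2, fun h => Finset.mem_filter.2 ⟨?_, h⟩⟩
  simp only [Finset.mem_product]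
  exact ⟨h.1.mem, h.2.1.rotate.mem, h.1.rotate.mem, h.1.rotate.rotate.mem,
    h.2.2.1.rotate.rotate.mem⟩

theorem disjoint_leftFaces_neg : Disjoint (G.leftFaces ℓ) (G.leftFaces (-ℓ)) := by
  rw [Finset.disjoint_left]
  rintro ⟨v, p, q⟩ h h'
  exact (mem_leftFaces.1 h).mid_lt.not_gt (neg_lt_neg_iff.1 (mem_leftFaces.1 h').mid_lt)

theorem IsTriangulation.card_add_card_interiorVertices_le (htri : G.IsTriangulation)
    (hgen : NoThreeCollinear G.V) (hℓ0 : ℓ ≠ 0) (hℓ : Set.InjOn ℓ G.V) :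
    G.V.card + G.interiorVertices.card ≤ (G.middleFaces ℓ).card + 2 := by
  classical
  set A := (G.leftFaces ℓ).image Prod.fst with hA
  set B := (G.leftFaces (-ℓ)).image Prod.fst with hB
  have hmemA {v : Pt} : v ∈ A ↔ ∃ p q, G.IsLeftFace ℓ v p q := by simp [hA, mem_leftFaces]
  have hmemB {v : Pt} : v ∈ B ↔ ∃ p q, G.IsLeftFace (-ℓ) v p q := by simp [hB, mem_leftFaces]
  have hinterior : G.interiorVertices ⊆ A ∩ B := by
    intro v hv
    obtain ⟨hv, hvint⟩ := Finset.mem_filter.1 hv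
    exact Finset.mem_inter.2
      ⟨hmemA.2 (htri.exists_isLeftFace_of_mem_interior hgen hℓ0 hℓ hv hvint),
        hmemB.2 (htri.exists_isLeftFace_of_mem_interior hgen (neg_ne_zero.2 hℓ0)
          (neg_injective.comp_injOn hℓ) hv hvint)⟩
  have hrest : (G.V \ (A ∪ B)).card ≤ 2 := by
    refine card_le_two_of_isMax_or_isMin hℓ Finset.sdiff_subset fun v hv => ?_
    rw [Finset.mem_sdiff, Finset.notMem_union, hmemA, hmemB] at hv
    exact htri.isMax_or_isMin hgen hℓ hv.1 hv.2.1 hv.2.2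
  have hle : G.V.card ≤ (A ∪ B).card + 2 := by
    have := Finset.le_card_sdiff (A ∪ B) G.V
    omega
  have hinter := Finset.card_le_card hinterior
  have hsum := Finset.card_union_add_card_inter A B
  have hA' : A.card ≤ _ := Finset.card_image_le
  have hB' : B.card ≤ _ := Finset.card_image_le
  rw [middleFaces, Finset.card_union_of_disjoint disjoint_leftFaces_neg]
  omega

theorem IsMiddleFace.isFace (h : G.IsMiddleFace ℓ a b c) : G.IsFace a b c :=
  h.elim IsLeftFace.isFace IsLeftFace.isFace

theorem IsMiddleFace.between (h : G.IsMiddleFace ℓ a b c) :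
    ℓ c < ℓ a ∧ ℓ a < ℓ b ∨ ℓ b < ℓ a ∧ ℓ a < ℓ c :=
  h.imp (fun h => ⟨h.lt_mid, h.mid_lt⟩)
    fun h => ⟨neg_lt_neg_iff.1 h.mid_lt, neg_lt_neg_iff.1 h.lt_mid⟩

theorem IsMiddleFace.not_rotate (h : G.IsMiddleFace ℓ a b c) : ¬G.IsMiddleFace ℓ b c a := by
  intro h'
  have := h.between
  have := h'.between
  grind

/-- Moves the choice of the first vertex of a face one step forward. -/
def rotateTriple (t : Pt × Pt × Pt) : Pt × Pt × Pt := (t.2.1, t.2.2, t.1)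

theorem rotateTriple_injective : Function.Injective rotateTriple := by
  rintro ⟨a, b, c⟩ ⟨a', b', c'⟩ h
  simp only [rotateTriple, Prod.mk.injEq] at h ⊢
  tauto

theorem three_mul_card_middleFaces_le : 3 * (G.middleFaces ℓ).card ≤ G.faces.card := by
  rw [← Fintype.card_fin 3, ← Finset.card_univ, ← Finset.card_product]
  refine Finset.card_le_card_of_injOn (fun t => rotateTriple^[t.1] t.2) ?_ ?_
  · rintro ⟨i, a, b, c⟩ ht
    have h := (mem_middleFaces.1 (Finset.mem_product.1 ht).2).isFace
    clear ht
    fin_cases i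
    exacts [mem_faces.2 h, mem_faces.2 h.rotate, mem_faces.2 h.rotate.rotate]
  · rintro ⟨i, a, b, c⟩ ht ⟨j, a', b', c'⟩ ht' heq
    have h := mem_middleFaces.1 (Finset.mem_product.1 ht).2
    have h' := mem_middleFaces.1 (Finset.mem_product.1 ht').2
    clear ht ht'
    have := h.not_rotate
    have := h'.not_rotate
    fin_cases i <;> fin_cases j <;> simp_all [rotateTriple]

theorem card_facesWithPrev_le_card_facesWithNext :
    G.facesWithPrev.card ≤ G.facesWithNext.card := by
  refine Finset.card_le_card_of_injOn rotateTriple ?_ rotateTriple_injective.injOn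
  rintro ⟨a, b, c⟩ h
  obtain ⟨hf, e, he⟩ := mem_facesWithPrev.1 h
  exact mem_facesWithNext.2 ⟨hf.rotate, e, he.rotate.rotate⟩

theorem IsTriangulation.orient_nonneg_of_notMem_facesWithPrev (htri : G.IsTriangulation)
    (hgen : NoThreeCollinear G.V) (h : G.IsFace a b c) (h' : (a, b, c) ∉ G.facesWithPrev) {x : Pt}
    (hx : x ∈ G.V) : 0 ≤ orient a b x := by
  by_contra! hneg
  obtain ⟨e, he⟩ := htri.exists_isFace hgen (edge_symm h.edge₁₂) hx
    (orient_swap a b x ▸ neg_pos.2 hneg)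
  exact h' (mem_facesWithPrev.2 ⟨h, e, he.rotate⟩)

theorem IsTriangulation.card_faces_add_card_interiorVertices_le (htri : G.IsTriangulation)
    (hgen : NoThreeCollinear G.V) :
    G.faces.card + G.interiorVertices.card ≤ G.facesWithPrev.card + G.V.card := by
  classical
  have hside {a b c : Pt} (h : (a, b, c) ∈ G.faces \ G.facesWithPrev) :
      G.IsFace a b c ∧ ∀ x ∈ G.V, 0 ≤ orient a b x := by
    rw [Finset.mem_sdiff, mem_faces] at h
    exact ⟨h.1, fun x => htri.orient_nonneg_of_notMem_facesWithPrev hgen h.1 h.2⟩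
  have hle : (G.faces \ G.facesWithPrev).card ≤ (G.V \ G.interiorVertices).card := by
    refine Finset.card_le_card_of_injOn Prod.fst ?_ ?_
    · rintro ⟨a, b, c⟩ h
      obtain ⟨hf, hs⟩ := hside h
      refine Finset.mem_coe.2 (Finset.mem_sdiff.2 ⟨hf.mem, fun hinterior => ?_⟩)
      refine notMem_interior_of_orient_nonpos hf.ne₁₂.symm (orient_self_right b a) (fun x hx => ?_)
        (Finset.mem_filter.1 hinterior).2
      exact orient_swap a b x ▸ neg_nonpos.2 (hs x hx)
    · rintro ⟨a, b, c⟩ h ⟨_, b', c'⟩ h' rfl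
      obtain ⟨hf, hs⟩ := hside h
      obtain ⟨hf', hs'⟩ := hside h'
      have h0 : orient a b b' = 0 :=
        (neg_nonneg.1 (orient_swap_right a b b' ▸ hs' b hf.rotate.mem)).antisymm
          (hs b' hf'.rotate.mem)
      obtain rfl := (hgen.eq_or_eq hf.mem hf.rotate.mem hf'.rotate.mem hf.ne₁₂ h0).resolve_left
        hf'.ne₁₂.symm
      rw [hf.apex_unique hgen hf']
  have hfaces := Finset.card_sdiff_add_card_eq_card (s := G.facesWithPrev) (t := G.faces)
    (Finset.filter_subset _ _)
  have hvertices := Finset.card_sdiff_add_card_eq_card (s := G.interiorVertices) (t := G.V)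
    (Finset.filter_subset _ _)
  omega

theorem IsFace.eq_of_inCone (hgen : NoThreeCollinear G.V) (h : G.IsFace a p q) {x : Pt}
    (hx : s(a, x) ∈ G.E) (hcone : InCone a (x - a) p q) : x = p := by
  obtain ⟨hp : orient a x p ≤ 0, hq : 0 < orient a x q⟩ := hcone
  rw [← neg_nonneg, ← orient_swap_right] at hp
  rcases hp.eq_or_lt with h0 | hpos
  · exact (hgen.eq_or_eq h.mem h.rotate.mem (right_mem hx) h.ne₁₂ h0.symm).resolve_left
      (ne_of_edge hx).symm
  · exact (h.not_adj_inside hx ⟨hpos, hq⟩).elim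

theorem IsFace.adj_of_closed (hgen : NoThreeCollinear G.V) (h : G.IsFace a b c)
    (h' : G.IsFace a c e) (h'' : G.IsFace a e b) {x : Pt} (hx : s(a, x) ∈ G.E) :
    x = b ∨ x = c ∨ x = e := by
  classical
  have hcount := (windsOnce_triangle h.pos h'.pos h''.pos).2 (x - a)
    (sub_ne_zero.2 (ne_of_edge hx).symm)
  obtain ⟨p, hp, hcone⟩ := List.countP_pos_iff.1 (hcount ▸ one_pos)
  have hcone := of_decide_eq_true hcone
  rcases (by simpa [cyclePairs] using hp : p = (b, c) ∨ p = (c, e) ∨ p = (e, b)) with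
    rfl | rfl | rfl
  exacts [.inl (h.eq_of_inCone hgen hx hcone), .inr (.inl (h'.eq_of_inCone hgen hx hcone)),
    .inr (.inr (h''.eq_of_inCone hgen hx hcone))]

theorem card_closedFaces_le (hgen : NoThreeCollinear G.V) :
    G.closedFaces.card ≤ 3 * G.interiorVertices.card := by
  classical
  refine Finset.card_le_mul_card_image_of_maps_to (f := Prod.fst) ?_ 3 ?_
  · rintro ⟨a, b, c⟩ ht
    obtain ⟨h, e, he, he'⟩ := mem_closedFaces.1 ht
    refine Finset.mem_filter.2 ⟨h.mem, interior_mono (convexHull_mono ?_)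
      (mem_interior_convexHull_of_orient_pos h.pos he'.pos he.pos)⟩
    simp [Set.insert_subset_iff, h.rotate.mem, he'.rotate.mem, he.rotate.mem]
  · intro v _
    rcases (G.closedFaces.filter (·.1 = v)).eq_empty_or_nonempty with hempty | ⟨⟨a, b, c⟩, ht⟩
    · simp [hempty]
    obtain ⟨htc, rfl : a = v⟩ := Finset.mem_filter.1 ht
    obtain ⟨h, e, he, he'⟩ := mem_closedFaces.1 htc
    refine (Finset.card_le_card_of_injOn (·.2.1) (t := {b, c, e}) ?_ ?_).trans
      Finset.card_le_three
    · rintro ⟨a', b', c'⟩ hs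
      obtain ⟨hsc, rfl : a' = a⟩ := Finset.mem_filter.1 hs
      simpa using h.adj_of_closed hgen he' he (mem_closedFaces.1 hsc).1.edge₁₂
    · rintro ⟨a₁, b₁, c₁⟩ h₁ ⟨a₂, b₂, c₂⟩ h₂ (rfl : b₁ = b₂)
      obtain ⟨hc₁, rfl : a₁ = a⟩ := Finset.mem_filter.1 h₁
      obtain ⟨hc₂, rfl : a₂ = a₁⟩ := Finset.mem_filter.1 h₂
      rw [(mem_closedFaces.1 hc₁).1.apex_unique hgen (mem_closedFaces.1 hc₂).1]

theorem card_facesWithPrev_le_two_mul_card_quads (hℓ : Set.InjOn ℓ G.V) :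
    G.facesWithPrev.card ≤ 2 * (G.quads ℓ).card := by
  classical
  have hsub : G.facesWithPrev ⊆ (G.quads ℓ).image (fun (a, _, b, c) => (a, b, c)) ∪
      (G.quads ℓ).image fun (a, d, b, _) => (b, a, d) := by
    rintro ⟨a, b, c⟩ ht
    obtain ⟨h, e, he⟩ := mem_facesWithPrev.1 ht
    rw [Finset.mem_union, Finset.mem_image, Finset.mem_image]
    rcases (hℓ.ne h.mem h.rotate.mem h.ne₁₂).lt_or_gt with hlt | hlt
    · exact Or.inl ⟨(a, e, b, c), mem_quads.2 ⟨h, he.rotate.rotate, hlt⟩, rfl⟩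
    · exact Or.inr ⟨(b, c, a, e), mem_quads.2 ⟨he.rotate.rotate, h, hlt⟩, rfl⟩
  rw [two_mul]
  exact (Finset.card_le_card hsub).trans <| (Finset.card_union_le _ _).trans <|
    add_le_add Finset.card_image_le Finset.card_image_le

theorem card_facesWithPrev_add_card_facesWithNext_le :
    G.facesWithPrev.card + G.facesWithNext.card ≤
      G.faces.card + (G.pentagons.card + G.closedFaces.card) := by
  classical
  have hsub : G.facesWithPrev ∩ G.facesWithNext ⊆
      G.pentagons.image (fun (a, _, b, c, _) => (a, b, c)) ∪ G.closedFaces := by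
    rintro ⟨a, b, c⟩ ht
    obtain ⟨hprev, hnext⟩ := Finset.mem_inter.1 ht
    obtain ⟨h, e, he⟩ := mem_facesWithPrev.1 hprev
    obtain ⟨-, d, hd⟩ := mem_facesWithNext.1 hnext
    rw [Finset.mem_union, Finset.mem_image]
    by_cases hed : e = d
    · exact Or.inr (mem_closedFaces.2 ⟨h, e, he, hed ▸ hd⟩)
    · exact Or.inl ⟨(a, e, b, c, d), mem_pentagons.2 ⟨h, he, hd, hed⟩, rfl⟩
  rw [← Finset.card_union_add_card_inter]
  refine add_le_add (Finset.card_le_card (Finset.union_subset ?_ ?_)) ?_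
  · exact Finset.filter_subset _ _
  · exact Finset.filter_subset _ _
  · exact (Finset.card_le_card hsub).trans <| (Finset.card_union_le _ _).trans <|
      Nat.add_le_add_right Finset.card_image_le _

variable (G ℓ) in
/-- The polygons counted in the lower bound, as vertex lists: the faces, the unions of two faces
with a common side and the unions of three consecutive faces around a vertex. The side conditions
involving `ℓ` single out one of the rotations of the vertex list. -/
inductive IsMarkedPolygon : List Pt → Prop
  | triangle {a b c : Pt} (h : G.IsMiddleFace ℓ a b c) : IsMarkedPolygon [a, b, c]
  | quad {a b c d : Pt} (h : G.IsFace a b c) (hd : G.IsFace b a d) (hlt : ℓ a < ℓ b) :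
    IsMarkedPolygon [a, d, b, c]
  | pentagon {a b c d e : Pt} (h : G.IsFace a b c) (he : G.IsFace a e b) (hd : G.IsFace a c d)
    (hed : e ≠ d) : IsMarkedPolygon [a, e, b, c, d]

theorem IsFace.ne_of_adjacent (h : G.IsFace a b c) (h' : G.IsFace a c d) : b ≠ d := by
  rintro rfl
  have := h'.pos
  rw [orient_swap_right] at this
  linarith [h.pos]

theorem IsMarkedPolygon.isCycleIn {L : List Pt} (h : G.IsMarkedPolygon ℓ L) : IsCycleIn G L := by
  cases h with
  | triangle h =>
    have h := h.isFace
    simp [IsCycleIn, cyclePairs, h.edge₁₂, h.edge₂₃, h.edge₃₁, h.ne₁₂, h.ne₂₃, h.ne₃₁.symm]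
  | quad h hd =>
    simp [IsCycleIn, cyclePairs, h.edge₂₃, h.edge₃₁, hd.edge₂₃, hd.edge₃₁, h.ne₁₂, h.ne₂₃,
      h.ne₃₁.symm, hd.ne₂₃, hd.ne₃₁, (h.rotate.ne_of_adjacent hd).symm]
  | pentagon h he hd hed =>
    simp [IsCycleIn, cyclePairs, he.edge₁₂, he.edge₂₃, h.edge₂₃, hd.edge₂₃, hd.edge₃₁, h.ne₁₂,
      h.ne₂₃, h.ne₃₁.symm, he.ne₁₂, he.ne₂₃, hd.ne₂₃, hd.ne₃₁.symm, hed, he.ne_of_adjacent h,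
      h.ne_of_adjacent hd]

theorem IsMarkedPolygon.exists_windsOnce (hgen : NoThreeCollinear G.V) {L : List Pt}
    (h : G.IsMarkedPolygon ℓ L) : ∃ o, WindsOnce o L := by
  cases h with
  | triangle h => exact h.isFace.exists_windsOnce_triangle
  | quad h hd => exact h.exists_windsOnce_quad hd
  | pentagon h he hd hed => exact h.exists_windsOnce_pentagon hgen he hd hed

theorem IsMarkedPolygon.eq_of_isRotated (hgen : NoThreeCollinear G.V) {L L' : List Pt}
    (h : G.IsMarkedPolygon ℓ L) (h' : G.IsMarkedPolygon ℓ L') (hL : L ~r L') : L = L' := by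
  obtain ⟨n, hn, rfl⟩ := List.isRotated_iff_mod.1 hL
  cases h with
  | triangle h =>
    simp only [List.length_cons, List.length_nil] at hn
    interval_cases n
    · rfl
    · cases h' with | triangle h' => exact (h.not_rotate h').elim
    · cases h' with | triangle h' => exact (h'.not_rotate h).elim
    · exact (List.rotate_length _).symm
  | quad h hd hlt =>
    simp only [List.length_cons, List.length_nil] at hn
    interval_cases n
    · rfl
    · cases h' with | quad h' =>
      exact (hd.ne₃₁.symm (h.rotate.rotate.apex_unique hgen h'.rotate)).elim
    · cases h' with | quad _ _ hlt' => exact (hlt.not_gt hlt').elim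
    · cases h' with | quad h' =>
      exact (hd.ne₂₃ (h.rotate.apex_unique hgen h'.rotate.rotate)).elim
    · exact (List.rotate_length _).symm
  | pentagon h he hd =>
    simp only [List.length_cons, List.length_nil] at hn
    interval_cases n
    · rfl
    · cases h' with | pentagon _ he' =>
      exact (h.ne₃₁ (he.rotate.apex_unique hgen he').symm).elim
    · cases h' with | pentagon _ he' =>
      exact (hd.ne₃₁ (h.rotate.apex_unique hgen he').symm).elim
    · cases h' with | pentagon h' =>
      exact (he.ne₂₃ (h.rotate.rotate.apex_unique hgen h').symm).elim
    · cases h' with | pentagon _ he' =>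
      exact (he.ne_of_adjacent h (hd.rotate.rotate.apex_unique hgen he').symm).elim
    · exact (List.rotate_length _).symm

/-- The vertex list of a triangle, quadrilateral or pentagon. -/
def vertexList :
    (Pt × Pt × Pt) ⊕ (Pt × Pt × Pt × Pt) ⊕ (Pt × Pt × Pt × Pt × Pt) → List Pt
  | .inl (a, b, c) => [a, b, c]
  | .inr (.inl (a, b, c, d)) => [a, b, c, d]
  | .inr (.inr (a, b, c, d, e)) => [a, b, c, d, e]

theorem vertexList_injective : Function.Injective vertexList := by
  rintro (⟨_, _, _⟩ | ⟨_, _, _, _⟩ | ⟨_, _, _, _, _⟩)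
    (⟨_, _, _⟩ | ⟨_, _, _, _⟩ | ⟨_, _, _, _, _⟩) <;> simp [vertexList]

theorem card_middleFaces_add_card_quads_add_card_pentagons_le (hgen : NoThreeCollinear G.V)
    (ℓ : Pt →ₗ[ℝ] ℝ) :
    (G.middleFaces ℓ).card + ((G.quads ℓ).card + G.pentagons.card) ≤ starCount G := by
  classical
  have hmarked : ∀ L ∈ ((G.middleFaces ℓ).disjSum ((G.quads ℓ).disjSum G.pentagons)).image
      vertexList, G.IsMarkedPolygon ℓ L := by
    intro L hL
    obtain ⟨⟨a, b, c⟩ | ⟨a, d, b, c⟩ | ⟨a, e, b, c, d⟩, ht, rfl⟩ := Finset.mem_image.1 hL <;>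
      simp only [Finset.inl_mem_disjSum, Finset.inr_mem_disjSum] at ht
    · exact .triangle (mem_middleFaces.1 ht)
    · obtain ⟨h, hd, hlt⟩ := mem_quads.1 ht
      exact .quad h hd hlt
    · obtain ⟨h, he, hd, hed⟩ := mem_pentagons.1 ht
      exact .pentagon h he hd hed
  rw [← Finset.card_disjSum, ← Finset.card_disjSum,
    ← Finset.card_image_of_injective _ vertexList_injective]
  exact card_le_starCount (fun L hL => (hmarked L hL).isCycleIn)
    (fun L hL => (hmarked L hL).exists_windsOnce hgen)
    fun L hL L' hL' => (hmarked L hL).eq_of_isRotated hgen (hmarked L' hL')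

end PSLG

theorem starShaped_min_bound_general (G : PSLG) (hcard : 3 ≤ G.V.card)
    (hgen : NoThreeCollinear G.V) (htri : G.IsTriangulation) (k : ℕ)
    (hk : k = Set.ncard {p : Pt | p ∈ G.V ∧ p ∈ interior (convexHull ℝ (G.V : Set Pt))}) :
    3 * G.V.card + 5 * k ≤ starCount G + 11 := by
  obtain ⟨ℓ, hℓ⟩ := exists_injOn_linearMap G.V.finite_toSet
  have hℓ0 : ℓ ≠ 0 := by
    rintro rfl
    obtain ⟨x, hx, y, hy, hxy⟩ := Finset.one_lt_card.1 (by omega : 1 < G.V.card)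
    exact hxy (hℓ hx hy rfl)
  have hk' : k = G.interiorVertices.card := by
    rw [hk, ← Set.ncard_coe_finset, PSLG.interiorVertices, Finset.coe_filter]
  have hmiddle := htri.card_add_card_interiorVertices_le hgen hℓ0 hℓ
  have hfaces := G.three_mul_card_middleFaces_le (ℓ := ℓ)
  have hprev := htri.card_faces_add_card_interiorVertices_le hgen
  have hnext := G.card_facesWithPrev_le_card_facesWithNext
  have hclosed := PSLG.card_closedFaces_le hgen
  have hquads := PSLG.card_facesWithPrev_le_two_mul_card_quads hℓ
  have hpentagons := G.card_facesWithPrev_add_card_facesWithNext_le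
  have hstars := PSLG.card_middleFaces_add_card_quads_add_card_pentagons_le hgen ℓ
  omega

/-- a triangulation of `n ≥ 3` points (no three collinear), `k` of which
lie in the interior of the convex hull, contains at least `3n + 4k − 14` star-shaped
polygons. -/
theorem starShaped_min_bound (G : PSLG)
    (hcard : 3 ≤ G.V.card) (hgen : NoThreeCollinear G.V)
    (htri : G.IsTriangulation)
    (k : ℕ)
    (hk : k = Set.ncard {p : Pt | p ∈ G.V ∧
        p ∈ interior (convexHull ℝ (G.V : Set Pt))}) :
    3 * G.V.card + 4 * k - 14 ≤ starCount G := by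
  have h := starShaped_min_bound_general G hcard hgen htri k hk
  omega

end
end
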